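/- arXiv:1304.6917 — 2 statements merged into one kernel-verified Lean document; each statement's English description precedes it below -/
import Mathlib

section
/- Let k, r, t be positive integers with k ≥ 2, max{2, (k−1)/2} ≤ t ≤ k, 1 ≤ r ≤ k and r + t ≥ k, set s = rt, and define κ = r(t+1) − (1/2)(t+r−k)(t+r−k−1 + (2r−2)/(t−1)). Then limsup_{X→∞} (log J_{s+r,k}(X))/(log X) ≤ 2(s+r) − κ. -/
/-- Number of integral solutions of the Vinogradov system
of degree k in 2s variables, all lying in [1, X]. -/
noncomputable def Jcount (s k : ℕ) (X : ℝ) : ℕ :=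
  Set.ncard {xy : (Fin s → ℤ) × (Fin s → ℤ) |
    (∀ i, 1 ≤ xy.1 i ∧ (xy.1 i : ℝ) ≤ X) ∧
    (∀ i, 1 ≤ xy.2 i ∧ (xy.2 i : ℝ) ≤ X) ∧
    ∀ j ∈ Finset.Icc 1 k, ∑ i, ((xy.1 i) ^ j - (xy.2 i) ^ j) = 0}

/-- The exponent kappa = r(t+1) - (1/2)(t+r-k)(t+r-k-1+(2r-2)/(t-1)). -/
noncomputable def kappa (k r t : ℕ) : ℝ :=
  (r : ℝ) * ((t : ℝ) + 1) -
    (1/2) * ((t : ℝ) + r - k) * ((t : ℝ) + r - k - 1 + (2*(r:ℝ) - 2)/((t:ℝ) - 1))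

/-! Over the frequencies modulo `p ^ (k * n)`, orthogonality turns the number of solutions of the
Vinogradov system into a moment of an exponential sum along the moment curve. The critical moment,
of order `k * (k + 1)`, is bounded by `p`-adic decoupling, for all curves congruent to the moment
curve modulo `p`: unlike the moment curve itself, this class is stable under rescaling.

Decoupling in degree `k` is proved by induction on `k`. The sum is controlled by bilinear moments
over pairs of residue classes which are distinct modulo `p`. Near one class, seen from a separated
one, the curve behaves like a curve of lower degree `l`, so that decoupling in degree `l` and
Hölder's inequality turn a gain `p ^ (γ * η * b)` in the bilinear moments at scale `p ^ (-b)`, over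
what hypothetical decoupling constants `O(p ^ (η * n))` predict, into a new gain. The sum of the
gains `γ l` over `1 ≤ l < k` grows by `(k - 1) / k` at each step, so some gain becomes arbitrarily
large, which lowers `η` repeatedly, down to `0`.

For `u = s + r` this gives the exponent `max u (2 * u - k * (k + 1) / 2)`,
and `κ` is at most both `r * (t + 1)` and `k * (k + 1) / 2`. -/

namespace Vinogradov

open Polynomial Finset

/-! ### Taylor coefficients of polynomial curves -/

section TaylorMatrix

variable {R : Type*} [CommRing R] {l : ℕ}

/-- The matrix of Taylor coefficients of orders `1, …, l` at `ξ` of a polynomial curve in `l`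
coordinates. It governs nondegeneracy, so the constant coefficients are left out. -/
noncomputable def taylorMatrix (Ψ : Fin l → R[X]) (ξ : R) : Matrix (Fin l) (Fin l) R :=
  Matrix.of fun i j => (taylor ξ (Ψ i)).coeff (j + 1)

lemma coeff_taylor_linearCombination (Ψ : Fin l → R[X]) (ξ : R) (v : Fin l → R) (j : Fin l) :
    (taylor ξ (∑ m, C (v m) * Ψ m)).coeff (j + 1) = Matrix.vecMul v (taylorMatrix Ψ ξ) j := by
  simp [taylorMatrix, Matrix.vecMul, dotProduct, finsetSum_coeff, taylor_mul]

lemma X_pow_dvd_sub_C_sub {f g : R[X]} (h : ∀ j < l, f.coeff (j + 1) = g.coeff (j + 1))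
    (hg : g.coeff 0 = 0) : X ^ (l + 1) ∣ f - C (f.coeff 0) - g := by
  rw [X_pow_dvd_iff]
  rintro (_ | d) hd
  · simp [hg]
  · simp [h d (by omega)]

lemma exists_taylor_normal_form (Ψ : Fin l → R[X]) (ξ : R) (h : IsUnit (taylorMatrix Ψ ξ).det) :
    ∃ (B : Matrix (Fin l) (Fin l) R) (c : Fin l → R) (q : Fin l → R[X]),
      ∀ i, taylor ξ (∑ m, C (B i m) * Ψ m) = C (c i) + X ^ ((i : ℕ) + 1) + X ^ (l + 1) * q i := by
  set W := taylorMatrix Ψ ξ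
  set f : Fin l → R[X] := fun i => taylor ξ (∑ m, C (W⁻¹ i m) * Ψ m)
  have hcoeff (i j : Fin l) : (f i).coeff (j + 1) = if i = j then 1 else 0 := by
    rw [coeff_taylor_linearCombination Ψ ξ (W⁻¹ i), ← Matrix.mul_apply_eq_vecMul,
      Matrix.nonsing_inv_mul _ h, Matrix.one_apply]
  have hdvd (i : Fin l) : X ^ (l + 1) ∣ f i - C ((f i).coeff 0) - X ^ ((i : ℕ) + 1) :=
    X_pow_dvd_sub_C_sub (fun j hj => by
      rw [hcoeff i ⟨j, hj⟩, coeff_X_pow]; simp [Fin.ext_iff, eq_comm]) (by simp)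
  choose q hq using hdvd
  exact ⟨W⁻¹, fun i => (f i).coeff 0, q, fun i => by linear_combination hq i⟩

lemma eval_of_taylor_normal_form {Ψ : Fin l → R[X]} {ξ : R} {B : Matrix (Fin l) (Fin l) R}
    {c : Fin l → R} {q : Fin l → R[X]}
    (h : ∀ i, taylor ξ (∑ m, C (B i m) * Ψ m) = C (c i) + X ^ ((i : ℕ) + 1) + X ^ (l + 1) * q i)
    (i : Fin l) (y : R) :
    ∑ m, B i m * (Ψ m).eval (ξ + y) = c i + y ^ ((i : ℕ) + 1) + y ^ (l + 1) * (q i).eval y := by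
  have := congrArg (eval y) (h i)
  rw [taylor_eval] at this
  simpa [eval_finsetSum, add_comm] using this

lemma map_taylor_normal_form {S : Type*} [CommRing S] (f : R →+* S) {Ψ : Fin l → R[X]} {ξ : R}
    {B : Matrix (Fin l) (Fin l) R} {c : Fin l → R} {q : Fin l → R[X]}
    (h : ∀ i, taylor ξ (∑ m, C (B i m) * Ψ m) = C (c i) + X ^ ((i : ℕ) + 1) + X ^ (l + 1) * q i)
    (i : Fin l) :
    taylor (f ξ) (∑ m, C (f (B i m)) * (Ψ m).map f) =
      C (f (c i)) + X ^ ((i : ℕ) + 1) + X ^ (l + 1) * (q i).map f := by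
  simpa [Polynomial.map_sum] using congrArg (Polynomial.map f) (h i)

lemma eq_zero_of_taylor_normal_form {Ψ : Fin l → R[X]} (hΨ : ∀ m, (Ψ m).natDegree ≤ l) {ξ : R}
    {B : Matrix (Fin l) (Fin l) R} {c : Fin l → R} {q : Fin l → R[X]}
    (h : ∀ i, taylor ξ (∑ m, C (B i m) * Ψ m) = C (c i) + X ^ ((i : ℕ) + 1) + X ^ (l + 1) * q i)
    (i : Fin l) : q i = 0 := by
  have hdeg : (taylor ξ (∑ m, C (B i m) * Ψ m)).natDegree ≤ l := by
    rw [natDegree_taylor]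
    exact natDegree_sum_le_of_forall_le _ _ fun m _ => (natDegree_C_mul_le _ _).trans (hΨ m)
  ext e
  have hcoeff := congrArg (coeff · (e + (l + 1))) (h i)
  rw [coeff_eq_zero_of_natDegree_lt (by omega), coeff_add, coeff_add, coeff_C, coeff_X_pow,
    coeff_X_pow_mul, if_neg (by omega), if_neg (by omega)] at hcoeff
  simpa using hcoeff.symm

lemma det_taylorMatrix_monomial (k : ℕ) (r : R) :
    (taylorMatrix (fun i : Fin k => (X : R[X]) ^ ((i : ℕ) + 1)) r).det = 1 := by
  rw [Matrix.det_of_isLowerTriangular]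
  · exact Finset.prod_eq_one fun i _ => by simp [taylorMatrix, coeff_X_add_C_pow]
  · intro i j (hij : (i : ℕ) < j)
    simp [taylorMatrix, coeff_X_add_C_pow, Nat.choose_eq_zero_of_lt (Nat.succ_lt_succ hij)]

lemma X_sub_C_pow_dvd_derivative {P : R[X]} {r : R}
    (h : ∀ j < l, (taylor r P).coeff (j + 1) = 0) : (X - C r) ^ l ∣ derivative P := by
  have hX : X ^ l ∣ taylor r (derivative P) := by
    have hcomm : taylor r (derivative P) = derivative (taylor r P) := by
      simp [taylor_apply, derivative_comp]
    rw [hcomm, X_pow_dvd_iff]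
    intro j hj
    rw [coeff_derivative, h j hj, zero_mul]
  have := map_dvd (taylorAlgHom (-r)) hX
  simpa [taylor_taylor, taylor_pow, sub_eq_add_neg] using this

lemma derivative_sum_C_mul_X_pow (d : ℕ) (v : Fin l → R) :
    derivative (∑ i : Fin l, C (v i) * X ^ (d + (i : ℕ) + 1)) =
      X ^ d * ∑ i : Fin l, C (v i * ((d + i + 1 : ℕ) : R)) * X ^ (i : ℕ) := by
  rw [derivative_sum, Finset.mul_sum]
  refine Finset.sum_congr rfl fun i _ => ?_
  rw [derivative_C_mul_X_pow, Nat.add_sub_cancel, pow_add]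
  ring

lemma coeff_sum_fin_C_mul_X_pow (a : Fin l → R) (i : Fin l) :
    (∑ j : Fin l, C (a j) * X ^ (j : ℕ)).coeff i = a i := by
  simp [finsetSum_coeff, coeff_X_pow, Fin.val_inj]

/-- If a combination of the coordinates had vanishing Taylor coefficients of orders `1, …, l` at
`r`, its derivative `X ^ d * Q` with `deg Q < l` would be divisible by `(X - r) ^ l`. -/
lemma det_taylorMatrix_monomial_shift_ne_zero {F : Type*} [Field F] (d : ℕ) {r : F} (hr : r ≠ 0)
    (hchar : ∀ m : ℕ, 0 < m → m ≤ d + l → (m : F) ≠ 0) :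
    (taylorMatrix (fun i : Fin l => (X : F[X]) ^ (d + (i : ℕ) + 1)) r).det ≠ 0 := by
  intro hdet
  obtain ⟨v, hv, hv0⟩ := Matrix.exists_vecMul_eq_zero_iff.mpr hdet
  set Q : F[X] := ∑ i : Fin l, C (v i * ((d + i + 1 : ℕ) : F)) * X ^ (i : ℕ) with hQ
  have hdvd : (X - C r) ^ l ∣ X ^ d * Q := by
    rw [← derivative_sum_C_mul_X_pow]
    refine X_sub_C_pow_dvd_derivative fun j hj => ?_
    rw [← Fin.val_mk hj, coeff_taylor_linearCombination, hv0, Pi.zero_apply]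
  have hcop : IsCoprime ((X - C r) ^ l) (X ^ d) := by
    simpa using (isCoprime_X_sub_C_of_isUnit_sub (a := r) (b := 0) (by simpa using hr)).pow
      (m := l) (n := d)
  have hQ0 : Q = 0 := by
    refine eq_zero_of_dvd_of_degree_lt (hcop.dvd_of_dvd_mul_left hdvd) ?_
    rw [degree_pow, degree_X_sub_C, nsmul_one]
    exact degree_sum_fin_lt _
  refine hv (funext fun i => ?_)
  have hcoeff := coeff_sum_fin_C_mul_X_pow (fun i => v i * ((d + i + 1 : ℕ) : F)) i
  rw [← hQ, hQ0, coeff_zero] at hcoeff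
  exact (mul_eq_zero.mp hcoeff.symm).resolve_right (hchar _ (by omega) (by omega))

end TaylorMatrix

/-! ### Curves congruent to the moment curve -/

section MomentLike

variable {p : ℕ} [hp : Fact p.Prime]

/-- A polynomial curve over `ℤ_[p]` congruent to the moment curve `(x, x ^ 2, …, x ^ k)` modulo
`p`. Unlike the moment curve itself, this class is stable under rescaling. -/
def IsMomentLike (p : ℕ) [Fact p.Prime] {k : ℕ} (φ : Fin k → ℤ_[p][X]) : Prop :=
  ∀ j, ∃ h : ℤ_[p][X], φ j = X ^ ((j : ℕ) + 1) + C (p : ℤ_[p]) * h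

lemma isUnit_iff_toZMod_ne_zero (x : ℤ_[p]) : IsUnit x ↔ PadicInt.toZMod x ≠ 0 := by
  rw [← not_iff_not, not_not, ← RingHom.mem_ker, PadicInt.ker_toZMod, IsLocalRing.mem_maximalIdeal,
    mem_nonunits_iff]

lemma toZMod_det_taylorMatrix {l : ℕ} (Ψ : Fin l → ℤ_[p][X]) (ξ : ℤ_[p]) :
    PadicInt.toZMod (taylorMatrix Ψ ξ).det =
      (taylorMatrix (fun i => (Ψ i).map PadicInt.toZMod) (PadicInt.toZMod ξ)).det := by
  rw [RingHom.map_det]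
  congr 1
  ext i j
  simp only [taylorMatrix, RingHom.mapMatrix_apply, Matrix.map_apply, Matrix.of_apply]
  rw [← map_taylor, coeff_map]

lemma IsMomentLike.map_toZMod {k : ℕ} {φ : Fin k → ℤ_[p][X]} (hφ : IsMomentLike p φ) (j : Fin k) :
    (φ j).map PadicInt.toZMod = X ^ ((j : ℕ) + 1) := by
  obtain ⟨h, hh⟩ := hφ j
  simp [hh]

lemma IsMomentLike.isUnit_det_taylorMatrix {k : ℕ} {φ : Fin k → ℤ_[p][X]}
    (hφ : IsMomentLike p φ) (ξ : ℤ_[p]) : IsUnit (taylorMatrix φ ξ).det := by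
  rw [isUnit_iff_toZMod_ne_zero, toZMod_det_taylorMatrix]
  simp only [hφ.map_toZMod]
  rw [det_taylorMatrix_monomial]
  exact one_ne_zero

lemma exists_isMomentLike_rescaling {l : ℕ} (Ψ : Fin l → ℤ_[p][X]) (ξ : ℤ_[p])
    (h : IsUnit (taylorMatrix Ψ ξ).det) {a : ℕ} (ha : 1 ≤ a) :
    ∃ (B : Matrix (Fin l) (Fin l) ℤ_[p]) (c : Fin l → ℤ_[p]) (φ : Fin l → ℤ_[p][X]),
      IsMomentLike p φ ∧ ∀ i z, ∑ m, B i m * (Ψ m).eval (ξ + (p : ℤ_[p]) ^ a * z) =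
        c i + (p : ℤ_[p]) ^ (a * ((i : ℕ) + 1)) * (φ i).eval z := by
  obtain ⟨B, c, q, hB⟩ := exists_taylor_normal_form Ψ ξ h
  refine ⟨B, c, fun i => X ^ ((i : ℕ) + 1) + C (p : ℤ_[p]) *
    (C ((p : ℤ_[p]) ^ (a * (l - i) - 1)) * X ^ (l + 1) * (q i).comp (C ((p : ℤ_[p]) ^ a) * X)),
    fun i => ⟨_, rfl⟩, fun i z => ?_⟩
  have hexp : a * (l + 1) = a * ((i : ℕ) + 1) + 1 + (a * (l - i) - 1) := by
    have hpos : 1 ≤ a * (l - i) := Nat.mul_pos ha (by omega)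
    have hsum : a * (l + 1) = a * (i + 1) + a * (l - i) := by
      rw [← mul_add]
      congr 1
      omega
    omega
  rw [eval_of_taylor_normal_form hB]
  simp only [eval_add, eval_mul, eval_pow, eval_X, eval_C, eval_comp, mul_pow, ← pow_mul]
  rw [hexp, pow_add, pow_add]
  ring

lemma isUnit_det_taylorMatrix_monomial_shift_add {k : ℕ} (hkp : k < p) {q : Fin k → ℤ_[p][X]}
    (hq : ∀ i, (q i).map (PadicInt.toZMod (p := p)) = 0) {d l : ℕ} (hdl : d + l = k)
    {y : ℤ_[p]} (hy : IsUnit y) :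
    IsUnit (taylorMatrix (fun i : Fin l =>
      X ^ (d + (i : ℕ) + 1) + X ^ (k + 1) * q ⟨d + i, by omega⟩) y).det := by
  rw [isUnit_iff_toZMod_ne_zero, toZMod_det_taylorMatrix]
  simp only [Polynomial.map_mul, Polynomial.map_add, Polynomial.map_pow, map_X, hq, mul_zero,
    add_zero]
  refine det_taylorMatrix_monomial_shift_ne_zero d ((isUnit_iff_toZMod_ne_zero y).mp hy) ?_
  intro m hm hmk
  rw [Ne, ZMod.natCast_eq_zero_iff]
  exact Nat.not_dvd_of_pos_of_lt hm (by omega)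

lemma IsMomentLike.exists_centring {k : ℕ} {φ : Fin k → ℤ_[p][X]} (hφ : IsMomentLike p φ)
    (hkp : k < p) (η : ℤ_[p]) :
    ∃ (A : Matrix (Fin k) (Fin k) ℤ_[p]) (c : Fin k → ℤ_[p]) (χ : Fin k → ℤ_[p][X]),
      (∀ i y, ∑ m, A i m * (φ m).eval (η + y) = c i + (χ i).eval y) ∧
      (∀ (i : Fin k) y, y ^ ((i : ℕ) + 1) ∣ (χ i).eval y) ∧
      ∀ (d l : ℕ) (hdl : d + l = k) (y : ℤ_[p]), IsUnit y →
        IsUnit (taylorMatrix (fun i : Fin l => χ ⟨d + i, by omega⟩) y).det := by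
  obtain ⟨A, c, q, hA⟩ := exists_taylor_normal_form φ η (hφ.isUnit_det_taylorMatrix η)
  have hq (i : Fin k) : (q i).map (PadicInt.toZMod (p := p)) = 0 :=
    eq_zero_of_taylor_normal_form (fun m => by rw [hφ.map_toZMod, natDegree_X_pow]; exact m.2)
      (map_taylor_normal_form PadicInt.toZMod hA) i
  refine ⟨A, c, fun i => X ^ ((i : ℕ) + 1) + X ^ (k + 1) * q i, fun i y => ?_, fun i y => ?_,
    fun d l hdl y hy => isUnit_det_taylorMatrix_monomial_shift_add hkp hq hdl hy⟩
  · simp [eval_of_taylor_normal_form hA, add_assoc]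
  · simp only [eval_add, eval_mul, eval_pow, eval_X]
    exact dvd_add dvd_rfl (Dvd.dvd.mul_right (pow_dvd_pow _ (by omega)) _)

lemma IsMomentLike.exists_separating_rescaling {d l k : ℕ} (hdl : d + l = k) (hkp : k < p)
    {φ : Fin k → ℤ_[p][X]} (hφ : IsMomentLike p φ) {ξ η : ℤ_[p]} (hξη : IsUnit (ξ - η)) {a : ℕ}
    (ha : 1 ≤ a) :
    ∃ (A : Matrix (Fin l) (Fin k) ℤ_[p]) (c c' : Fin l → ℤ_[p]) (ψ : Fin l → ℤ_[p][X]),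
      IsMomentLike p ψ ∧
      (∀ j z, ∑ m, A j m * (φ m).eval (ξ + (p : ℤ_[p]) ^ a * z) =
        c j + (p : ℤ_[p]) ^ (a * ((j : ℕ) + 1)) * (ψ j).eval z) ∧
      ∀ j y, y ^ (d + 1) ∣ ∑ m, A j m * (φ m).eval (η + y) - c' j := by
  obtain ⟨A, c, χ, hA, hχ, hdet⟩ := hφ.exists_centring hkp η
  obtain ⟨B, c', ψ, hψ, hB⟩ := exists_isMomentLike_rescaling _ _ (hdet d l hdl _ hξη) ha
  let tail (i : Fin l) : Fin k := ⟨d + i, by omega⟩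
  have hBA (j : Fin l) (y : ℤ_[p]) :
      ∑ m, (B * A.submatrix tail id) j m * (φ m).eval (η + y) =
        ∑ i, B j i * c (tail i) + ∑ i, B j i * (χ (tail i)).eval y := by
    simp only [Matrix.mul_apply, Matrix.submatrix_apply, id, Finset.sum_mul]
    rw [Finset.sum_comm, ← Finset.sum_add_distrib]
    refine Finset.sum_congr rfl fun i _ => ?_
    simp only [mul_assoc]
    rw [← Finset.mul_sum, hA, mul_add]
  refine ⟨B * A.submatrix tail id, fun j => ∑ i, B j i * c (tail i) + c' j,
    fun j => ∑ i, B j i * c (tail i), ψ, hψ, fun j z => ?_, fun j y => ?_⟩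
  · rw [show ξ + (p : ℤ_[p]) ^ a * z = η + (ξ - η + (p : ℤ_[p]) ^ a * z) by ring, hBA, hB,
      add_assoc]
  · rw [hBA, add_sub_cancel_left]
    exact Finset.dvd_sum fun i _ => Dvd.dvd.mul_left
      ((pow_dvd_pow y (by simp [tail])).trans (hχ (tail i) y)) _

end MomentLike

/-! ### Residue classes of `ℤ_[p]` -/

section Cells

variable {p : ℕ} [hp : Fact p.Prime]

/-- Membership in the residue class of `I` modulo `p ^ a` in `ℤ_[p]`. -/
def InClass (p : ℕ) [Fact p.Prime] (a I : ℕ) (x : ℤ_[p]) : Prop := (p : ℤ_[p]) ^ a ∣ x - I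

lemma inClass_natCast {a I m : ℕ} : InClass p a I (m : ℤ_[p]) ↔ m ≡ I [MOD p ^ a] := by
  rw [InClass, Nat.ModEq.comm, Nat.modEq_iff_dvd]
  simpa using PadicInt.pow_p_dvd_int_iff (p := p) a ((m : ℤ) - I)

lemma inClass_iff_eq_appr {a I : ℕ} (hI : I < p ^ a) (x : ℤ_[p]) :
    InClass p a I x ↔ I = x.appr a := by
  have hx : (p : ℤ_[p]) ^ a ∣ x - x.appr a :=
    Ideal.mem_span_singleton.mp (PadicInt.appr_spec a x)
  refine ⟨fun h => ?_, fun h => h ▸ hx⟩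
  have hmod : I ≡ x.appr a [MOD p ^ a] :=
    inClass_natCast.mp (by simpa [InClass] using dvd_sub hx h)
  exact hmod.eq_of_lt_of_lt hI (PadicInt.appr_lt x a)

lemma InClass.of_add_pow_mul {a m I J : ℕ} {x : ℤ_[p]} (h : InClass p (a + m) (I + p ^ a * J) x) :
    InClass p a I x := by
  have hsub : (p : ℤ_[p]) ^ a ∣ x - (I + p ^ a * J : ℕ) :=
    (pow_dvd_pow _ (Nat.le_add_right a m)).trans h
  rw [InClass]
  simpa [sub_add_eq_sub_sub] using dvd_add hsub (Dvd.intro (J : ℤ_[p]) rfl)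

lemma inClass_add_pow_mul_iff {a m I J : ℕ} (z : ℤ_[p]) :
    InClass p (a + m) (I + p ^ a * J) (I + (p : ℤ_[p]) ^ a * z) ↔ InClass p m J z := by
  have hp0 : (p : ℤ_[p]) ^ a ≠ 0 := pow_ne_zero _ (by exact_mod_cast hp.1.ne_zero)
  rw [InClass, InClass, ← mul_dvd_mul_iff_left (b := (p : ℤ_[p]) ^ m) hp0, pow_add]
  push_cast
  ring_nf

variable {ι : Type*}

open Classical in
/-- The indices in `S` whose point lies in the residue class of `I` modulo `p ^ a`. -/
noncomputable def cell (p : ℕ) [Fact p.Prime] (S : Finset ι) (x : ι → ℤ_[p]) (a I : ℕ) :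
    Finset ι :=
  S.filter fun i => InClass p a I (x i)

lemma mem_cell {S : Finset ι} {x : ι → ℤ_[p]} {a I : ℕ} {i : ι} :
    i ∈ cell p S x a I ↔ i ∈ S ∧ InClass p a I (x i) := by
  simp [cell]

lemma sum_cell {E : Type*} [AddCommMonoid E] (S : Finset ι) (x : ι → ℤ_[p]) (a : ℕ) (g : ι → E) :
    ∑ I ∈ range (p ^ a), ∑ i ∈ cell p S x a I, g i = ∑ i ∈ S, g i := by
  classical
  rw [← Finset.sum_fiberwise_of_maps_to (s := S) (t := range (p ^ a))
    (g := fun i => (x i).appr a) (fun i _ => Finset.mem_range.mpr (PadicInt.appr_lt _ _))]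
  refine Finset.sum_congr rfl fun I hI => Finset.sum_congr ?_ fun _ _ => rfl
  ext i
  rw [mem_cell, Finset.mem_filter, inClass_iff_eq_appr (Finset.mem_range.mp hI), eq_comm]

lemma sum_range_mul {E : Type*} [AddCommMonoid E] (m n : ℕ) (g : ℕ → E) :
    ∑ K ∈ range (m * n), g K = ∑ I ∈ range m, ∑ J ∈ range n, g (I + m * J) := by
  rw [Finset.sum_comm]
  induction n with
  | zero => simp
  | succ n ih =>
    rw [Finset.sum_range_succ, ← ih, mul_add_one, Finset.sum_range_add]
    simp [add_comm]

lemma cell_cell {S : Finset ι} {x z : ι → ℤ_[p]} {a m I J : ℕ}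
    (hz : ∀ i ∈ cell p S x a I, x i = I + (p : ℤ_[p]) ^ a * z i) :
    cell p (cell p S x a I) z m J = cell p S x (a + m) (I + p ^ a * J) := by
  ext i
  rw [mem_cell, mem_cell (a := a + m)]
  constructor
  · rintro ⟨hi, h⟩
    exact ⟨(mem_cell.mp hi).1, by rwa [hz i hi, inClass_add_pow_mul_iff]⟩
  · rintro ⟨hi, h⟩
    have hcell : i ∈ cell p S x a I := mem_cell.mpr ⟨hi, h.of_add_pow_mul⟩
    exact ⟨hcell, by rwa [hz i hcell, inClass_add_pow_mul_iff] at h⟩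

lemma exists_cell_coordinate (S : Finset ι) (x : ι → ℤ_[p]) (a I : ℕ) :
    ∃ z : ι → ℤ_[p], ∀ i ∈ cell p S x a I, x i = I + (p : ℤ_[p]) ^ a * z i := by
  have hex (i : ι) : ∃ w, i ∈ cell p S x a I → x i = I + (p : ℤ_[p]) ^ a * w := by
    by_cases hi : i ∈ cell p S x a I
    · obtain ⟨w, hw⟩ := (mem_cell.mp hi).2
      exact ⟨w, fun _ => by rw [← hw]; ring⟩
    · exact ⟨0, fun h => absurd h hi⟩
  choose z hz using hex
  exact ⟨z, hz⟩

end Cells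

/-! ### Exponential sums along a curve -/

section ExpSum

variable {p : ℕ} [hp : Fact p.Prime]

/-- The character `y ↦ exp (2 π i y / p ^ M)` of `ℤ_[p]`. -/
noncomputable def chi (p : ℕ) [Fact p.Prime] (M : ℕ) : AddChar ℤ_[p] ℂ :=
  (ZMod.stdAddChar (N := p ^ M)).compAddMonoidHom
    (PadicInt.toZModPow (p := p) M).toAddMonoidHom

lemma chi_apply (M : ℕ) (y : ℤ_[p]) :
    chi p M y = ZMod.stdAddChar (PadicInt.toZModPow (p := p) M y) := rfl

lemma norm_chi (M : ℕ) (y : ℤ_[p]) : ‖chi p M y‖ = 1 := by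
  rw [chi_apply, ZMod.stdAddChar_apply]
  exact Circle.norm_coe _

lemma chi_eq_of_dvd_sub {M : ℕ} {y z : ℤ_[p]} (h : (p : ℤ_[p]) ^ M ∣ y - z) :
    chi p M y = chi p M z := by
  rw [chi_apply, chi_apply]
  congr 1
  rwa [← sub_eq_zero, ← map_sub, ← RingHom.mem_ker, PadicInt.ker_toZModPow,
    Ideal.mem_span_singleton]

lemma chi_natCast (M n : ℕ) :
    chi p M (n : ℤ_[p]) = Complex.exp (2 * Real.pi * Complex.I * n / (p : ℂ) ^ M) := by
  rw [chi_apply, map_natCast]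
  simpa using ZMod.stdAddChar_coe (N := p ^ M) (n : ℤ)

lemma chi_pow_mul {M N : ℕ} (y : ℤ_[p]) : chi p (N + M) ((p : ℤ_[p]) ^ N * y) = chi p M y := by
  have happr : (p : ℤ_[p]) ^ M ∣ y - (y.appr M : ℕ) :=
    Ideal.mem_span_singleton.mp (PadicInt.appr_spec M y)
  have hmul : (p : ℤ_[p]) ^ (N + M) ∣ (p : ℤ_[p]) ^ N * y - (p ^ N * y.appr M : ℕ) := by
    push_cast
    rw [← mul_sub, pow_add]
    exact mul_dvd_mul_left _ happr
  have hp0 : (p : ℂ) ≠ 0 := by exact_mod_cast hp.1.ne_zero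
  rw [chi_eq_of_dvd_sub happr, chi_eq_of_dvd_sub hmul, chi_natCast, chi_natCast]
  push_cast
  rw [pow_add]
  field_simp

/-- The group of frequencies modulo `p ^ M` in `k` coordinates. -/
abbrev Freq (p k M : ℕ) : Type := Fin k → ZMod (p ^ M)

variable {k : ℕ}

/-- The character of `Freq p k M` attached to the point `x` of the curve `φ`. -/
noncomputable def phase (φ : Fin k → ℤ_[p][X]) (M : ℕ) (x : ℤ_[p]) (c : Freq p k M) : ℂ :=
  ZMod.stdAddChar (∑ j, c j * PadicInt.toZModPow M ((φ j).eval x))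

variable {ι : Type*}

/-- The exponential sum with weights `w` over the points `x i`, `i ∈ S`, of the curve `φ`. -/
noncomputable def expSum (φ : Fin k → ℤ_[p][X]) (M : ℕ) (x : ι → ℤ_[p]) (w : ι → ℂ)
    (S : Finset ι) (c : Freq p k M) : ℂ :=
  ∑ i ∈ S, w i * phase φ M (x i) c

variable (φ : Fin k → ℤ_[p][X]) (M : ℕ)

lemma phase_add (x : ℤ_[p]) (c d : Freq p k M) :
    phase φ M x (c + d) = phase φ M x c * phase φ M x d := by
  simp only [phase, Pi.add_apply, add_mul, Finset.sum_add_distrib, AddChar.map_add_eq_mul]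

lemma norm_phase (x : ℤ_[p]) (c : Freq p k M) : ‖phase φ M x c‖ = 1 := by
  rw [phase, ZMod.stdAddChar_apply]
  exact Circle.norm_coe _

lemma norm_expSum_add {S : Finset ι} {x y : ι → ℤ_[p]} {l M' : ℕ} {ψ : Fin l → ℤ_[p][X]}
    {c : Freq p k M} {d : Freq p l M'} {u : ℂ} (hu : ‖u‖ = 1)
    (h : ∀ i ∈ S, phase φ M (x i) c = u * phase ψ M' (y i) d) (w : ι → ℂ) (v : Freq p k M) :
    ‖expSum φ M x w S (v + c)‖ =
      ‖expSum ψ M' y (fun i => w i * phase φ M (x i) v) S d‖ := by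
  have hsum : expSum φ M x w S (v + c) =
      u * expSum ψ M' y (fun i => w i * phase φ M (x i) v) S d := by
    rw [expSum, expSum, Finset.mul_sum]
    refine Finset.sum_congr rfl fun i hi => ?_
    rw [phase_add, h i hi]
    ring
  rw [hsum, norm_mul, hu, one_mul]

lemma norm_expSum_add_of_phase_eq {S : Finset ι} {x : ι → ℤ_[p]} {c : Freq p k M} {u : ℂ}
    (hu : ‖u‖ = 1) (h : ∀ i ∈ S, phase φ M (x i) c = u) (w : ι → ℂ) (v : Freq p k M) :
    ‖expSum φ M x w S (v + c)‖ = ‖expSum φ M x w S v‖ := by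
  rw [norm_expSum_add φ M (y := x) (ψ := φ) (M' := M) (d := 0) hu]
  · simp [expSum, phase]
  · simpa [phase] using h

/-- Reduction of a `p`-adic frequency vector modulo `p ^ M`. -/
noncomputable def reduce (d : Fin k → ℤ_[p]) : Freq p k M := fun j => PadicInt.toZModPow M (d j)

lemma phase_reduce (x : ℤ_[p]) (d : Fin k → ℤ_[p]) :
    phase φ M x (reduce M d) = chi p M (∑ j, d j * (φ j).eval x) := by
  simp [phase, reduce, chi_apply, map_sum, map_mul]

lemma phase_reduce_vecMul {l : ℕ} (x : ℤ_[p]) (d : Fin l → ℤ_[p])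
    (A : Matrix (Fin l) (Fin k) ℤ_[p]) :
    phase φ M x (reduce M (Matrix.vecMul d A)) =
      chi p M (∑ j, d j * ∑ m, A j m * (φ m).eval x) := by
  rw [phase_reduce]
  congr 1
  simp only [Matrix.vecMul, dotProduct, Finset.sum_mul, Finset.mul_sum, mul_assoc]
  exact Finset.sum_comm

lemma exists_reduce_eq (c : Freq p k M) : ∃ d : Fin k → ℤ_[p], reduce M d = c :=
  ⟨fun j => ((c j).val : ℕ), funext fun j => by simp [reduce]⟩

/-- A lift to a finer modulus of the frequency vector `d` of a curve rescaled by `p ^ a`. The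
weights make up for the anisotropic factors `p ^ (a * (j + 1))` created by the rescaling. -/
noncomputable def scaledFreq {l : ℕ} (N a : ℕ) (d : Fin l → ℤ_[p]) : Fin l → ℤ_[p] :=
  fun j => (p : ℤ_[p]) ^ (N + a * (l - 1 - j)) * d j

lemma pow_dvd_scaledFreq {l : ℕ} (N a : ℕ) (d : Fin l → ℤ_[p]) (j : Fin l) :
    (p : ℤ_[p]) ^ N ∣ scaledFreq N a d j :=
  Dvd.dvd.mul_right (pow_dvd_pow _ (Nat.le_add_right _ _)) _

lemma chi_sum_scaledFreq_mul {l N a : ℕ} (d c : Fin l → ℤ_[p]) (ψ : Fin l → ℤ_[p][X])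
    (z : ℤ_[p]) :
    chi p (N + l * a + M)
        (∑ j, scaledFreq N a d j * (c j + (p : ℤ_[p]) ^ (a * ((j : ℕ) + 1)) * (ψ j).eval z)) =
      chi p (N + l * a + M) (∑ j, scaledFreq N a d j * c j) * phase ψ M z (reduce M d) := by
  have hweight (j : Fin l) : scaledFreq N a d j * (p : ℤ_[p]) ^ (a * ((j : ℕ) + 1)) =
      (p : ℤ_[p]) ^ (N + l * a) * d j := by
    have hexp : N + l * a = N + a * (l - 1 - j) + a * ((j : ℕ) + 1) := by
      rw [add_assoc, ← mul_add, mul_comm l]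
      congr 2
      omega
    rw [scaledFreq, hexp, pow_add _ (N + a * (l - 1 - j))]
    ring
  have hsum : ∑ j, scaledFreq N a d j * (c j + (p : ℤ_[p]) ^ (a * ((j : ℕ) + 1)) * (ψ j).eval z) =
      ∑ j, scaledFreq N a d j * c j + (p : ℤ_[p]) ^ (N + l * a) * ∑ j, d j * (ψ j).eval z := by
    rw [Finset.mul_sum, ← Finset.sum_add_distrib]
    exact Finset.sum_congr rfl fun j _ => by rw [mul_add, ← mul_assoc, hweight, mul_assoc]
  rw [hsum, AddChar.map_add_eq_mul, chi_pow_mul, phase_reduce]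

end ExpSum

/-! ### Decoupling inequalities and their rescaled forms -/

section Decoupling

lemma sum_le_sum_of_translates {V V' : Type*} [Fintype V] [AddCommGroup V] [Fintype V']
    [Nonempty V'] (ρ : V' → V) (G H : V → ℝ)
    (h : ∀ v, ∑ t, G (v + ρ t) ≤ ∑ t, H (v + ρ t)) : ∑ v, G v ≤ ∑ v, H v := by
  have hsum (G : V → ℝ) : ∑ v, ∑ t, G (v + ρ t) = Fintype.card V' * ∑ v, G v := by
    have htranslate (t : V') : ∑ v, G (v + ρ t) = ∑ v, G v :=
      Fintype.sum_equiv (Equiv.addRight (ρ t)) _ _ fun _ => rfl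
    rw [Finset.sum_comm]
    simp [htranslate]
  have hle := Finset.sum_le_sum fun v (_ : v ∈ Finset.univ) => h v
  rw [hsum, hsum] at hle
  exact le_of_mul_le_mul_left hle (by exact_mod_cast Fintype.card_pos)

variable {p : ℕ} [hp : Fact p.Prime]

/-- The decoupling inequality with constant `D` for curves of degree `l`, at scale `p ^ n` and with
the critical exponent `l * (l + 1)`. The power of `p` is the one allowed by square root cancellation
and Hölder's inequality, so that decoupling in degree `l` says `D = O(p ^ (ε * n))`. -/
def DecBound (p : ℕ) [Fact p.Prime] (l n : ℕ) (D : ℝ) : Prop :=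
  ∀ φ : Fin l → ℤ_[p][X], IsMomentLike p φ → ∀ (S : Finset ℕ) (x : ℕ → ℤ_[p]) (w : ℕ → ℂ),
    ∑ c, ‖expSum φ (l * n) x w S c‖ ^ (l * (l + 1)) ≤
      D * (p : ℝ) ^ ((n : ℝ) * ((l : ℝ) * (l + 1) / 2 - 1)) *
        ∑ J ∈ range (p ^ n), ∑ c, ‖expSum φ (l * n) x w (cell p S x n J) c‖ ^ (l * (l + 1))

/-- On each coset of the translations `ρ`, the sum along `φ` is a sum along the curve `ψ` of lower
degree, to which the decoupling inequality applies. -/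
lemma DecBound.transfer {k l M m : ℕ} {D : ℝ} (hD : DecBound p l m D) (φ : Fin k → ℤ_[p][X])
    {ψ : Fin l → ℤ_[p][X]} (hψ : IsMomentLike p ψ) (S : Finset ℕ) (x z : ℕ → ℤ_[p]) (w : ℕ → ℂ)
    (ρ : Freq p l (l * m) → Freq p k M) (κ : Freq p l (l * m) → ℂ) (hκ : ∀ t, ‖κ t‖ = 1)
    (hρ : ∀ i ∈ S, ∀ t, phase φ M (x i) (ρ t) = κ t * phase ψ (l * m) (z i) t)
    (B : Freq p k M → ℝ) (hB0 : ∀ v, 0 ≤ B v) (hB : ∀ v t, B (v + ρ t) = B v) :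
    ∑ v, ‖expSum φ M x w S v‖ ^ (l * (l + 1)) * B v ≤
      D * (p : ℝ) ^ ((m : ℝ) * ((l : ℝ) * (l + 1) / 2 - 1)) *
        ∑ J ∈ range (p ^ m),
          ∑ v, ‖expSum φ M x w (cell p S z m J) v‖ ^ (l * (l + 1)) * B v := by
  rw [Finset.sum_comm (s := range (p ^ m)), Finset.mul_sum]
  refine sum_le_sum_of_translates ρ _ _ fun v => ?_
  set w' : ℕ → ℂ := fun i => w i * phase φ M (x i) v
  have hexp (T : Finset ℕ) (hT : T ⊆ S) (t : Freq p l (l * m)) :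
      ‖expSum φ M x w T (v + ρ t)‖ = ‖expSum ψ (l * m) z w' T t‖ :=
    norm_expSum_add φ M (hκ t) (fun i hi => hρ i (hT hi) t) w v
  have hcell (J : ℕ) : cell p S z m J ⊆ S := fun i hi => (mem_cell.mp hi).1
  calc ∑ t, ‖expSum φ M x w S (v + ρ t)‖ ^ (l * (l + 1)) * B (v + ρ t)
      = (∑ t, ‖expSum ψ (l * m) z w' S t‖ ^ (l * (l + 1))) * B v := by
        rw [Finset.sum_mul]
        exact Finset.sum_congr rfl fun t _ => by rw [hexp S subset_rfl, hB]
    _ ≤ _ := mul_le_mul_of_nonneg_right (hD ψ hψ S z w') (hB0 v)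
    _ = _ := by
        simp only [hB, hexp _ (hcell _)]
        rw [← Finset.mul_sum, Finset.sum_comm (s := range (p ^ m))]
        simp only [Finset.sum_mul, mul_assoc]

lemma DecBound.sum_cell_le {k l N a m M : ℕ} {D : ℝ} (hD : DecBound p l m D)
    (φ : Fin k → ℤ_[p][X]) {ψ : Fin l → ℤ_[p][X]} (hψ : IsMomentLike p ψ) {I : ℕ}
    {A : Matrix (Fin l) (Fin k) ℤ_[p]} {c : Fin l → ℤ_[p]}
    (hA : ∀ j z, ∑ i, A j i * (φ i).eval (I + (p : ℤ_[p]) ^ a * z) =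
      c j + (p : ℤ_[p]) ^ (a * ((j : ℕ) + 1)) * (ψ j).eval z)
    (hM : M = N + l * a + l * m) (S : Finset ℕ) (x : ℕ → ℤ_[p]) (w : ℕ → ℂ)
    (B : Freq p k M → ℝ) (hB0 : ∀ v, 0 ≤ B v)
    (hB : ∀ v d, B (v + reduce M (Matrix.vecMul (scaledFreq N a d) A)) = B v) :
    ∑ v, ‖expSum φ M x w (cell p S x a I) v‖ ^ (l * (l + 1)) * B v ≤
      D * (p : ℝ) ^ ((m : ℝ) * ((l : ℝ) * (l + 1) / 2 - 1)) *
        ∑ J ∈ range (p ^ m),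
          ∑ v, ‖expSum φ M x w (cell p S x (a + m) (I + p ^ a * J)) v‖ ^ (l * (l + 1)) * B v := by
  obtain ⟨z, hz⟩ := exists_cell_coordinate S x a I
  choose lift hlift using exists_reduce_eq (p := p) (k := l) (l * m)
  have hmain := hD.transfer φ hψ (cell p S x a I) x z w
    (fun t => reduce M (Matrix.vecMul (scaledFreq N a (lift t)) A))
    (fun t => chi p M (∑ j, scaledFreq N a (lift t) j * c j)) (fun _ => norm_chi _ _)
    (fun i hi t => ?_) B hB0 (fun v t => hB v (lift t))
  · simpa only [cell_cell hz] using hmain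
  · rw [phase_reduce_vecMul, hz i hi]
    simp only [hA]
    subst hM
    rw [chi_sum_scaledFreq_mul, hlift]

lemma DecBound.sum_cell_le_sum_subcell {k a m : ℕ} {D : ℝ} (ha : 1 ≤ a) (hD : DecBound p k m D)
    {φ : Fin k → ℤ_[p][X]} (hφ : IsMomentLike p φ) (S : Finset ℕ) (x : ℕ → ℤ_[p]) (w : ℕ → ℂ)
    (I : ℕ) :
    ∑ v, ‖expSum φ (k * (a + m)) x w (cell p S x a I) v‖ ^ (k * (k + 1)) ≤
      D * (p : ℝ) ^ ((m : ℝ) * ((k : ℝ) * (k + 1) / 2 - 1)) *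
        ∑ J ∈ range (p ^ m),
          ∑ v, ‖expSum φ (k * (a + m)) x w (cell p S x (a + m) (I + p ^ a * J)) v‖ ^
            (k * (k + 1)) := by
  obtain ⟨A, c, ψ, hψ, hA⟩ :=
    exists_isMomentLike_rescaling φ (I : ℤ_[p]) (hφ.isUnit_det_taylorMatrix _) ha
  simpa only [mul_one] using hD.sum_cell_le (N := 0) (M := k * (a + m)) φ hψ hA (by ring) S x w
    (fun _ => 1) (fun _ => zero_le_one) (fun _ _ => rfl)

/-- Decoupling in degree `l ≤ k` of one cell, in the presence of a separated cell whose exponential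
sum has constant modulus along a large group of translations. -/
lemma DecBound.sum_cell_mul_le_of_separated {k d l n a m b : ℕ} {D : ℝ} (hdl : d + l = k)
    (hkp : k < p) (ha : 1 ≤ a) (hl : 1 ≤ l) (hb : b ≤ n) (hscale : l * (a + m) ≤ b * (d + 1))
    (hD : DecBound p l m D) {φ : Fin k → ℤ_[p][X]} (hφ : IsMomentLike p φ) (S : Finset ℕ)
    (x : ℕ → ℤ_[p]) (w : ℕ → ℂ) {I I' : ℕ} (hI : ¬ I ≡ I' [MOD p]) (e : ℕ) :
    ∑ v, ‖expSum φ (k * n) x w (cell p S x a I) v‖ ^ (l * (l + 1)) *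
        ‖expSum φ (k * n) x w (cell p S x b I') v‖ ^ e ≤
      D * (p : ℝ) ^ ((m : ℝ) * ((l : ℝ) * (l + 1) / 2 - 1)) *
        ∑ J ∈ range (p ^ m),
          ∑ v, ‖expSum φ (k * n) x w (cell p S x (a + m) (I + p ^ a * J)) v‖ ^ (l * (l + 1)) *
            ‖expSum φ (k * n) x w (cell p S x b I') v‖ ^ e := by
  have hunit : IsUnit ((I : ℤ_[p]) - I') := by
    rw [isUnit_iff_toZMod_ne_zero, map_sub, map_natCast, map_natCast, sub_ne_zero, Ne,
      ZMod.natCast_eq_natCast_iff]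
    exact hI
  obtain ⟨A, c, c', ψ, hψ, hA, hA'⟩ := hφ.exists_separating_rescaling hdl hkp hunit ha
  obtain ⟨z, hz⟩ := exists_cell_coordinate S x b I'
  have hle : l * (a + m) ≤ k * n := by
    rw [mul_comm k]
    exact hscale.trans (Nat.mul_le_mul hb (by omega))
  obtain ⟨N, hN⟩ := Nat.exists_eq_add_of_le' hle
  refine hD.sum_cell_le φ hψ hA (N := N) (by rw [hN]; ring) S x w _ (fun _ => by positivity)
    fun v f => ?_
  have hconst : ∀ i ∈ cell p S x b I', phase φ (k * n) (x i)
      (reduce (k * n) (Matrix.vecMul (scaledFreq N a f) A)) =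
        chi p (k * n) (∑ j, scaledFreq N a f j * c' j) := by
    intro i hi
    rw [phase_reduce_vecMul, hz i hi]
    refine chi_eq_of_dvd_sub ?_
    rw [← Finset.sum_sub_distrib]
    refine Finset.dvd_sum fun j _ => ?_
    rw [← mul_sub, hN, pow_add]
    refine mul_dvd_mul (pow_dvd_scaledFreq N a f j) (dvd_trans ?_ (hA' j _))
    rw [mul_pow, ← pow_mul]
    exact Dvd.dvd.mul_right (pow_dvd_pow _ hscale) _
  exact congrArg (· ^ e) (norm_expSum_add_of_phase_eq φ (k * n) (norm_chi _ _) hconst w v)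

end Decoupling

/-! ### Inequalities for finite sums -/

section Inequalities

variable {ι : Type*}

lemma sum_rpow_mul_rpow_le (s : Finset ι) {f g : ι → ℝ} (hf : ∀ i ∈ s, 0 ≤ f i)
    (hg : ∀ i ∈ s, 0 ≤ g i) {θ : ℝ} (hθ₀ : 0 < θ) (hθ₁ : θ < 1) :
    ∑ i ∈ s, f i ^ θ * g i ^ (1 - θ) ≤ (∑ i ∈ s, f i) ^ θ * (∑ i ∈ s, g i) ^ (1 - θ) := by
  have hconj : θ⁻¹.HolderConjugate (1 - θ)⁻¹ :=
    Real.holderConjugate_iff.2 ⟨(one_lt_inv₀ hθ₀).2 hθ₁, by simp⟩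
  have hpow {h : ι → ℝ} (hh : ∀ i ∈ s, 0 ≤ h i) {α : ℝ} (hα : α ≠ 0) :
      (∑ i ∈ s, (h i ^ α) ^ α⁻¹) ^ (1 / α⁻¹) = (∑ i ∈ s, h i) ^ α := by
    rw [one_div, inv_inv]
    exact congrArg (· ^ α) (Finset.sum_congr rfl fun i hi => Real.rpow_rpow_inv (hh i hi) hα)
  rw [← hpow hf hθ₀.ne', ← hpow hg (sub_pos.2 hθ₁).ne']
  exact Real.inner_le_Lp_mul_Lq_of_nonneg s hconj (fun i hi => Real.rpow_nonneg (hf i hi) _)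
    fun i hi => Real.rpow_nonneg (hg i hi) _

lemma pow_eq_rpow_mul_rpow {x : ℝ} (hx : 0 ≤ x) {e e' e'' : ℕ} {θ : ℝ} (hθ₀ : 0 ≤ θ) (hθ₁ : θ ≤ 1)
    (he : (e : ℝ) = θ * e' + (1 - θ) * e'') :
    x ^ e = (x ^ e') ^ θ * (x ^ e'') ^ (1 - θ) := by
  have : 0 ≤ 1 - θ := sub_nonneg.2 hθ₁
  rw [← Real.rpow_natCast x e, ← Real.rpow_natCast_mul hx, ← Real.rpow_natCast_mul hx,
    ← Real.rpow_add_of_nonneg hx (by positivity) (by positivity), he]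
  ring_nf

lemma pow_sum_le_card_pow_mul (s : Finset ι) {f : ι → ℝ} (hf : ∀ i ∈ s, 0 ≤ f i) {e : ℕ}
    (he : 1 ≤ e) : (∑ i ∈ s, f i) ^ e ≤ (#s : ℝ) ^ (e - 1) * ∑ i ∈ s, f i ^ e := by
  simpa [← Nat.cast_pred he, Real.rpow_natCast] using
    Real.rpow_sum_le_const_mul_sum_rpow_of_nonneg s (p := e) (by exact_mod_cast he) hf

lemma norm_sum_le_two_mul {E : Type*} [SeminormedAddCommGroup E] {s : Finset ι} {z : ι → E}
    {m : ι} (hm : m ∈ s) (hdom : ∀ j ∈ s, j ≠ m → #s * ‖z j‖ ≤ ‖z m‖) :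
    ‖∑ i ∈ s, z i‖ ≤ 2 * ‖z m‖ := by
  classical
  have hs : (0 : ℝ) < #s := by exact_mod_cast card_pos.2 ⟨m, hm⟩
  have hrest : ‖∑ j ∈ s.erase m, z j‖ ≤ ‖z m‖ :=
    calc ‖∑ j ∈ s.erase m, z j‖ ≤ ∑ _ ∈ s.erase m, ‖z m‖ / #s := by
          refine (norm_sum_le _ _).trans (Finset.sum_le_sum fun j hj => ?_)
          rw [le_div_iff₀' hs]
          exact hdom j (mem_of_mem_erase hj) (ne_of_mem_erase hj)
      _ = #(s.erase m) * (‖z m‖ / #s) := by rw [sum_const, nsmul_eq_mul]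
      _ ≤ #s * (‖z m‖ / #s) := by gcongr; exact erase_subset m s
      _ = ‖z m‖ := mul_div_cancel₀ _ hs.ne'
  rw [← Finset.add_sum_erase _ _ hm, two_mul]
  exact (norm_add_le _ _).trans (add_le_add_right hrest _)

lemma norm_sum_pow_le_of_comparable {E : Type*} [SeminormedAddCommGroup E] {s : Finset ι}
    {z : ι → E} {m j : ι} (hm : m ∈ s) (hmax : ∀ i ∈ s, ‖z i‖ ≤ ‖z m‖)
    (hj : ‖z m‖ ≤ #s * ‖z j‖) (e₁ e₂ : ℕ) :
    ‖∑ i ∈ s, z i‖ ^ (e₁ + e₂) ≤ (#s : ℝ) ^ (2 * (e₁ + e₂)) * (‖z m‖ ^ e₁ * ‖z j‖ ^ e₂) := by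
  have hs : (1 : ℝ) ≤ #s := by exact_mod_cast card_pos.2 ⟨m, hm⟩
  have hsum : ‖∑ i ∈ s, z i‖ ≤ #s * ‖z m‖ :=
    (norm_sum_le _ _).trans ((Finset.sum_le_sum hmax).trans_eq (by simp))
  calc ‖∑ i ∈ s, z i‖ ^ (e₁ + e₂) ≤ (#s * ‖z m‖) ^ (e₁ + e₂) := by gcongr
    _ = (#s : ℝ) ^ (e₁ + e₂) * (‖z m‖ ^ e₁ * ‖z m‖ ^ e₂) := by rw [mul_pow, pow_add ‖z m‖]
    _ ≤ (#s : ℝ) ^ (e₁ + e₂) * (‖z m‖ ^ e₁ * (#s * ‖z j‖) ^ e₂) := by gcongr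
    _ = (#s : ℝ) ^ (e₁ + e₂ + e₂) * (‖z m‖ ^ e₁ * ‖z j‖ ^ e₂) := by ring
    _ ≤ (#s : ℝ) ^ (2 * (e₁ + e₂)) * (‖z m‖ ^ e₁ * ‖z j‖ ^ e₂) := by
        gcongr ?_ * _
        exact pow_le_pow_right₀ hs (by omega)

/-- Either the largest term dominates the sum, or some other term is comparable to it. -/
lemma norm_sum_pow_le_sum_add_sum_offDiag {E : Type*} [SeminormedAddCommGroup E]
    {s : Finset ι} (hs : s.Nonempty) (z : ι → E) (e₁ e₂ : ℕ) :
    ‖∑ i ∈ s, z i‖ ^ (e₁ + e₂) ≤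
      2 ^ (e₁ + e₂) * ∑ i ∈ s, ‖z i‖ ^ (e₁ + e₂) +
        (#s : ℝ) ^ (2 * (e₁ + e₂)) * ∑ t ∈ s.offDiag, ‖z t.1‖ ^ e₁ * ‖z t.2‖ ^ e₂ := by
  obtain ⟨m, hm, hmax⟩ := s.exists_max_image (fun i => ‖z i‖) hs
  by_cases hdom : ∀ j ∈ s, j ≠ m → #s * ‖z j‖ ≤ ‖z m‖
  · refine le_add_of_le_of_nonneg ?_ (by positivity)
    calc ‖∑ i ∈ s, z i‖ ^ (e₁ + e₂) ≤ (2 * ‖z m‖) ^ (e₁ + e₂) := by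
          gcongr
          exact norm_sum_le_two_mul hm hdom
      _ = 2 ^ (e₁ + e₂) * ‖z m‖ ^ (e₁ + e₂) := mul_pow _ _ _
      _ ≤ 2 ^ (e₁ + e₂) * ∑ i ∈ s, ‖z i‖ ^ (e₁ + e₂) := by
          gcongr
          exact single_le_sum (f := fun i => ‖z i‖ ^ (e₁ + e₂)) (fun i _ => by positivity) hm
  · push Not at hdom
    obtain ⟨j, hj, hjm, hlt⟩ := hdom
    refine le_add_of_nonneg_of_le (by positivity)
      ((norm_sum_pow_le_of_comparable hm hmax hlt.le e₁ e₂).trans ?_)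
    gcongr
    exact single_le_sum (f := fun t : ι × ι => ‖z t.1‖ ^ e₁ * ‖z t.2‖ ^ e₂)
      (fun t _ => by positivity) (mem_offDiag.2 ⟨hm, hj, hjm.symm⟩ : (m, j) ∈ s.offDiag)

end Inequalities

/-! ### Bilinear moments -/

section BilinearMoments

/-- The pairs of residue classes modulo `p ^ a` and modulo `p ^ b` which are distinct modulo `p`. -/
def separatedPairs (p a b : ℕ) : Finset (ℕ × ℕ) :=
  (range (p ^ a) ×ˢ range (p ^ b)).filter fun t => ¬ t.1 ≡ t.2 [MOD p]

lemma separatedPairs_one_one (p : ℕ) : separatedPairs p 1 1 = (range p).offDiag := by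
  ext ⟨I, I'⟩
  simp only [separatedPairs, pow_one, mem_filter, mem_product, mem_range, mem_offDiag, and_assoc]
  refine and_congr_right fun hI => and_congr_right fun hI' => not_congr ⟨fun h => ?_, fun h => ?_⟩
  · exact h.eq_of_lt_of_lt hI hI'
  · exact h ▸ Nat.ModEq.refl _

lemma sum_separatedPairs_add {E : Type*} [AddCommMonoid E] {p a : ℕ} (ha : 1 ≤ a) (m b : ℕ)
    (h : ℕ → ℕ → E) :
    ∑ t ∈ separatedPairs p (a + m) b, h t.1 t.2 =
      ∑ t ∈ separatedPairs p a b, ∑ J ∈ range (p ^ m), h (t.1 + p ^ a * J) t.2 := by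
  have hmod (I I' J : ℕ) : I + p ^ a * J ≡ I' [MOD p] ↔ I ≡ I' [MOD p] := by
    obtain ⟨c, rfl⟩ := Nat.exists_eq_add_of_le ha
    simp [Nat.ModEq, pow_add, mul_assoc]
  simp only [separatedPairs, sum_filter, sum_product, pow_add, sum_range_mul, hmod]
  refine Finset.sum_congr rfl fun I _ => ?_
  rw [Finset.sum_comm]
  refine Finset.sum_congr rfl fun I' _ => ?_
  split_ifs <;> simp

lemma sum_separatedPairs_swap {E : Type*} [AddCommMonoid E] (p a b : ℕ) (h : ℕ → ℕ → E) :
    ∑ t ∈ separatedPairs p a b, h t.1 t.2 = ∑ t ∈ separatedPairs p b a, h t.2 t.1 :=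
  Finset.sum_equiv (Equiv.prodComm ℕ ℕ)
    (fun t => by simp [separatedPairs, Nat.ModEq.comm, and_comm]) fun _ _ => rfl

variable {p : ℕ} [hp : Fact p.Prime]

/-- The data of an exponential sum along a curve congruent to the moment curve, at scale `p ^ n`:
the sum runs over `index`, the summand `i` sits at the point `point i` of the curve and carries the
coefficient `weight i`. -/
structure CurveSum (p : ℕ) [Fact p.Prime] (k n : ℕ) where
  curve : Fin k → ℤ_[p][X]
  isMomentLike : IsMomentLike p curve
  index : Finset ℕ
  point : ℕ → ℤ_[p]
  weight : ℕ → ℂ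

namespace CurveSum

variable {k n : ℕ} (F : CurveSum p k n)

/-- The part of the exponential sum coming from the points congruent to `I` modulo `p ^ a`. -/
noncomputable def cellSum (a I : ℕ) : Freq p k (k * n) → ℂ :=
  expSum F.curve (k * n) F.point F.weight (cell p F.index F.point a I)

/-- The right-hand side of the decoupling inequality with constant `1`. -/
noncomputable def fineMoment : ℝ :=
  (p : ℝ) ^ ((n : ℝ) * ((k : ℝ) * (k + 1) / 2 - 1)) *
    ∑ J ∈ range (p ^ n), ∑ v, ‖F.cellSum n J v‖ ^ (k * (k + 1))

lemma fineMoment_nonneg : 0 ≤ F.fineMoment := by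
  unfold fineMoment
  positivity

/-- The sum over pairs of separated cells, of sizes `p ^ (-a)` and `p ^ (-b)`, of the mixed moments
of order `(e₁, e₂)`. -/
noncomputable def pairSum (e₁ e₂ a b : ℕ) : ℝ :=
  ∑ t ∈ separatedPairs p a b, ∑ v, ‖F.cellSum a t.1 v‖ ^ e₁ * ‖F.cellSum b t.2 v‖ ^ e₂

lemma pairSum_nonneg (e₁ e₂ a b : ℕ) : 0 ≤ F.pairSum e₁ e₂ a b := by
  unfold pairSum
  positivity

/-- The bilinear moment `pairSum`, normalised so that decoupling at the level of square root
cancellation makes it independent of the scales `a` and `b`. -/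
noncomputable def mixedMoment (e₁ e₂ a b : ℕ) : ℝ :=
  (p : ℝ) ^ ((a : ℝ) * ((e₁ : ℝ) / 2 - 1) + (b : ℝ) * ((e₂ : ℝ) / 2 - 1)) * F.pairSum e₁ e₂ a b

lemma mixedMoment_nonneg (e₁ e₂ a b : ℕ) : 0 ≤ F.mixedMoment e₁ e₂ a b :=
  mul_nonneg (by positivity) (F.pairSum_nonneg _ _ _ _)

lemma pairSum_swap (e₁ e₂ a b : ℕ) : F.pairSum e₁ e₂ a b = F.pairSum e₂ e₁ b a := by
  simpa only [pairSum, mul_comm] using sum_separatedPairs_swap p a b fun I I' =>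
    ∑ v, ‖F.cellSum a I v‖ ^ e₁ * ‖F.cellSum b I' v‖ ^ e₂

lemma mixedMoment_swap (e₁ e₂ a b : ℕ) : F.mixedMoment e₁ e₂ a b = F.mixedMoment e₂ e₁ b a := by
  rw [mixedMoment, mixedMoment, pairSum_swap, add_comm]

lemma pairSum_le_rpow_mul_rpow {e₁ e₂ e₁' e₂' e₁'' e₂'' : ℕ} {θ : ℝ} (hθ₀ : 0 < θ) (hθ₁ : θ < 1)
    (he₁ : (e₁ : ℝ) = θ * e₁' + (1 - θ) * e₁'') (he₂ : (e₂ : ℝ) = θ * e₂' + (1 - θ) * e₂'')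
    (a b : ℕ) :
    F.pairSum e₁ e₂ a b ≤ F.pairSum e₁' e₂' a b ^ θ * F.pairSum e₁'' e₂'' a b ^ (1 - θ) := by
  simp only [pairSum, ← Finset.sum_product']
  refine le_trans (Finset.sum_le_sum fun t _ => ?_)
    (sum_rpow_mul_rpow_le _ (fun t _ => by positivity) (fun t _ => by positivity) hθ₀ hθ₁)
  rw [Real.mul_rpow (by positivity) (by positivity), Real.mul_rpow (by positivity) (by positivity),
    pow_eq_rpow_mul_rpow (norm_nonneg _) hθ₀.le hθ₁.le he₁,
    pow_eq_rpow_mul_rpow (norm_nonneg _) hθ₀.le hθ₁.le he₂, mul_mul_mul_comm]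

lemma mixedMoment_le_rpow_mul_rpow {e₁ e₂ e₁' e₂' e₁'' e₂'' : ℕ} {θ : ℝ} (hθ₀ : 0 < θ)
    (hθ₁ : θ < 1) (he₁ : (e₁ : ℝ) = θ * e₁' + (1 - θ) * e₁'')
    (he₂ : (e₂ : ℝ) = θ * e₂' + (1 - θ) * e₂'') (a b : ℕ) :
    F.mixedMoment e₁ e₂ a b ≤
      F.mixedMoment e₁' e₂' a b ^ θ * F.mixedMoment e₁'' e₂'' a b ^ (1 - θ) := by
  have hp₀ : (0 : ℝ) < p := Nat.cast_pos.2 hp.1.pos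
  simp only [mixedMoment]
  rw [Real.mul_rpow (by positivity) (F.pairSum_nonneg _ _ _ _),
    Real.mul_rpow (by positivity) (F.pairSum_nonneg _ _ _ _), ← Real.rpow_mul hp₀.le,
    ← Real.rpow_mul hp₀.le, mul_mul_mul_comm, ← Real.rpow_add hp₀]
  refine mul_le_mul (le_of_eq ?_) (F.pairSum_le_rpow_mul_rpow hθ₀ hθ₁ he₁ he₂ a b)
    (F.pairSum_nonneg _ _ _ _) (by positivity)
  rw [he₁, he₂]
  ring_nf

lemma sum_cellSum_pow_le {b : ℕ} {D : ℝ} (hb : 1 ≤ b) (hbn : b ≤ n)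
    (hD : DecBound p k (n - b) D) :
    ∑ I ∈ range (p ^ b), ∑ v, ‖F.cellSum b I v‖ ^ (k * (k + 1)) ≤
      D * (p : ℝ) ^ (-((b : ℝ) * ((k : ℝ) * (k + 1) / 2 - 1))) * F.fineMoment := by
  have hp₀ : (0 : ℝ) < p := Nat.cast_pos.2 hp.1.pos
  obtain ⟨m, rfl⟩ := Nat.exists_eq_add_of_le hbn
  rw [Nat.add_sub_cancel_left] at hD
  calc ∑ I ∈ range (p ^ b), ∑ v, ‖F.cellSum b I v‖ ^ (k * (k + 1))
      ≤ D * (p : ℝ) ^ ((m : ℝ) * ((k : ℝ) * (k + 1) / 2 - 1)) *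
          ∑ J ∈ range (p ^ (b + m)), ∑ v, ‖F.cellSum (b + m) J v‖ ^ (k * (k + 1)) := by
        rw [pow_add p, sum_range_mul, Finset.mul_sum]
        exact Finset.sum_le_sum fun I _ =>
          hD.sum_cell_le_sum_subcell hb F.isMomentLike F.index F.point F.weight I
    _ = D * (p : ℝ) ^ (-((b : ℝ) * ((k : ℝ) * (k + 1) / 2 - 1))) * F.fineMoment := by
        rw [fineMoment, ← mul_assoc, mul_assoc D _ ((p : ℝ) ^ _), ← Real.rpow_add hp₀]
        congr 3
        push_cast
        ring

lemma pairSum_zero_le (e a b : ℕ) :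
    F.pairSum 0 e a b ≤ (p : ℝ) ^ (a : ℝ) * ∑ I ∈ range (p ^ b), ∑ v, ‖F.cellSum b I v‖ ^ e :=
  calc F.pairSum 0 e a b
      ≤ ∑ t ∈ range (p ^ a) ×ˢ range (p ^ b), ∑ v, ‖F.cellSum b t.2 v‖ ^ e := by
        simp only [pairSum, pow_zero, one_mul]
        exact sum_le_sum_of_subset_of_nonneg (filter_subset _ _) fun _ _ _ => by positivity
    _ = (p : ℝ) ^ (a : ℝ) * ∑ I ∈ range (p ^ b), ∑ v, ‖F.cellSum b I v‖ ^ e := by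
        simp [sum_product]

lemma mixedMoment_zero_le {a b : ℕ} {D : ℝ} (hb : 1 ≤ b) (hbn : b ≤ n)
    (hD : DecBound p k (n - b) D) :
    F.mixedMoment 0 (k * (k + 1)) a b ≤ D * F.fineMoment := by
  have hp₀ : (0 : ℝ) < p := Nat.cast_pos.2 hp.1.pos
  set β : ℝ := (b : ℝ) * ((k : ℝ) * (k + 1) / 2 - 1)
  calc F.mixedMoment 0 (k * (k + 1)) a b
      = (p : ℝ) ^ (β - a) * F.pairSum 0 (k * (k + 1)) a b := by
        rw [mixedMoment]
        congr 2
        push_cast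
        ring
    _ ≤ (p : ℝ) ^ (β - a) * ((p : ℝ) ^ (a : ℝ) * (D * (p : ℝ) ^ (-β) * F.fineMoment)) := by
        gcongr
        exact (F.pairSum_zero_le _ _ _).trans (by gcongr; exact F.sum_cellSum_pow_le hb hbn hD)
    _ = (p : ℝ) ^ (β - a) * (p : ℝ) ^ (a : ℝ) * (p : ℝ) ^ (-β) * (D * F.fineMoment) := by ring
    _ = D * F.fineMoment := by
        rw [← Real.rpow_add hp₀, ← Real.rpow_add hp₀, sub_add_cancel, add_neg_cancel,
          Real.rpow_zero, one_mul]

lemma mixedMoment_le_of_decBound {l d a m b : ℕ} {D : ℝ} (hdl : d + l = k) (hkp : k < p)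
    (ha : 1 ≤ a) (hl : 1 ≤ l) (hb : b ≤ n) (hscale : l * (a + m) ≤ b * (d + 1))
    (hD : DecBound p l m D) (e : ℕ) :
    F.mixedMoment (l * (l + 1)) e a b ≤ D * F.mixedMoment (l * (l + 1)) e (a + m) b := by
  have hp₀ : (0 : ℝ) < p := Nat.cast_pos.2 hp.1.pos
  have hpair : F.pairSum (l * (l + 1)) e a b ≤
      D * (p : ℝ) ^ ((m : ℝ) * ((l : ℝ) * (l + 1) / 2 - 1)) *
        F.pairSum (l * (l + 1)) e (a + m) b := by
    rw [pairSum, pairSum, sum_separatedPairs_add ha m b fun I I' =>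
      ∑ v, ‖F.cellSum (a + m) I v‖ ^ (l * (l + 1)) * ‖F.cellSum b I' v‖ ^ e, Finset.mul_sum]
    refine Finset.sum_le_sum fun t ht => ?_
    exact hD.sum_cell_mul_le_of_separated hdl hkp ha hl hb hscale F.isMomentLike F.index F.point
      F.weight (mem_filter.1 ht).2 e
  rw [mixedMoment, mixedMoment]
  refine (mul_le_mul_of_nonneg_left hpair (by positivity)).trans_eq ?_
  rw [mul_assoc D, mul_left_comm, ← mul_assoc (_ ^ _ : ℝ) (_ ^ _ : ℝ), ← Real.rpow_add hp₀]
  congr 3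
  push_cast
  ring

lemma cellSum_eq_sum (b m I : ℕ) (v : Freq p k (k * n)) :
    F.cellSum b I v = ∑ J ∈ range (p ^ m), F.cellSum (b + m) (I + p ^ b * J) v := by
  obtain ⟨z, hz⟩ := exists_cell_coordinate F.index F.point b I
  simp only [cellSum, expSum, ← cell_cell hz]
  exact (sum_cell _ _ _ _).symm

lemma norm_cellSum_pow_le {b e : ℕ} (he : 1 ≤ e) (m I : ℕ) (v : Freq p k (k * n)) :
    ‖F.cellSum b I v‖ ^ e ≤
      (p : ℝ) ^ (m * e) * ∑ J ∈ range (p ^ m), ‖F.cellSum (b + m) (I + p ^ b * J) v‖ ^ e := by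
  have hp₁ : (1 : ℝ) ≤ p := Nat.one_le_cast.2 hp.1.pos
  calc ‖F.cellSum b I v‖ ^ e
      ≤ (∑ J ∈ range (p ^ m), ‖F.cellSum (b + m) (I + p ^ b * J) v‖) ^ e := by
        gcongr
        rw [F.cellSum_eq_sum b m]
        exact norm_sum_le _ _
    _ ≤ ((p : ℝ) ^ m) ^ (e - 1) *
          ∑ J ∈ range (p ^ m), ‖F.cellSum (b + m) (I + p ^ b * J) v‖ ^ e := by
        simpa using pow_sum_le_card_pow_mul (range (p ^ m)) (fun _ _ => norm_nonneg _) he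
    _ ≤ _ := by
        rw [pow_mul]
        gcongr
        · exact one_le_pow₀ hp₁
        · omega

lemma pairSum_le_pow_mul_pairSum_add {e₁ e₂ a b : ℕ} (hb : 1 ≤ b) (he : 1 ≤ e₂) (m : ℕ) :
    F.pairSum e₁ e₂ a b ≤ (p : ℝ) ^ (m * e₂) * F.pairSum e₁ e₂ a (b + m) := by
  rw [F.pairSum_swap e₁, F.pairSum_swap e₁, pairSum, pairSum, sum_separatedPairs_add hb m a
    fun I I' => ∑ v, ‖F.cellSum (b + m) I v‖ ^ e₂ * ‖F.cellSum a I' v‖ ^ e₁, Finset.mul_sum]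
  refine Finset.sum_le_sum fun t _ => ?_
  rw [Finset.sum_comm, Finset.mul_sum]
  refine Finset.sum_le_sum fun v _ => ?_
  rw [← Finset.sum_mul, ← mul_assoc]
  gcongr
  exact F.norm_cellSum_pow_le he m t.1 v

end CurveSum

end BilinearMoments

/-! ### Orthogonality and a priori decoupling constants -/

section Orthogonality

lemma addChar_map_sum {ι A M : Type*} [AddCommMonoid A] [CommMonoid M] (ψ : AddChar A M)
    (s : Finset ι) (f : ι → A) : ψ (∑ i ∈ s, f i) = ∏ i ∈ s, ψ (f i) :=
  map_prod ψ.toMonoidHom (fun i => Multiplicative.ofAdd (f i)) s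

lemma sum_addChar_sum_mul {ι R R' : Type*} [Fintype ι] [DecidableEq ι] [CommRing R] [Fintype R]
    [DecidableEq R] [CommRing R'] [IsDomain R'] {ψ : AddChar R R'} (hψ : ψ.IsPrimitive)
    (d : ι → R) :
    ∑ c : ι → R, ψ (∑ j, c j * d j) = if d = 0 then (Fintype.card (ι → R) : R') else 0 := by
  have hprod : ∑ c : ι → R, ψ (∑ j, c j * d j) = ∏ j, ∑ y, ψ (y * d j) := by
    rw [Finset.prod_univ_sum, Fintype.piFinset_univ]
    exact Finset.sum_congr rfl fun c _ => addChar_map_sum ψ _ _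
  rw [hprod]
  simp only [AddChar.sum_mulShift _ hψ]
  split_ifs with hd
  · simp [hd]
  · obtain ⟨j, hj : d j ≠ 0⟩ := Function.ne_iff.1 hd
    exact Finset.prod_eq_zero (mem_univ j) (by rw [if_neg hj, Nat.cast_zero])

lemma stdAddChar_mul_conj {N : ℕ} [NeZero N] (a b : ZMod N) :
    (ZMod.stdAddChar a : ℂ) * starRingEnd ℂ (ZMod.stdAddChar b) = ZMod.stdAddChar (a - b) := by
  rw [← AddChar.map_neg_eq_conj, ← AddChar.map_add_eq_mul, ← sub_eq_add_neg]

lemma sum_norm_sum_sq_of_orthogonal {ι V : Type*} [Fintype V] (s : Finset ι) (z : ι → V → ℂ)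
    (h : ∀ i ∈ s, ∀ j ∈ s, i ≠ j → ∑ v, z i v * starRingEnd ℂ (z j v) = 0) :
    ∑ v, ‖∑ i ∈ s, z i v‖ ^ 2 = ∑ i ∈ s, ∑ v, ‖z i v‖ ^ 2 := by
  rw [← Complex.ofReal_inj]
  push_cast
  simp only [← Complex.mul_conj', map_sum, Finset.sum_mul_sum]
  rw [Finset.sum_comm]
  refine Finset.sum_congr rfl fun i hi => ?_
  rw [Finset.sum_comm]
  exact Finset.sum_eq_single_of_mem i hi fun j hj hne => h i hi j hj hne.symm

variable {p : ℕ} [hp : Fact p.Prime]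

lemma sum_phase_mul_conj_eq_zero {k : ℕ} (φ : Fin k → ℤ_[p][X]) (M : ℕ) {x y : ℤ_[p]} (j : Fin k)
    (hj : ¬ (p : ℤ_[p]) ^ M ∣ (φ j).eval x - (φ j).eval y) :
    ∑ c, phase φ M x c * starRingEnd ℂ (phase φ M y c) = 0 := by
  set δ : Fin k → ZMod (p ^ M) := fun j => PadicInt.toZModPow M ((φ j).eval x - (φ j).eval y)
  have hphase (c : Freq p k M) : phase φ M x c * starRingEnd ℂ (phase φ M y c) =
      ZMod.stdAddChar (∑ j, c j * δ j) := by
    simp only [phase, stdAddChar_mul_conj, δ, map_sub, mul_sub, Finset.sum_sub_distrib]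
  have hδ : δ ≠ 0 := fun h => hj <| by
    rw [← Ideal.mem_span_singleton, ← PadicInt.ker_toZModPow, RingHom.mem_ker]
    exact congrFun h j
  simp only [hphase]
  rw [sum_addChar_sum_mul (ZMod.isPrimitive_stdAddChar _), if_neg hδ]

lemma sum_expSum_mul_conj_eq_zero {ι : Type*} {k : ℕ} (φ : Fin k → ℤ_[p][X]) (M : ℕ)
    (x : ι → ℤ_[p]) (w : ι → ℂ) {S T : Finset ι} (j : Fin k)
    (hST : ∀ i ∈ S, ∀ i' ∈ T, ¬ (p : ℤ_[p]) ^ M ∣ (φ j).eval (x i) - (φ j).eval (x i')) :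
    ∑ c, expSum φ M x w S c * starRingEnd ℂ (expSum φ M x w T c) = 0 := by
  simp only [expSum, map_sum, Finset.sum_mul_sum]
  rw [Finset.sum_comm]
  refine Finset.sum_eq_zero fun i hi => ?_
  rw [Finset.sum_comm]
  refine Finset.sum_eq_zero fun i' hi' => ?_
  have hfactor (c : Freq p k M) :
      w i * phase φ M (x i) c * starRingEnd ℂ (w i' * phase φ M (x i') c) =
        w i * starRingEnd ℂ (w i') *
          (phase φ M (x i) c * starRingEnd ℂ (phase φ M (x i') c)) := by
    rw [map_mul]
    ring
  simp only [hfactor]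
  rw [← Finset.mul_sum, sum_phase_mul_conj_eq_zero φ M j (hST i hi i' hi'), mul_zero]

lemma IsMomentLike.dvd_sub_of_dvd_eval_zero_sub {k : ℕ} {φ : Fin (k + 1) → ℤ_[p][X]}
    (hφ : IsMomentLike p φ) {x y d : ℤ_[p]} (hd : d ∣ (φ 0).eval x - (φ 0).eval y) :
    d ∣ x - y := by
  obtain ⟨h, hφ₀⟩ := hφ 0
  obtain ⟨u, hu⟩ := sub_dvd_eval_sub x y h
  have hfactor : (φ 0).eval x - (φ 0).eval y = (1 + p * u) * (x - y) := by
    simp only [hφ₀, Fin.val_zero, zero_add, pow_one, eval_add, eval_X, eval_mul, eval_C]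
    linear_combination (p : ℤ_[p]) * hu
  have hunit : IsUnit (1 + (p : ℤ_[p]) * u) := by
    rw [isUnit_iff_toZMod_ne_zero]
    simp
  rwa [hfactor, hunit.dvd_mul_left] at hd

/-- In degree one, decoupling is orthogonality. -/
lemma decBound_one (n : ℕ) : DecBound p 1 n 1 := by
  intro φ hφ S x w
  have hsplit (c : Freq p 1 (1 * n)) : expSum φ (1 * n) x w S c =
      ∑ J ∈ range (p ^ n), expSum φ (1 * n) x w (cell p S x n J) c := (sum_cell S x n _).symm
  have horthogonal : ∑ c, ‖expSum φ (1 * n) x w S c‖ ^ 2 =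
      ∑ J ∈ range (p ^ n), ∑ c, ‖expSum φ (1 * n) x w (cell p S x n J) c‖ ^ 2 := by
    simp only [hsplit]
    refine sum_norm_sum_sq_of_orthogonal _ _ fun I hI J hJ hne =>
      sum_expSum_mul_conj_eq_zero φ _ x w 0 fun i hi i' hi' hdvd => hne ?_
    have hclass : InClass p n I (x i') := by
      have hsub := hφ.dvd_sub_of_dvd_eval_zero_sub hdvd
      rw [one_mul] at hsub
      simpa [InClass] using dvd_sub (mem_cell.1 hi).2 hsub
    exact ((inClass_iff_eq_appr (mem_range.1 hI) _).1 hclass).trans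
      ((inClass_iff_eq_appr (mem_range.1 hJ) _).1 (mem_cell.1 hi').2).symm
  norm_num [horthogonal]

end Orthogonality

section TrivialBound

variable {p : ℕ} [hp : Fact p.Prime] {k n : ℕ}

lemma CurveSum.cellSum_zero_zero (F : CurveSum p k n) :
    F.cellSum 0 0 = expSum F.curve (k * n) F.point F.weight F.index := by
  simp [cellSum, cell, InClass]

lemma decBound_of_forall_curveSum {D : ℝ} (h : ∀ F : CurveSum p k n,
    ∑ v, ‖F.cellSum 0 0 v‖ ^ (k * (k + 1)) ≤ D * F.fineMoment) : DecBound p k n D := by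
  intro φ hφ S x w
  have hsum := h ⟨φ, hφ, S, x, w⟩
  simp only [CurveSum.cellSum_zero_zero] at hsum
  rwa [mul_assoc]

lemma DecBound.mono {D D' : ℝ} (h : DecBound p k n D) (hD : D ≤ D') : DecBound p k n D' :=
  fun φ hφ S x w => (h φ hφ S x w).trans (by gcongr)

lemma decBound_pow (hk : 1 ≤ k) (n : ℕ) : DecBound p k n ((p : ℝ) ^ (n * (k * (k + 1)))) := by
  refine decBound_of_forall_curveSum fun F => ?_
  have hp₁ : (1 : ℝ) ≤ p := Nat.one_le_cast.2 hp.1.pos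
  have hk₁ : (1 : ℝ) ≤ k := Nat.one_le_cast.2 hk
  have hnormalisation : (1 : ℝ) ≤ (p : ℝ) ^ ((n : ℝ) * ((k : ℝ) * (k + 1) / 2 - 1)) :=
    Real.one_le_rpow hp₁ (mul_nonneg (by positivity) (by nlinarith))
  calc ∑ v, ‖F.cellSum 0 0 v‖ ^ (k * (k + 1))
      ≤ ∑ v, (p : ℝ) ^ (n * (k * (k + 1))) *
          ∑ J ∈ range (p ^ n), ‖F.cellSum n J v‖ ^ (k * (k + 1)) := by
        refine Finset.sum_le_sum fun v _ => ?_
        simpa using F.norm_cellSum_pow_le (b := 0) (Nat.mul_pos hk k.succ_pos) n 0 v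
    _ = (p : ℝ) ^ (n * (k * (k + 1))) *
          ∑ J ∈ range (p ^ n), ∑ v, ‖F.cellSum n J v‖ ^ (k * (k + 1)) := by
        rw [← Finset.mul_sum, Finset.sum_comm]
    _ ≤ (p : ℝ) ^ (n * (k * (k + 1))) * F.fineMoment := by
        gcongr
        exact le_mul_of_one_le_left (by positivity) hnormalisation

end TrivialBound

/-! ### Gains over decoupling in bilinear moments -/

section Gains

lemma cast_mul_succ_sub_mul_succ {l k : ℕ} (h : l ≤ k) :
    ((k * (k + 1) - l * (l + 1) : ℕ) : ℝ) = (k : ℝ) * (k + 1) - l * (l + 1) := by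
  rw [Nat.cast_sub (Nat.mul_le_mul h (by omega))]
  push_cast
  rfl

variable {p : ℕ} [hp : Fact p.Prime] {k : ℕ}

namespace CurveSum

variable {n : ℕ} (F : CurveSum p k n)

lemma sum_norm_cellSum_zero_pow_le {e₁ e₂ : ℕ} (he : e₁ + e₂ = k * (k + 1)) {D : ℝ} (hn : 1 ≤ n)
    (hD : DecBound p k (n - 1) D) :
    ∑ v, ‖F.cellSum 0 0 v‖ ^ (k * (k + 1)) ≤
      2 ^ (k * (k + 1)) * (D * (p : ℝ) ^ (-((k : ℝ) * (k + 1) / 2 - 1)) * F.fineMoment) +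
        (p : ℝ) ^ (2 * (k * (k + 1))) * F.pairSum e₁ e₂ 1 1 := by
  have hsplit (v : Freq p k (k * n)) : F.cellSum 0 0 v = ∑ I ∈ range p, F.cellSum 1 I v := by
    simpa using F.cellSum_eq_sum 0 1 0 v
  have hdiagonal := F.sum_cellSum_pow_le le_rfl hn hD
  rw [pow_one, Nat.cast_one, one_mul] at hdiagonal
  calc ∑ v, ‖F.cellSum 0 0 v‖ ^ (k * (k + 1))
      ≤ ∑ v, (2 ^ (k * (k + 1)) * ∑ I ∈ range p, ‖F.cellSum 1 I v‖ ^ (k * (k + 1)) +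
          (p : ℝ) ^ (2 * (k * (k + 1))) * ∑ t ∈ separatedPairs p 1 1,
            ‖F.cellSum 1 t.1 v‖ ^ e₁ * ‖F.cellSum 1 t.2 v‖ ^ e₂) := by
        refine Finset.sum_le_sum fun v _ => ?_
        rw [hsplit, ← he, separatedPairs_one_one]
        simpa using norm_sum_pow_le_sum_add_sum_offDiag (nonempty_range_iff.2 hp.1.ne_zero)
          (fun I => F.cellSum 1 I v) e₁ e₂
    _ = 2 ^ (k * (k + 1)) * ∑ I ∈ range p, ∑ v, ‖F.cellSum 1 I v‖ ^ (k * (k + 1)) +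
          (p : ℝ) ^ (2 * (k * (k + 1))) * F.pairSum e₁ e₂ 1 1 := by
        rw [Finset.sum_add_distrib, ← Finset.mul_sum, ← Finset.mul_sum, Finset.sum_comm, pairSum,
          Finset.sum_comm (s := univ)]
    _ ≤ _ := by gcongr

/-- The mixed moment of total order `k * (k + 1)` whose first factor carries the critical exponent
`l * (l + 1)` of degree `l`. -/
noncomputable def criticalMoment (l a b : ℕ) : ℝ :=
  F.mixedMoment (l * (l + 1)) (k * (k + 1) - l * (l + 1)) a b

lemma criticalMoment_nonneg (l a b : ℕ) : 0 ≤ F.criticalMoment l a b :=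
  F.mixedMoment_nonneg _ _ _ _

lemma criticalMoment_zero (a b : ℕ) :
    F.criticalMoment 0 a b = F.mixedMoment 0 (k * (k + 1)) a b := by
  simp [criticalMoment]

lemma criticalMoment_le_max {l : ℕ} (hl : 0 < l) (hlk : l < k) (a b : ℕ) :
    F.criticalMoment l a b ≤ max (F.criticalMoment 0 a b) (F.criticalMoment 0 b a) := by
  set M := max (F.criticalMoment 0 a b) (F.criticalMoment 0 b a)
  have hM : 0 ≤ M := (F.criticalMoment_nonneg 0 a b).trans (le_max_left _ _)
  have hk₀ : (0 : ℝ) < k := Nat.cast_pos.2 (hl.trans hlk)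
  have hlk' : (l : ℝ) < k := Nat.cast_lt.2 hlk
  set θ : ℝ := (l : ℝ) * (l + 1) / (k * (k + 1)) with hθ
  have hθ₀ : 0 < θ := by positivity
  have hθ₁ : θ < 1 := by
    rw [hθ, div_lt_one (by positivity)]
    nlinarith
  calc F.criticalMoment l a b
      ≤ F.mixedMoment (k * (k + 1)) 0 a b ^ θ * F.mixedMoment 0 (k * (k + 1)) a b ^ (1 - θ) :=
        F.mixedMoment_le_rpow_mul_rpow hθ₀ hθ₁ (by push_cast; rw [hθ]; field_simp; ring)
          (by rw [cast_mul_succ_sub_mul_succ hlk.le, hθ]; push_cast; field_simp; ring) a b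
    _ ≤ M ^ θ * M ^ (1 - θ) := by
        rw [F.mixedMoment_swap (k * (k + 1)), ← criticalMoment_zero, ← criticalMoment_zero]
        gcongr
        exacts [Real.rpow_nonneg (F.criticalMoment_nonneg _ _ _) _,
          F.criticalMoment_nonneg _ _ _, le_max_right _ _, F.criticalMoment_nonneg _ _ _,
          le_max_left _ _]
    _ = M := by
        rw [← Real.rpow_add_of_nonneg hM hθ₀.le (sub_nonneg.2 hθ₁.le), add_sub_cancel,
          Real.rpow_one]

lemma criticalMoment_succ_le_rpow_mul_rpow {l d : ℕ} (hdl : d + (l + 1) = k) (hd : 1 ≤ d)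
    (a b : ℕ) :
    F.criticalMoment (l + 1) a b ≤
      F.criticalMoment d b a ^ (1 / ((d : ℝ) + 1)) *
        F.criticalMoment l a b ^ (1 - 1 / ((d : ℝ) + 1)) := by
  subst hdl
  have hd₀ : (0 : ℝ) < d := Nat.cast_pos.2 hd
  rw [criticalMoment, criticalMoment, criticalMoment, F.mixedMoment_swap (d * (d + 1))]
  refine F.mixedMoment_le_rpow_mul_rpow (by positivity)
    (by rw [div_lt_one (by positivity)]; linarith) ?_ ?_ a b
  · rw [cast_mul_succ_sub_mul_succ (by omega)]
    push_cast
    field_simp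
    ring
  · rw [cast_mul_succ_sub_mul_succ (by omega), cast_mul_succ_sub_mul_succ (by omega)]
    push_cast
    field_simp
    ring

lemma criticalMoment_succ_le {l d a m b : ℕ} {D B₁ B₂ : ℝ} (hdl : d + (l + 1) = k) (hkp : k < p)
    (hd : 1 ≤ d) (ha : 1 ≤ a) (hb : b ≤ n) (hscale : (l + 1) * (a + m) ≤ b * (d + 1))
    (hD₀ : 0 ≤ D) (hD : DecBound p (l + 1) m D) (h₁ : F.criticalMoment d b (a + m) ≤ B₁)
    (h₂ : F.criticalMoment l (a + m) b ≤ B₂) :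
    F.criticalMoment (l + 1) a b ≤
      D * (B₁ ^ (1 / ((d : ℝ) + 1)) * B₂ ^ (1 - 1 / ((d : ℝ) + 1))) := by
  have hθ : 1 / ((d : ℝ) + 1) ≤ 1 := by
    rw [div_le_one (by positivity)]
    linarith [d.cast_nonneg (α := ℝ)]
  have hB₁ : 0 ≤ B₁ := (F.criticalMoment_nonneg _ _ _).trans h₁
  refine (F.mixedMoment_le_of_decBound hdl hkp ha l.succ_pos hb hscale hD _).trans ?_
  refine mul_le_mul_of_nonneg_left
    ((F.criticalMoment_succ_le_rpow_mul_rpow hdl hd (a + m) b).trans ?_) hD₀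
  gcongr
  exacts [Real.rpow_nonneg (F.criticalMoment_nonneg _ _ _) _, F.criticalMoment_nonneg _ _ _,
    F.criticalMoment_nonneg _ _ _]

end CurveSum

/-- Decoupling holds in degree `k` with constants `O(p ^ (η n))`. -/
def Decoupled (p : ℕ) [Fact p.Prime] (k : ℕ) (η : ℝ) : Prop :=
  ∃ C : ℝ, 0 ≤ C ∧ ∀ n : ℕ, DecBound p k n (C * (p : ℝ) ^ (η * n))

lemma Decoupled.mono {η η' : ℝ} (h : Decoupled p k η) (hη : η ≤ η') : Decoupled p k η' := by
  obtain ⟨C, hC₀, hC⟩ := h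
  have hp₁ : (1 : ℝ) ≤ p := Nat.one_le_cast.2 hp.1.pos
  exact ⟨C, hC₀, fun n => (hC n).mono (by gcongr)⟩

/-- At the scales `b` divisible by `Q` and small compared with `n / R`, the critical moments of
order `l` are smaller by a factor `p ^ (σ b)` than decoupling with constants `O(p ^ (η n))` would
predict. The scale `a` of the first cell is at most the one at which the curve, seen from the second
cell, still looks like a moment curve of degree `l`. -/
def CriticalBound (p : ℕ) [Fact p.Prime] (k Q R l : ℕ) (η σ : ℝ) : Prop :=
  ∃ C : ℝ, 0 ≤ C ∧ ∀ (n : ℕ) (F : CurveSum p k n) (a b : ℕ), 1 ≤ a → 1 ≤ b → Q ∣ b → R * b ≤ n →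
    l * a ≤ b * (k - l + 1) →
      F.criticalMoment l a b ≤ C * (p : ℝ) ^ (η * n - σ * b) * F.fineMoment

lemma CriticalBound.mono {Q R l : ℕ} {η η' σ : ℝ} (h : CriticalBound p k Q R l η σ)
    (hη : η ≤ η') : CriticalBound p k Q R l η' σ := by
  obtain ⟨C, hC₀, hC⟩ := h
  refine ⟨C, hC₀, fun n F a b ha hb hQ hR hab => (hC n F a b ha hb hQ hR hab).trans ?_⟩
  have hp₁ : (1 : ℝ) ≤ p := Nat.one_le_cast.2 hp.1.pos
  have hF := F.fineMoment_nonneg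
  gcongr

lemma CurveSum.criticalMoment_zero_le {n : ℕ} (F : CurveSum p k n) {η C : ℝ}
    (hC : ∀ n : ℕ, DecBound p k n (C * (p : ℝ) ^ (η * n))) (a : ℕ) {b : ℕ} (hb : 1 ≤ b)
    (hbn : b ≤ n) :
    F.criticalMoment 0 a b ≤ C * (p : ℝ) ^ (η * n - η * b) * F.fineMoment := by
  rw [F.criticalMoment_zero, ← mul_sub, ← Nat.cast_sub hbn]
  exact F.mixedMoment_zero_le hb hbn (hC (n - b))

lemma Decoupled.criticalBound_zero {η : ℝ} (h : Decoupled p k η) (Q : ℕ) {R : ℕ} (hR : 1 ≤ R) :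
    CriticalBound p k Q R 0 η η := by
  obtain ⟨C, hC₀, hC⟩ := h
  exact ⟨C, hC₀, fun n F a b _ hb _ hbn _ =>
    F.criticalMoment_zero_le hC a hb ((Nat.le_mul_of_pos_left b hR).trans hbn)⟩

lemma Decoupled.criticalBound {η : ℝ} (hη : 0 ≤ η) (h : Decoupled p k η) {l : ℕ} (hl : 0 < l)
    (hlk : l < k) : CriticalBound p k 1 k l η 0 := by
  obtain ⟨C, hC₀, hC⟩ := h
  refine ⟨C, hC₀, fun n F a b ha hb _ hbn hab => ?_⟩
  have hp₁ : (1 : ℝ) ≤ p := Nat.one_le_cast.2 hp.1.pos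
  have hF := F.fineMoment_nonneg
  have hzero (a : ℕ) {b : ℕ} (hb : 1 ≤ b) (hbn : b ≤ n) :
      F.criticalMoment 0 a b ≤ C * (p : ℝ) ^ (η * n - 0 * b) * F.fineMoment := by
    refine (F.criticalMoment_zero_le hC a hb hbn).trans ?_
    gcongr
  have han : a ≤ n :=
    calc a ≤ l * a := Nat.le_mul_of_pos_left a hl
      _ ≤ b * (k - l + 1) := hab
      _ ≤ b * k := Nat.mul_le_mul_left b (by omega)
      _ = k * b := mul_comm _ _
      _ ≤ n := hbn
  refine (F.criticalMoment_le_max hl hlk a b).trans (max_le ?_ ?_)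
  · exact hzero a hb ((Nat.le_mul_of_pos_left b (hl.trans hlk)).trans hbn)
  · simpa using hzero b ha han

lemma exists_mul_eq_mul_succ_of_factorial_dvd {Q k l b : ℕ} (hl : 1 ≤ l) (hlk : l ≤ k)
    (hb : Q * k.factorial ∣ b) (d : ℕ) : ∃ a, l * a = b * (d + 1) ∧ Q ∣ a := by
  obtain ⟨f, hf⟩ := Nat.dvd_factorial hl hlk
  obtain ⟨c, rfl⟩ := hb
  exact ⟨Q * f * c * (d + 1), by rw [hf]; ring, f * c * (d + 1), by ring⟩

lemma rpow_interpolate {q C₁ C₂ M x y θ : ℝ} (hq : 0 < q) (hC₁ : 0 ≤ C₁) (hC₂ : 0 ≤ C₂)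
    (hM : 0 ≤ M) (hθ₀ : 0 ≤ θ) (hθ₁ : θ ≤ 1) :
    (C₁ * q ^ x * M) ^ θ * (C₂ * q ^ y * M) ^ (1 - θ) =
      C₁ ^ θ * C₂ ^ (1 - θ) * q ^ (x * θ + y * (1 - θ)) * M := by
  have hsplit : M = M ^ θ * M ^ (1 - θ) := by
    rw [← Real.rpow_add_of_nonneg hM hθ₀ (sub_nonneg.2 hθ₁), add_sub_cancel, Real.rpow_one]
  rw [Real.mul_rpow (by positivity) hM, Real.mul_rpow (by positivity) hM,
    Real.mul_rpow hC₁ (by positivity), Real.mul_rpow hC₂ (by positivity), ← Real.rpow_mul hq.le,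
    ← Real.rpow_mul hq.le, Real.rpow_add hq]
  conv_rhs => rw [hsplit]
  ring

lemma step_exponent_le {δ η σ₁ σ₂ l d a b m n : ℝ} (hδ : 0 ≤ δ) (hl : 0 ≤ l) (hd : 0 ≤ d)
    (hmn : m ≤ n) (hab : (l + 1) * a = b * (d + 1)) :
    δ * m + ((η * n - σ₁ * a) * (1 / (d + 1)) + (η * n - σ₂ * b) * (1 - 1 / (d + 1))) ≤
      (η + δ) * n - (σ₁ / (l + 1) + σ₂ * (d / (d + 1))) * b := by
  have hgain₁ : a * (1 / (d + 1)) = b / (l + 1) := by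
    field_simp
    linarith
  have hgain₂ : 1 - 1 / (d + 1) = d / (d + 1) := by
    field_simp
    ring
  have hloss : δ * m ≤ δ * n := mul_le_mul_of_nonneg_left hmn hδ
  linear_combination hloss - σ₁ * hgain₁ + (η * n - σ₂ * b - η * n) * hgain₂

lemma CriticalBound.step {Q R l d : ℕ} {δ η σ₁ σ₂ : ℝ} (hdl : d + (l + 1) = k) (hd : 1 ≤ d)
    (hkp : k < p) (hR : 1 ≤ R) (hδ : 0 ≤ δ) (hlow : Decoupled p (l + 1) δ)
    (h₁ : CriticalBound p k Q R d η σ₁) (h₂ : CriticalBound p k Q R l η σ₂) :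
    CriticalBound p k (Q * k.factorial) (R * k) (l + 1) (η + δ)
      (σ₁ / (l + 1) + σ₂ * (d / (d + 1))) := by
  obtain ⟨C₀, hC₀, hlow⟩ := hlow
  obtain ⟨C₁, hC₁, h₁⟩ := h₁
  obtain ⟨C₂, hC₂, h₂⟩ := h₂
  set θ : ℝ := 1 / ((d : ℝ) + 1) with hθ
  refine ⟨C₀ * (C₁ ^ θ * C₂ ^ (1 - θ)), by positivity, fun n F a b ha hb hQb hbn hab => ?_⟩
  have hp₀ : (0 : ℝ) < p := Nat.cast_pos.2 hp.1.pos
  have hp₁ : (1 : ℝ) ≤ p := Nat.one_le_cast.2 hp.1.pos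
  obtain ⟨a', ha', hQa'⟩ := exists_mul_eq_mul_succ_of_factorial_dvd l.succ_pos
    (show l + 1 ≤ k by omega) hQb d
  have haa' : a ≤ a' := Nat.le_of_mul_le_mul_left
    (hab.trans_eq (by rw [ha', show k - (l + 1) = d by omega])) l.succ_pos
  have ha'b : a' ≤ k * b := by nlinarith
  have hRa' : R * a' ≤ n := by nlinarith
  have hRb : R * b ≤ n := by nlinarith
  have hB₁ : F.criticalMoment d b a' ≤ _ := h₁ n F b a' hb (ha.trans haa') hQa' hRa' (by
    rw [show k - d = l + 1 by omega]
    nlinarith)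
  have hB₂ : F.criticalMoment l a' b ≤ _ := h₂ n F a' b (ha.trans haa') hb
    ((dvd_mul_right Q _).trans hQb) hRb (by
      rw [show k - l = d + 1 by omega]
      nlinarith)
  obtain ⟨m, rfl⟩ := Nat.exists_eq_add_of_le haa'
  refine (F.criticalMoment_succ_le hdl hkp hd ha (by nlinarith) ha'.le (by positivity) (hlow m)
    hB₁ hB₂).trans ?_
  have hθ₁ : θ ≤ 1 := by
    rw [hθ, div_le_one (by positivity)]
    linarith [d.cast_nonneg (α := ℝ)]
  rw [rpow_interpolate hp₀ hC₁ hC₂ F.fineMoment_nonneg (by positivity) hθ₁, ← mul_assoc,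
    mul_mul_mul_comm, ← Real.rpow_add hp₀]
  gcongr
  · exact F.fineMoment_nonneg
  · exact step_exponent_le hδ l.cast_nonneg d.cast_nonneg (Nat.cast_le.2 (by nlinarith))
      (by exact_mod_cast ha')

/-- Decoupling of degree `k` with constants `O(p ^ (η n))` gives a gain of `p ^ (γ l η b)` in the
critical moments of order `l`. -/
def IsGain (p : ℕ) [Fact p.Prime] (k : ℕ) (γ : ℕ → ℝ) : Prop :=
  ∃ Q R : ℕ, 1 ≤ Q ∧ 1 ≤ R ∧ ∀ η : ℝ, 0 ≤ η → Decoupled p k η → ∀ ε : ℝ, 0 < ε → ∀ l < k,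
    CriticalBound p k Q R l (η + ε) (γ l * η)

/-- The gain available before any iteration. -/
def gainBase : ℕ → ℝ
  | 0 => 1
  | _ + 1 => 0

/-- The gain obtained from `γ` by decoupling in lower degrees and Hölder's inequality. -/
noncomputable def gainStep (k : ℕ) (γ : ℕ → ℝ) : ℕ → ℝ
  | 0 => 1
  | l + 1 => γ (k - (l + 1)) / (l + 1) + γ l * ((k - (l + 1) : ℕ) / ((k - (l + 1) : ℕ) + 1))

lemma isGain_gainBase (hk : 1 ≤ k) : IsGain p k gainBase := by
  refine ⟨1, k, le_rfl, hk, fun η hη hdec ε hε l hlk => ?_⟩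
  refine CriticalBound.mono (η := η) ?_ (by linarith)
  cases l with
  | zero => simpa [gainBase] using hdec.criticalBound_zero 1 hk
  | succ l => simpa [gainBase] using hdec.criticalBound hη l.succ_pos hlk

lemma IsGain.step (hk : 1 ≤ k) (hkp : k < p)
    (hlower : ∀ l, 1 ≤ l → l < k → ∀ ε : ℝ, 0 < ε → Decoupled p l ε) {γ : ℕ → ℝ}
    (h : IsGain p k γ) : IsGain p k (gainStep k γ) := by
  obtain ⟨Q, R, hQ, hR, h⟩ := h
  refine ⟨Q * k.factorial, R * k, Nat.mul_pos hQ k.factorial_pos, Nat.mul_pos hR hk,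
    fun η hη hdec ε hε l hlk => ?_⟩
  have hε₂ : 0 < ε / 2 := half_pos hε
  cases l with
  | zero =>
    simpa [gainStep] using
      (hdec.criticalBound_zero (Q * k.factorial) (Nat.mul_pos hR hk)).mono (by linarith)
  | succ l =>
    have hstep := CriticalBound.step (Nat.sub_add_cancel hlk.le) (Nat.sub_pos_of_lt hlk) hkp hR
      hε₂.le (hlower (l + 1) l.succ_pos hlk _ hε₂) (h η hη hdec _ hε₂ (k - (l + 1)) (by omega))
      (h η hη hdec _ hε₂ l (by omega))
    convert hstep using 1
    · ring
    · rw [gainStep]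
      ring

end Gains

/-! ### Iterating the gain -/

section Iteration

lemma sum_gain_sub_div_succ (γ : ℕ → ℝ) (K : ℕ) :
    ∑ j ∈ range K, γ (K - j) / ((j : ℝ) + 1) = ∑ j ∈ range K, γ (j + 1) / (K - j : ℕ) := by
  rw [← Finset.sum_range_reflect]
  refine Finset.sum_congr rfl fun j hj => ?_
  have hjK := mem_range.1 hj
  rw [← Nat.cast_add_one, show K - (K - 1 - j) = j + 1 by omega,
    show K - 1 - j + 1 = K - j by omega]

lemma sum_gain_mul_sub_div_succ {γ : ℕ → ℝ} (hγ : γ 0 = 1) (K : ℕ) :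
    ∑ j ∈ range K, γ j * ((K - j : ℕ) / ((K - j : ℕ) + 1 : ℝ)) =
      ∑ j ∈ range K, γ (j + 1) * ((K - (j + 1) : ℕ) / (K - j : ℕ) : ℝ) + K / (K + 1 : ℝ) := by
  set f : ℕ → ℝ := fun j => γ j * ((K - j : ℕ) / ((K - j : ℕ) + 1 : ℝ)) with hf
  have hshift : ∑ j ∈ range K, f j = ∑ j ∈ range K, f (j + 1) + f 0 := by
    rw [← Finset.sum_range_succ', Finset.sum_range_succ]
    simp [hf]
  rw [hshift]
  congr 1
  · refine Finset.sum_congr rfl fun j hj => ?_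
    have hjK := mem_range.1 hj
    simp only [hf, ← Nat.cast_add_one, show K - (j + 1) + 1 = K - j by omega]
  · simp [hf, hγ]

lemma sum_gainStep {γ : ℕ → ℝ} (hγ : γ 0 = 1) (K : ℕ) :
    ∑ j ∈ range K, gainStep (K + 1) γ (j + 1) = ∑ j ∈ range K, γ (j + 1) + K / (K + 1 : ℝ) := by
  simp only [gainStep, Nat.add_sub_add_right]
  rw [Finset.sum_add_distrib, sum_gain_sub_div_succ, sum_gain_mul_sub_div_succ hγ, ← add_assoc,
    ← Finset.sum_add_distrib]
  congr 1
  refine Finset.sum_congr rfl fun j hj => ?_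
  have hjK := mem_range.1 hj
  have hpos : (0 : ℝ) < (K - j : ℕ) := Nat.cast_pos.2 (Nat.sub_pos_of_lt hjK)
  have hsucc : ((K - (j + 1) : ℕ) : ℝ) + 1 = (K - j : ℕ) := by
    exact_mod_cast show K - (j + 1) + 1 = K - j by omega
  field_simp
  linear_combination γ (j + 1) * hsucc

variable {p : ℕ} [hp : Fact p.Prime] {k : ℕ}

lemma exists_isGain_sum_eq {K : ℕ} (hkp : K + 1 < p)
    (hlower : ∀ l, 1 ≤ l → l < K + 1 → ∀ ε : ℝ, 0 < ε → Decoupled p l ε) (i : ℕ) :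
    ∃ γ : ℕ → ℝ, IsGain p (K + 1) γ ∧ γ 0 = 1 ∧
      ∑ j ∈ range K, γ (j + 1) = i * (K / (K + 1 : ℝ)) := by
  induction i with
  | zero => exact ⟨gainBase, isGain_gainBase K.succ_pos, rfl, by simp [gainBase]⟩
  | succ i ih =>
    obtain ⟨γ, hgain, hzero, hsum⟩ := ih
    refine ⟨gainStep (K + 1) γ, hgain.step K.succ_pos hkp hlower, rfl, ?_⟩
    rw [sum_gainStep hzero, hsum]
    push_cast
    ring

lemma exists_isGain_ge (hk : 2 ≤ k) (hkp : k < p)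
    (hlower : ∀ l, 1 ≤ l → l < k → ∀ ε : ℝ, 0 < ε → Decoupled p l ε) (B : ℝ) :
    ∃ γ : ℕ → ℝ, IsGain p k γ ∧ ∃ l, 1 ≤ l ∧ l < k ∧ B ≤ γ l := by
  obtain ⟨K, rfl⟩ : ∃ K, k = K + 1 := ⟨k - 1, by omega⟩
  have hK : (1 : ℝ) ≤ K := Nat.one_le_cast.2 (by omega)
  obtain ⟨i, hi⟩ := exists_nat_gt (B * (K + 1))
  obtain ⟨γ, hgain, -, hsum⟩ := exists_isGain_sum_eq hkp hlower i
  refine ⟨γ, hgain, ?_⟩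
  by_contra! hlt
  have hle : ∑ j ∈ range K, γ (j + 1) ≤ ∑ _j ∈ range K, B :=
    Finset.sum_le_sum fun j hj =>
      (hlt (j + 1) j.succ_pos (Nat.succ_lt_succ (mem_range.1 hj))).le
  rw [hsum, sum_const, card_range, nsmul_eq_mul, mul_div_assoc', div_le_iff₀ (by positivity)] at hle
  nlinarith

lemma two_pow_mul_rpow_neg_le (hk : 2 ≤ k) {x : ℝ} (hx : 32 ≤ x) :
    2 ^ (k * (k + 1)) * x ^ (-((k : ℝ) * (k + 1) / 2 - 1)) ≤ 1 / 2 := by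
  have hk' : (2 : ℝ) ≤ k := Nat.ofNat_le_cast.2 hk
  have hx' : (2 : ℝ) ^ (5 : ℝ) ≤ x := by
    norm_num
    exact hx
  calc 2 ^ (k * (k + 1)) * x ^ (-((k : ℝ) * (k + 1) / 2 - 1))
      ≤ 2 ^ (k * (k + 1)) * ((2 : ℝ) ^ (5 : ℝ)) ^ (-((k : ℝ) * (k + 1) / 2 - 1)) := by
        refine mul_le_mul_of_nonneg_left ?_ (by positivity)
        exact Real.rpow_le_rpow_of_nonpos (by positivity) hx' (by nlinarith)
    _ = (2 : ℝ) ^ (((k * (k + 1) : ℕ) : ℝ) + 5 * (-((k : ℝ) * (k + 1) / 2 - 1))) := by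
        rw [Real.rpow_add two_pos, Real.rpow_natCast, Real.rpow_mul two_pos.le]
    _ ≤ (2 : ℝ) ^ (-1 : ℝ) := by
        refine Real.rpow_le_rpow_of_exponent_le one_le_two ?_
        push_cast
        nlinarith
    _ = 1 / 2 := by norm_num [Real.rpow_neg_one]

lemma DecBound.succ_of_pairSum_le {n e₁ e₂ : ℕ} {D D' : ℝ} (hk : 2 ≤ k) (hp32 : 32 ≤ p)
    (he : e₁ + e₂ = k * (k + 1)) (hD₀ : 0 ≤ D) (hDD' : D ≤ D')
    (hD : DecBound p k n (2 * D)) (hpair : ∀ F : CurveSum p k (n + 1),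
      (p : ℝ) ^ (2 * (k * (k + 1))) * F.pairSum e₁ e₂ 1 1 ≤ D' * F.fineMoment) :
    DecBound p k (n + 1) (2 * D') := by
  refine decBound_of_forall_curveSum fun F => ?_
  have hF := F.fineMoment_nonneg
  have hcontraction := two_pow_mul_rpow_neg_le (x := p) hk (Nat.ofNat_le_cast.2 hp32)
  calc ∑ v, ‖F.cellSum 0 0 v‖ ^ (k * (k + 1))
      ≤ 2 ^ (k * (k + 1)) * (2 * D * (p : ℝ) ^ (-((k : ℝ) * (k + 1) / 2 - 1)) * F.fineMoment) +
          (p : ℝ) ^ (2 * (k * (k + 1))) * F.pairSum e₁ e₂ 1 1 :=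
        F.sum_norm_cellSum_zero_pow_le he n.succ_pos hD
    _ = 2 ^ (k * (k + 1)) * (p : ℝ) ^ (-((k : ℝ) * (k + 1) / 2 - 1)) * (2 * D * F.fineMoment) +
          (p : ℝ) ^ (2 * (k * (k + 1))) * F.pairSum e₁ e₂ 1 1 := by ring
    _ ≤ 1 / 2 * (2 * D * F.fineMoment) + D' * F.fineMoment := by
        exact add_le_add (mul_le_mul_of_nonneg_right hcontraction (by positivity)) (hpair F)
    _ ≤ 2 * D' * F.fineMoment := by nlinarith

lemma decoupled_of_forall_pairSum_le {N₀ e₁ e₂ : ℕ} {C η : ℝ} (hk : 2 ≤ k) (hp32 : 32 ≤ p)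
    (he : e₁ + e₂ = k * (k + 1)) (hη : 0 ≤ η) (hpair : ∀ n, N₀ ≤ n → ∀ F : CurveSum p k n,
      (p : ℝ) ^ (2 * (k * (k + 1))) * F.pairSum e₁ e₂ 1 1 ≤
        C * (p : ℝ) ^ (η * n) * F.fineMoment) :
    Decoupled p k η := by
  have hp₁ : (1 : ℝ) ≤ p := Nat.one_le_cast.2 hp.1.pos
  set C' : ℝ := max ((p : ℝ) ^ (N₀ * (k * (k + 1)))) C
  have hC'₀ : 0 ≤ C' := le_trans (by positivity) (le_max_left _ _)
  have hsmall (n : ℕ) (hn : n ≤ N₀) : DecBound p k n (2 * (C' * (p : ℝ) ^ (η * n))) := by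
    refine (decBound_pow (by omega) n).mono ?_
    have hpow : (p : ℝ) ^ (n * (k * (k + 1))) ≤ C' :=
      (pow_le_pow_right₀ hp₁ (Nat.mul_le_mul_right _ hn)).trans (le_max_left _ _)
    have hgrowth : 1 ≤ (p : ℝ) ^ (η * n) := Real.one_le_rpow hp₁ (by positivity)
    nlinarith
  refine ⟨2 * C', by positivity, fun n => ?_⟩
  rw [mul_assoc]
  induction n with
  | zero => exact hsmall 0 N₀.zero_le
  | succ n ih =>
    rcases le_or_gt N₀ (n + 1) with hn | hn
    · refine ih.succ_of_pairSum_le hk hp32 he (by positivity) (by gcongr; omega) fun F => ?_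
      have hF := F.fineMoment_nonneg
      refine (hpair (n + 1) hn F).trans ?_
      gcongr
      exact le_max_right _ _
    · exact hsmall _ hn.le

lemma CurveSum.pairSum_one_one_le {n e₁ e₂ b : ℕ} (F : CurveSum p k n) (he₁ : 2 ≤ e₁)
    (he₂ : 2 ≤ e₂) (hb : 1 ≤ b) :
    F.pairSum e₁ e₂ 1 1 ≤ (p : ℝ) ^ (b * e₂) * F.mixedMoment e₁ e₂ 1 b := by
  have hp₁ : (1 : ℝ) ≤ p := Nat.one_le_cast.2 hp.1.pos
  have he₁' : (2 : ℝ) ≤ e₁ := Nat.ofNat_le_cast.2 he₁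
  have he₂' : (2 : ℝ) ≤ e₂ := Nat.ofNat_le_cast.2 he₂
  calc F.pairSum e₁ e₂ 1 1
      ≤ (p : ℝ) ^ ((b - 1) * e₂) * F.pairSum e₁ e₂ 1 b := by
        simpa [Nat.add_sub_cancel' hb] using
          F.pairSum_le_pow_mul_pairSum_add (e₁ := e₁) (a := 1) le_rfl (by omega : 1 ≤ e₂) (b - 1)
    _ ≤ (p : ℝ) ^ (b * e₂) * F.mixedMoment e₁ e₂ 1 b := by
        gcongr
        · exact F.pairSum_nonneg _ _ _ _
        · exact Nat.sub_le _ _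
        · exact le_mul_of_one_le_left (F.pairSum_nonneg _ _ _ _) (Real.one_le_rpow hp₁
            (add_nonneg (mul_nonneg (by positivity) (by linarith))
              (mul_nonneg (by positivity) (by linarith))))

lemma exists_dvd_and_mul_le_and_le_mul {Q R m n : ℕ} (hQ : 1 ≤ Q) (hR : 1 ≤ R)
    (hn : Q * R * m ≤ n) : ∃ b, Q ∣ b ∧ m ≤ b ∧ R * b ≤ n ∧ n ≤ R * (b + Q) := by
  have hQR : 0 < Q * R := Nat.mul_pos hQ hR
  have hmn : m ≤ n / (Q * R) := by rwa [Nat.le_div_iff_mul_le hQR, mul_comm]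
  have hfloor : Q * R * (n / (Q * R)) ≤ n := Nat.mul_div_le n (Q * R)
  have hceil : n < (n / (Q * R) + 1) * (Q * R) := Nat.lt_mul_of_div_lt (Nat.lt_succ_self _) hQR
  exact ⟨Q * (n / (Q * R)), dvd_mul_right _ _, by nlinarith, by nlinarith, by nlinarith⟩

lemma CriticalBound.exists_pairSum_le {Q R l : ℕ} {η σ : ℝ} (h : CriticalBound p k Q R l η σ)
    (hQ : 1 ≤ Q) (hR : 1 ≤ R) (hl : 1 ≤ l) (hlk : l < k)
    (hσ : (k * (k + 1) : ℕ) + 1 ≤ σ) :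
    ∃ C : ℝ, 0 ≤ C ∧ ∀ n, Q * R * k ≤ n → ∀ F : CurveSum p k n,
      F.pairSum (l * (l + 1)) (k * (k + 1) - l * (l + 1)) 1 1 ≤
        C * (p : ℝ) ^ ((η - 1 / R) * n) * F.fineMoment := by
  obtain ⟨C, hC₀, hC⟩ := h
  have hp₀ : (0 : ℝ) < p := Nat.cast_pos.2 hp.1.pos
  have hp₁ : (1 : ℝ) ≤ p := Nat.one_le_cast.2 hp.1.pos
  refine ⟨C * (p : ℝ) ^ (Q : ℝ), by positivity, fun n hn F => ?_⟩
  have hF := F.fineMoment_nonneg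
  obtain ⟨b, hQb, hkb, hRb, hnb⟩ := exists_dvd_and_mul_le_and_le_mul hQ hR hn
  set q := k * (k + 1)
  have hlq : l * (l + 1) + 2 ≤ q := by
    have := Nat.mul_le_mul hlk (Nat.succ_le_succ hlk)
    grind
  have hmoment := hC n F 1 b le_rfl (by omega) hQb hRb <|
    calc l * 1 ≤ b * 1 := by omega
      _ ≤ b * (k - l + 1) := Nat.mul_le_mul_left b (by omega)
  have hexponent : ((b * q : ℕ) : ℝ) + (η * n - σ * b) ≤ Q + (η - 1 / R) * n := by
    have hgain : ((q : ℝ) + 1) * b ≤ σ * b := by gcongr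
    have hscale : (1 / R : ℝ) * n ≤ b + Q := by
      rw [one_div_mul_eq_div, div_le_iff₀' (Nat.cast_pos.2 hR)]
      exact_mod_cast hnb
    push_cast
    linarith
  calc F.pairSum (l * (l + 1)) (q - l * (l + 1)) 1 1
      ≤ (p : ℝ) ^ (b * (q - l * (l + 1))) * F.criticalMoment l 1 b :=
        F.pairSum_one_one_le (by nlinarith) (by omega) (by omega)
    _ ≤ (p : ℝ) ^ (b * q) * (C * (p : ℝ) ^ (η * n - σ * b) * F.fineMoment) := by
        gcongr
        exacts [F.criticalMoment_nonneg _ _ _, Nat.sub_le _ _]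
    _ = C * (p : ℝ) ^ (((b * q : ℕ) : ℝ) + (η * n - σ * b)) * F.fineMoment := by
        rw [Real.rpow_add hp₀, Real.rpow_natCast]
        ring
    _ ≤ C * (p : ℝ) ^ (Q + (η - 1 / R) * n) * F.fineMoment := by gcongr
    _ = C * (p : ℝ) ^ (Q : ℝ) * (p : ℝ) ^ ((η - 1 / R) * n) * F.fineMoment := by
        rw [Real.rpow_add hp₀, ← mul_assoc C]

lemma exists_decoupled_sub (hk : 2 ≤ k) (hkp : k < p) (hp32 : 32 ≤ p)
    (hlower : ∀ l, 1 ≤ l → l < k → ∀ ε : ℝ, 0 < ε → Decoupled p l ε) {η₀ : ℝ} (hη₀ : 0 < η₀) :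
    ∃ δ : ℝ, 0 < δ ∧ ∀ η, η₀ ≤ η → Decoupled p k η → Decoupled p k (max (η - δ) 0) := by
  obtain ⟨γ, ⟨Q, R, hQ, hR, hgain⟩, l, hl, hlk, hγ⟩ :=
    exists_isGain_ge hk hkp hlower (((k * (k + 1) : ℕ) + 1) / η₀)
  have hp₁ : (1 : ℝ) ≤ p := Nat.one_le_cast.2 hp.1.pos
  have hR₀ : (0 : ℝ) < R := Nat.cast_pos.2 hR
  refine ⟨1 / (2 * R), by positivity, fun η hη hdec => ?_⟩
  have hγη : ((k * (k + 1) : ℕ) : ℝ) + 1 ≤ γ l * η := by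
    have hγ₀ : 0 ≤ γ l := le_trans (by positivity) hγ
    rw [div_le_iff₀ hη₀] at hγ
    exact hγ.trans (mul_le_mul_of_nonneg_left hη hγ₀)
  obtain ⟨C, hC₀, hC⟩ := (hgain η (hη₀.le.trans hη) hdec (1 / (2 * R)) (by positivity) l
    hlk).exists_pairSum_le hQ hR hl hlk hγη
  refine decoupled_of_forall_pairSum_le (N₀ := Q * R * k)
    (C := (p : ℝ) ^ (2 * (k * (k + 1))) * C) hk hp32
    (Nat.add_sub_cancel' (Nat.mul_le_mul hlk.le (Nat.succ_le_succ hlk.le))) (le_max_right _ _)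
    fun n hn F => ?_
  have hF := F.fineMoment_nonneg
  rw [mul_assoc _ C, mul_assoc _ (C * _)]
  gcongr
  refine (hC n hn F).trans ?_
  gcongr
  refine le_trans (le_of_eq ?_) (le_max_left _ _)
  field_simp
  ring

theorem decoupled_of_pos (hk : 1 ≤ k) (hkp : k < p) (hp32 : 32 ≤ p) {ε : ℝ} (hε : 0 < ε) :
    Decoupled p k ε := by
  induction k using Nat.strong_induction_on generalizing ε with
  | _ k ih =>
  have hp₁ : (1 : ℝ) ≤ p := Nat.one_le_cast.2 hp.1.pos
  rcases hk.eq_or_lt with rfl | hk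
  · refine ⟨1, zero_le_one, fun n => (decBound_one n).mono ?_⟩
    rw [one_mul]
    exact Real.one_le_rpow hp₁ (by positivity)
  obtain ⟨δ, hδ, himprove⟩ := exists_decoupled_sub hk hkp hp32
    (fun l hl hlk ε hε => ih l hlk hl (hlk.trans hkp) hε) hε
  set q : ℝ := ((k * (k + 1) : ℕ) : ℝ)
  have hiterate (i : ℕ) : Decoupled p k (max (q - i * δ) ε) := by
    induction i with
    | zero =>
      refine Decoupled.mono ⟨1, zero_le_one, fun n => (decBound_pow (by omega) n).mono ?_⟩
        (le_max_left _ _)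
      rw [one_mul, Nat.cast_zero, zero_mul, sub_zero, ← Nat.cast_mul, Real.rpow_natCast, mul_comm n]
    | succ i ih =>
      refine (himprove _ (le_max_right _ _) ih).mono ?_
      push_cast
      refine max_le ?_ (hε.le.trans (le_max_right _ _))
      rw [← max_sub_sub_right]
      exact max_le_max (by linarith) (by linarith)
  obtain ⟨i, hi⟩ := exists_nat_gt (q / δ)
  rw [div_lt_iff₀ hδ] at hi
  exact (hiterate i).mono (max_le (by linarith) le_rfl)

end Iteration

/-! ### The mean value of the exponential sum along the moment curve -/

section MeanValue

/-- The first `k` power sums of the entries of `a`, modulo `N`. -/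
def powerSums (N k : ℕ) {u : ℕ} (a : Fin u → ℕ) : Fin k → ZMod N :=
  fun j => ∑ i, (a i : ZMod N) ^ ((j : ℕ) + 1)

lemma Jcount_le_card_filter_powerSums {B u : ℕ} {X : ℝ} (hX : X < B) (N k : ℕ) :
    Jcount u k X ≤ #{t ∈ (Fintype.piFinset fun _ : Fin u => range B) ×ˢ
      (Fintype.piFinset fun _ : Fin u => range B) | powerSums N k t.1 = powerSums N k t.2} := by
  have hmem {z : Fin u → ℤ} (hz : ∀ i, 1 ≤ z i ∧ (z i : ℝ) ≤ X) :
      (fun i => (z i).toNat) ∈ Fintype.piFinset fun _ : Fin u => range B := by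
    refine Fintype.mem_piFinset.2 fun i => mem_range.2 ?_
    have hzB : (z i : ℝ) < (B : ℤ) := (hz i).2.trans_lt (by exact_mod_cast hX)
    have := (hz i).1
    have := Int.cast_lt.1 hzB
    omega
  have hpower {z : Fin u → ℤ} (hz : ∀ i, 1 ≤ z i ∧ (z i : ℝ) ≤ X) (j : Fin k) :
      powerSums N k (fun i => (z i).toNat) j = ((∑ i, z i ^ ((j : ℕ) + 1) : ℤ) : ZMod N) := by
    push_cast
    refine Finset.sum_congr rfl fun i _ => ?_
    rw [← Int.cast_natCast, Int.toNat_of_nonneg (zero_le_one.trans (hz i).1)]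
  have hinj {z z' : Fin u → ℤ} (hz : ∀ i, 1 ≤ z i ∧ (z i : ℝ) ≤ X)
      (hz' : ∀ i, 1 ≤ z' i ∧ (z' i : ℝ) ≤ X)
      (h : (fun i => (z i).toNat) = fun i => (z' i).toNat) : z = z' := by
    funext i
    have := congrFun h i
    have := (hz i).1
    have := (hz' i).1
    omega
  rw [Jcount, ← Set.ncard_coe_finset]
  refine Set.ncard_le_ncard_of_injOn
    (fun xy => (fun i => (xy.1 i).toNat, fun i => (xy.2 i).toNat)) ?_ ?_ (Finset.finite_toSet _)
  · rintro ⟨x, y⟩ ⟨hx, hy, hxy⟩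
    refine mem_coe.2 (mem_filter.2 ⟨mem_product.2 ⟨hmem hx, hmem hy⟩, funext fun j => ?_⟩)
    have hsum := hxy ((j : ℕ) + 1) (mem_Icc.2 ⟨by omega, j.2⟩)
    rw [Finset.sum_sub_distrib, sub_eq_zero] at hsum
    rw [hpower hx, hpower hy, hsum]
  · rintro ⟨x, y⟩ ⟨hx, hy, -⟩ ⟨x', y'⟩ ⟨hx', hy', -⟩ heq
    obtain ⟨hx_eq, hy_eq⟩ := Prod.mk.inj heq
    exact Prod.ext (hinj hx hx' hx_eq) (hinj hy hy' hy_eq)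

variable {p : ℕ} [hp : Fact p.Prime]

/-- The moment curve. -/
noncomputable def momentCurve (p : ℕ) [Fact p.Prime] (k : ℕ) (j : Fin k) : ℤ_[p][X] :=
  X ^ ((j : ℕ) + 1)

lemma isMomentLike_momentCurve (k : ℕ) : IsMomentLike p (momentCurve p k) :=
  fun j => ⟨0, by simp [momentCurve]⟩

/-- The Vinogradov exponential sum over `0 ≤ i < p ^ n`. -/
noncomputable def weylSum (p : ℕ) [Fact p.Prime] (k n : ℕ) (c : Freq p k (k * n)) : ℂ :=
  expSum (momentCurve p k) (k * n) (fun i : ℕ => (i : ℤ_[p])) (fun _ => 1) (range (p ^ n)) c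

lemma norm_expSum_one_le_card {k : ℕ} (φ : Fin k → ℤ_[p][X]) (M : ℕ) (x : ℕ → ℤ_[p])
    (S : Finset ℕ) (c : Freq p k M) : ‖expSum φ M x (fun _ => 1) S c‖ ≤ #S := by
  refine (norm_sum_le _ _).trans ?_
  simp [norm_phase]

lemma norm_weylSum_le (k n : ℕ) (c : Freq p k (k * n)) : ‖weylSum p k n c‖ ≤ (p : ℝ) ^ n :=
  (norm_expSum_one_le_card _ _ _ _ _).trans (by simp)

lemma card_cell_range_pow_le_one {n J : ℕ} (hJ : J ∈ range (p ^ n)) :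
    #(cell p (range (p ^ n)) (fun i : ℕ => (i : ℤ_[p])) n J) ≤ 1 := by
  refine Finset.card_le_one_iff_subset_singleton.2 ⟨J, fun i hi => mem_singleton.2 ?_⟩
  obtain ⟨hi, hclass⟩ := mem_cell.1 hi
  exact (inClass_natCast.1 hclass).eq_of_lt_of_lt (mem_range.1 hi) (mem_range.1 hJ)

lemma sum_norm_weylSum_pow_le {k n : ℕ} {D : ℝ} (hD₀ : 0 ≤ D) (hD : DecBound p k n D) :
    ∑ c, ‖weylSum p k n c‖ ^ (k * (k + 1)) ≤
      D * (p : ℝ) ^ ((n : ℝ) * ((k : ℝ) * (k + 1) / 2)) * Fintype.card (Freq p k (k * n)) := by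
  have hp₀ : (0 : ℝ) < p := Nat.cast_pos.2 hp.1.pos
  set γ : ℝ := (k : ℝ) * (k + 1) / 2 - 1 with hγ
  have hcell : ∑ J ∈ range (p ^ n), ∑ c, ‖expSum (momentCurve p k) (k * n)
      (fun i : ℕ => (i : ℤ_[p])) (fun _ => 1)
      (cell p (range (p ^ n)) (fun i => (i : ℤ_[p])) n J) c‖ ^ (k * (k + 1)) ≤
        ∑ J ∈ range (p ^ n), ∑ c : Freq p k (k * n), 1 :=
    Finset.sum_le_sum fun J hJ => Finset.sum_le_sum fun c _ => pow_le_one₀ (norm_nonneg _)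
      ((norm_expSum_one_le_card _ _ _ _ _).trans
        (Nat.cast_le_one.2 (card_cell_range_pow_le_one hJ)))
  calc ∑ c, ‖weylSum p k n c‖ ^ (k * (k + 1))
      ≤ D * (p : ℝ) ^ ((n : ℝ) * γ) * ∑ J ∈ range (p ^ n), ∑ c : Freq p k (k * n), 1 :=
        (hD _ (isMomentLike_momentCurve k) _ _ _).trans
          (mul_le_mul_of_nonneg_left hcell (by positivity))
    _ = D * (p : ℝ) ^ ((n : ℝ) * ((k : ℝ) * (k + 1) / 2)) * Fintype.card (Freq p k (k * n)) := by
        rw [show (n : ℝ) * ((k : ℝ) * (k + 1) / 2) = n * γ + n by rw [hγ]; ring, Real.rpow_add hp₀,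
          Real.rpow_natCast]
        simp
        ring

lemma phase_momentCurve (k M i : ℕ) (c : Freq p k M) :
    phase (momentCurve p k) M (i : ℤ_[p]) c =
      ZMod.stdAddChar (∑ j, c j * (i : ZMod (p ^ M)) ^ ((j : ℕ) + 1)) := by
  simp [phase, momentCurve]

lemma weylSum_pow (k n u : ℕ) (c : Freq p k (k * n)) :
    weylSum p k n c ^ u = ∑ a ∈ Fintype.piFinset fun _ : Fin u => range (p ^ n),
      ZMod.stdAddChar (∑ j, c j * powerSums (p ^ (k * n)) k a j) := by
  simp only [weylSum, expSum, one_mul, phase_momentCurve]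
  rw [← Fin.prod_const, Finset.prod_univ_sum]
  refine Finset.sum_congr rfl fun a _ => ?_
  simp only [← addChar_map_sum, powerSums, Finset.mul_sum]
  rw [Finset.sum_comm]

lemma sum_norm_weylSum_pow_two_mul (k n u : ℕ) :
    ∑ c, ‖weylSum p k n c‖ ^ (2 * u) =
      #{t ∈ (Fintype.piFinset fun _ : Fin u => range (p ^ n)) ×ˢ
        (Fintype.piFinset fun _ : Fin u => range (p ^ n)) |
          powerSums (p ^ (k * n)) k t.1 = powerSums (p ^ (k * n)) k t.2} *
        Fintype.card (Freq p k (k * n)) := by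
  set T := Fintype.piFinset fun _ : Fin u => range (p ^ n)
  let δ (t : (Fin u → ℕ) × (Fin u → ℕ)) : Fin k → ZMod (p ^ (k * n)) :=
    powerSums (p ^ (k * n)) k t.1 - powerSums (p ^ (k * n)) k t.2
  have hexpand (c : Freq p k (k * n)) : ((‖weylSum p k n c‖ ^ (2 * u) : ℝ) : ℂ) =
      ∑ t ∈ T ×ˢ T, ZMod.stdAddChar (∑ j, c j * δ t j) := by
    rw [mul_comm 2 u, pow_mul, ← norm_pow, Complex.ofReal_pow, ← Complex.mul_conj', weylSum_pow,
      map_sum, Finset.sum_mul_sum, Finset.sum_product]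
    simp only [stdAddChar_mul_conj, δ, Pi.sub_apply, mul_sub, Finset.sum_sub_distrib, T]
  rw [← Complex.ofReal_inj, Complex.ofReal_sum]
  simp only [hexpand]
  rw [Finset.sum_comm]
  simp only [sum_addChar_sum_mul (ZMod.isPrimitive_stdAddChar _), δ, sub_eq_zero]
  rw [← Finset.sum_filter, Finset.sum_const, nsmul_eq_mul]
  push_cast
  rfl

lemma Jcount_mul_card_le {k n u : ℕ} {X : ℝ} (hX : X < (p : ℝ) ^ n) :
    (Jcount u k X : ℝ) * Fintype.card (Freq p k (k * n)) ≤ ∑ c, ‖weylSum p k n c‖ ^ (2 * u) := by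
  rw [sum_norm_weylSum_pow_two_mul]
  gcongr
  exact Jcount_le_card_filter_powerSums (by exact_mod_cast hX) _ _

end MeanValue

/-! ### Vinogradov's mean value theorem -/

section Asymptotics

lemma pow_le_pow_mul_one_add {t A : ℝ} (ht : 0 ≤ t) (hA : 0 < A) {e q : ℕ} (heq : e ≤ q) :
    t ^ e ≤ A ^ e * (1 + (t / A) ^ q) := by
  have hratio : 0 ≤ t / A := by positivity
  rw [show t ^ e = A ^ e * (t / A) ^ e by rw [← mul_pow, mul_div_cancel₀ _ hA.ne']]
  refine mul_le_mul_of_nonneg_left ?_ (by positivity)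
  rcases le_total (t / A) 1 with hle | hge
  · linarith [pow_le_one₀ hratio hle (n := e), pow_nonneg hratio q]
  · linarith [pow_le_pow_right₀ hge heq]

variable {p : ℕ} [hp : Fact p.Prime] {k n u : ℕ} {D : ℝ}

lemma sum_norm_weylSum_pow_le_of_critical_le (hu : k * (k + 1) ≤ 2 * u) (hD₀ : 0 ≤ D)
    (hD : DecBound p k n D) :
    ∑ c, ‖weylSum p k n c‖ ^ (2 * u) ≤
      D * (p : ℝ) ^ ((2 * u - (k : ℝ) * (k + 1) / 2) * n) * Fintype.card (Freq p k (k * n)) := by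
  have hp₀ : (0 : ℝ) < p := Nat.cast_pos.2 hp.1.pos
  calc ∑ c, ‖weylSum p k n c‖ ^ (2 * u)
      ≤ ∑ c, ((p : ℝ) ^ n) ^ (2 * u - k * (k + 1)) * ‖weylSum p k n c‖ ^ (k * (k + 1)) := by
        refine Finset.sum_le_sum fun c _ => ?_
        rw [← Nat.sub_add_cancel hu, pow_add, Nat.add_sub_cancel]
        gcongr
        exact norm_weylSum_le k n c
    _ ≤ ((p : ℝ) ^ n) ^ (2 * u - k * (k + 1)) *
          (D * (p : ℝ) ^ ((n : ℝ) * ((k : ℝ) * (k + 1) / 2)) *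
            Fintype.card (Freq p k (k * n))) := by
        rw [← Finset.mul_sum]
        gcongr
        exact sum_norm_weylSum_pow_le hD₀ hD
    _ = D * (p : ℝ) ^ ((2 * u - (k : ℝ) * (k + 1) / 2) * n) *
          Fintype.card (Freq p k (k * n)) := by
        rw [show (2 * u - (k : ℝ) * (k + 1) / 2) * n =
            n * (2 * u - k * (k + 1)) + n * ((k : ℝ) * (k + 1) / 2) by ring,
          Real.rpow_add hp₀, ← pow_mul, ← Real.rpow_natCast]
        push_cast [Nat.cast_sub hu]
        ring

lemma sum_norm_weylSum_pow_le_of_le_critical (hu : 2 * u ≤ k * (k + 1)) (hD₀ : 0 ≤ D)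
    (hD : DecBound p k n D) :
    ∑ c, ‖weylSum p k n c‖ ^ (2 * u) ≤
      (1 + D) * (p : ℝ) ^ ((u : ℝ) * n) * Fintype.card (Freq p k (k * n)) := by
  have hp₀ : (0 : ℝ) < p := Nat.cast_pos.2 hp.1.pos
  set A : ℝ := (p : ℝ) ^ ((n : ℝ) / 2) with hA
  have hA₀ : 0 < A := by positivity
  have hApow (e : ℕ) : A ^ e = (p : ℝ) ^ ((n : ℝ) / 2 * e) := by
    rw [hA, ← Real.rpow_natCast, ← Real.rpow_mul hp₀.le]
  have hcritical := sum_norm_weylSum_pow_le hD₀ hD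
  rw [show (n : ℝ) * ((k : ℝ) * (k + 1) / 2) = n / 2 * (k * (k + 1) : ℕ) by push_cast; ring,
    ← hApow] at hcritical
  calc ∑ c, ‖weylSum p k n c‖ ^ (2 * u)
      ≤ ∑ c, A ^ (2 * u) * (1 + (‖weylSum p k n c‖ / A) ^ (k * (k + 1))) :=
        Finset.sum_le_sum fun c _ => pow_le_pow_mul_one_add (norm_nonneg _) hA₀ hu
    _ = A ^ (2 * u) * (Fintype.card (Freq p k (k * n)) +
          (∑ c, ‖weylSum p k n c‖ ^ (k * (k + 1))) / A ^ (k * (k + 1))) := by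
        rw [← Finset.mul_sum, Finset.sum_add_distrib, Finset.sum_div]
        simp [div_pow]
    _ ≤ A ^ (2 * u) * (Fintype.card (Freq p k (k * n)) +
          D * A ^ (k * (k + 1)) * Fintype.card (Freq p k (k * n)) / A ^ (k * (k + 1))) := by
        gcongr
    _ = (1 + D) * (p : ℝ) ^ ((u : ℝ) * n) * Fintype.card (Freq p k (k * n)) := by
        rw [show (u : ℝ) * n = n / 2 * (2 * u : ℕ) by push_cast; ring, ← hApow]
        field_simp

lemma sum_norm_weylSum_pow_two_mul_le {C ε E : ℝ} (hC : 1 ≤ C) (hε : 0 ≤ ε)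
    (hD : DecBound p k n (C * (p : ℝ) ^ (ε * n))) (hE₁ : (u : ℝ) ≤ E)
    (hE₂ : 2 * (u : ℝ) - k * (k + 1) / 2 ≤ E) :
    ∑ c, ‖weylSum p k n c‖ ^ (2 * u) ≤
      2 * C * (p : ℝ) ^ ((E + ε) * n) * Fintype.card (Freq p k (k * n)) := by
  have hp₀ : (0 : ℝ) < p := Nat.cast_pos.2 hp.1.pos
  have hp₁ : (1 : ℝ) ≤ p := Nat.one_le_cast.2 hp.1.pos
  set D : ℝ := C * (p : ℝ) ^ (ε * n)
  have hD₁ : 1 ≤ D := one_le_mul_of_one_le_of_one_le hC (Real.one_le_rpow hp₁ (by positivity))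
  have hD₀ : 0 ≤ D := zero_le_one.trans hD₁
  calc ∑ c, ‖weylSum p k n c‖ ^ (2 * u)
      ≤ 2 * D * (p : ℝ) ^ (E * n) * Fintype.card (Freq p k (k * n)) := by
        rcases le_total (k * (k + 1)) (2 * u) with hu | hu
        · refine (sum_norm_weylSum_pow_le_of_critical_le hu hD₀ hD).trans ?_
          gcongr
          linarith
        · refine (sum_norm_weylSum_pow_le_of_le_critical hu hD₀ hD).trans ?_
          gcongr
          linarith
    _ = 2 * C * (p : ℝ) ^ ((E + ε) * n) * Fintype.card (Freq p k (k * n)) := by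
        rw [add_mul, Real.rpow_add hp₀]
        ring

theorem exists_Jcount_le (hk : 1 ≤ k) {E ε : ℝ} (hE₁ : (u : ℝ) ≤ E)
    (hE₂ : 2 * (u : ℝ) - k * (k + 1) / 2 ≤ E) (hε : 0 < ε) :
    ∃ C : ℝ, 1 ≤ C ∧ ∀ X : ℝ, 1 ≤ X → (Jcount u k X : ℝ) ≤ C * X ^ (E + ε) := by
  obtain ⟨p, hpk, hprime⟩ := Nat.exists_infinite_primes (k + 32)
  have : Fact p.Prime := ⟨hprime⟩
  have hp₁ : (1 : ℝ) < p := Nat.one_lt_cast.2 hprime.one_lt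
  have hE₀ : 0 ≤ E := le_trans (by positivity) hE₁
  obtain ⟨C, -, hC⟩ := decoupled_of_pos (p := p) hk (by omega) (by omega) hε
  have hC₁ : 1 ≤ max C 1 := le_max_right _ _
  refine ⟨2 * max C 1 * (p : ℝ) ^ (E + ε), ?_, fun X hX => ?_⟩
  · exact one_le_mul_of_one_le_of_one_le (by linarith) (Real.one_le_rpow hp₁.le (by positivity))
  obtain ⟨m, hmX, hXm⟩ := exists_nat_pow_near hX hp₁
  have hcard : (0 : ℝ) < Fintype.card (Freq p k (k * (m + 1))) :=
    Nat.cast_pos.2 Fintype.card_pos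
  have hdec : DecBound p k (m + 1) (max C 1 * (p : ℝ) ^ (ε * (m + 1 : ℕ))) :=
    (hC (m + 1)).mono (by gcongr; exact le_max_left _ _)
  calc (Jcount u k X : ℝ)
      ≤ 2 * max C 1 * (p : ℝ) ^ ((E + ε) * (m + 1 : ℕ)) :=
        le_of_mul_le_mul_right ((Jcount_mul_card_le hXm).trans
          (sum_norm_weylSum_pow_two_mul_le hC₁ hε.le hdec hE₁ hE₂)) hcard
    _ = 2 * max C 1 * (p : ℝ) ^ (E + ε) * ((p : ℝ) ^ m) ^ (E + ε) := by
        rw [mul_comm (E + ε), Real.rpow_natCast_mul (by positivity), pow_succ',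
          Real.mul_rpow (by positivity) (by positivity), ← mul_assoc]
    _ ≤ 2 * max C 1 * (p : ℝ) ^ (E + ε) * X ^ (E + ε) := by gcongr

open Filter in
lemma limsup_log_div_log_le {f : ℝ → ℕ} {E : ℝ} (hE : 0 ≤ E)
    (hf : ∀ ε > 0, ∃ C : ℝ, 1 ≤ C ∧ ∀ X : ℝ, 1 ≤ X → (f X : ℝ) ≤ C * X ^ (E + ε)) :
    limsup (fun X : ℝ => Real.log (f X) / Real.log X) atTop ≤ E := by
  have hcobounded : IsCoboundedUnder (· ≤ ·) atTop
      (fun X : ℝ => Real.log (f X) / Real.log X) := by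
    refine IsBoundedUnder.isCoboundedUnder_le ⟨0, ?_⟩
    rw [eventually_map]
    filter_upwards [eventually_ge_atTop 1] with X hX
    exact div_nonneg (Real.log_natCast_nonneg _) (Real.log_nonneg hX)
  refine le_of_forall_pos_le_add fun ε hε => ?_
  obtain ⟨C, hC₁, hC⟩ := hf (ε / 2) (half_pos hε)
  refine limsup_le_of_le hcobounded ?_
  filter_upwards [eventually_gt_atTop 1,
    Real.tendsto_log_atTop.eventually_ge_atTop (2 * Real.log C / ε)] with X hX₁ hX
  have hlogX : 0 < Real.log X := Real.log_pos hX₁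
  have hlogC : 0 ≤ Real.log C := Real.log_nonneg hC₁
  have hX₀ : 0 < X := zero_lt_one.trans hX₁
  have hlogf : Real.log (f X) ≤ Real.log C + (E + ε / 2) * Real.log X := by
    rcases Nat.eq_zero_or_pos (f X) with hzero | hpos
    · rw [hzero, Nat.cast_zero, Real.log_zero]
      positivity
    · refine (Real.log_le_log (Nat.cast_pos.2 hpos) (hC X hX₁.le)).trans (le_of_eq ?_)
      rw [Real.log_mul (by positivity) (by positivity), Real.log_rpow hX₀]
  rw [div_le_iff₀ hε] at hX
  rw [div_le_iff₀ hlogX]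
  linarith

theorem limsup_log_Jcount_le (hk : 1 ≤ k) {E : ℝ} (hE₁ : (u : ℝ) ≤ E)
    (hE₂ : 2 * (u : ℝ) - k * (k + 1) / 2 ≤ E) :
    Filter.limsup (fun X : ℝ => Real.log (Jcount u k X) / Real.log X) Filter.atTop ≤ E :=
  limsup_log_div_log_le ((Nat.cast_nonneg u).trans hE₁) fun _ => exists_Jcount_le hk hE₁ hE₂

end Asymptotics

section Exponents

variable {k r t : ℕ}

lemma kappa_le_mul (ht : 2 ≤ t) (htk : t ≤ k) (hrt : k ≤ r + t) :
    kappa k r t ≤ (r : ℝ) * (t + 1) := by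
  obtain ⟨a, ha⟩ := Nat.exists_eq_add_of_le hrt
  have ht' : (2 : ℝ) ≤ t := Nat.ofNat_le_cast.2 ht
  have haR : (r : ℝ) + t = k + a := by exact_mod_cast ha
  rw [kappa, show (t : ℝ) + r - k = a by linarith]
  rcases Nat.eq_zero_or_pos a with rfl | ha₁
  · simp
  have ha₁' : (1 : ℝ) ≤ a := Nat.one_le_cast.2 ha₁
  have hr : (1 : ℝ) ≤ r := Nat.one_le_cast.2 (by omega)
  have hfrac : 0 ≤ (2 * (r : ℝ) - 2) / (t - 1) := div_nonneg (by linarith) (by linarith)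
  have hloss : 0 ≤ 1 / 2 * (a : ℝ) * (a - 1 + (2 * (r : ℝ) - 2) / (t - 1)) :=
    mul_nonneg (by positivity) (by linarith)
  linarith

lemma mul_add_one_nonneg (z : ℤ) : 0 ≤ (z : ℝ) * (z + 1) := by
  have hz : 0 ≤ z * (z + 1) := by
    rcases le_or_gt 0 z with hz | hz
    · positivity
    · exact mul_nonneg_of_nonpos_of_nonpos hz.le (by omega)
  exact_mod_cast hz

/- With `m = k - t` and `a = r + t - k`, so that `r = a + m`, twice the difference of the two sides
is `m (m - 1) + (2 a m + (t + 1) (a - t) (a - t + 1)) / (t - 1)`. -/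
lemma kappa_le_critical (ht : 2 ≤ t) (htk : t ≤ k) (hrt : k ≤ r + t) :
    kappa k r t ≤ (k : ℝ) * (k + 1) / 2 := by
  obtain ⟨m, rfl⟩ := Nat.exists_eq_add_of_le htk
  obtain ⟨a, ha⟩ := Nat.exists_eq_add_of_le hrt
  obtain rfl : r = m + a := by omega
  have ht₁ : (0 : ℝ) < t - 1 := by
    have : (2 : ℝ) ≤ t := Nat.ofNat_le_cast.2 ht
    linarith
  have hm : 0 ≤ (m : ℝ) * (m - 1) := by simpa [mul_comm] using mul_add_one_nonneg (m - 1)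
  have hat : 0 ≤ ((a : ℝ) - t) * (a - t + 1) := by simpa using mul_add_one_nonneg (a - t)
  have hdiff : ((t + m : ℕ) : ℝ) * ((t + m : ℕ) + 1) / 2 - kappa (t + m) (m + a) t =
      (m * (m - 1) + (2 * a * m + (t + 1) * ((a - t) * (a - t + 1))) / (t - 1)) / 2 := by
    rw [kappa]
    push_cast
    field_simp
    ring
  have : 0 ≤ (m * (m - 1) + (2 * a * m + (t + 1) * ((a - t) * (a - t + 1))) / (t - 1)) / (2 : ℝ) :=
    by positivity
  linarith

end Exponents

end Vinogradov

theorem limsup_J_le_general (k r t : ℕ) (ht : 2 ≤ t) (htk : t ≤ k) (hrt : k ≤ r + t) :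
    Filter.limsup
        (fun X : ℝ => Real.log ((Jcount (r * (t + 1)) k X : ℝ)) / Real.log X)
        Filter.atTop
      ≤ 2 * ((r * (t + 1) : ℕ) : ℝ) - kappa k r t := by
  refine Vinogradov.limsup_log_Jcount_le (by omega) ?_ ?_
  · have := Vinogradov.kappa_le_mul ht htk hrt
    push_cast
    linarith
  · linarith [Vinogradov.kappa_le_critical ht htk hrt]

/-- Lemma 7.2 (in the form concluding the proof of Theorem 1.3): with s = rt,
limsup_{X → ∞} log J_{s+r,k}(X) / log X ≤ 2(s+r) - κ. -/
theorem limsup_J_le (k r t : ℕ) (hk : 2 ≤ k)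
    (ht1 : max 2 (((k : ℝ) - 1) / 2) ≤ (t : ℝ)) (ht2 : t ≤ k)
    (hr1 : 1 ≤ r) (hr2 : r ≤ k) (hrt : k ≤ r + t) :
    Filter.limsup
        (fun X : ℝ => Real.log ((Jcount (r * (t + 1)) k X : ℝ)) / Real.log X)
        Filter.atTop
      ≤ 2 * ((r * (t + 1) : ℕ) : ℝ) - kappa k r t :=
  limsup_J_le_general k r t (by exact_mod_cast (le_max_left _ _).trans ht1) ht2 hrt
end

section
/- Let k ≥ 3 and s be natural numbers, and let c₀ > 0 and ε > 0. There exists a constant C = C(s,k,ε,c₀) such that the following holds whenever X is sufficiently large in terms of s, k, ε, c₀. Let Q be a real number with 1 < Q ≤ X^{(k−2)/(k−1)}, and let 𝒬 ⊆ (2^{−k}Q, Q] be a set of natural numbers with card(𝒬) ≥ c₀·Q·(log Q)^{−k} such that every q ∈ 𝒬 is coprime to k. Then Θ_{s,k}(𝒬) ≤ C·(X/Q)^{2s − (k²−k+2)/2 + ε}·((X/Q)^{η(s,k)−1} + (X/Q)^{η(s,k−1)}). -/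
/-- η(s,k): the least positive η such that, for each ε > 0,
J_{s,k}(X) ≤ C X^{2s - k(k+1)/2 + η + ε} for all sufficiently large X. -/
noncomputable def etaExp (s k : ℕ) : ℝ :=
  sInf {η : ℝ | 0 < η ∧ ∀ ε : ℝ, 0 < ε → ∃ C X₀ : ℝ, 0 < C ∧ ∀ X : ℝ, X₀ ≤ X →
    (Jcount s k X : ℝ) ≤ C * X ^ (2*(s:ℝ) - (k:ℝ)*((k:ℝ)+1)/2 + η + ε)}

/-- I_{s,m}(X;q,b): the number of integral solutions of the system (8.1), i.e. of
∑_i ((q x_i + b)^k - (q y_i + b)^k) = 0 and ∑_i (x_i^j - y_i^j) = 0 (1 ≤ j ≤ m-1),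
with 0 ≤ x_i, y_i ≤ X/q. -/
noncomputable def Icount (s k m : ℕ) (X : ℝ) (q : ℕ) (b : ℤ) : ℕ :=
  Set.ncard {xy : (Fin s → ℤ) × (Fin s → ℤ) |
    (∀ i, 0 ≤ xy.1 i ∧ (xy.1 i : ℝ) ≤ X / q) ∧
    (∀ i, 0 ≤ xy.2 i ∧ (xy.2 i : ℝ) ≤ X / q) ∧
    (∑ i, (((q:ℤ) * xy.1 i + b)^k - ((q:ℤ) * xy.2 i + b)^k) = 0) ∧
    ∀ j ∈ Finset.Icc 1 (m-1), ∑ i, ((xy.1 i)^j - (xy.2 i)^j) = 0}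

/-- Θ_{s,k}(𝒬) = ∑_{q ∈ 𝒬} max_{(b,q)=1} I_{s,k-1}(X;q,b). -/
noncomputable def ThetaSum (s k : ℕ) (X : ℝ) (Q : Finset ℕ) : ℕ :=
  ∑ q ∈ Q, sSup {v : ℕ | ∃ b : ℤ, IsCoprime b (q:ℤ) ∧ v = Icount s k (k-1) X q b}

/-!
Write `k = n + 1`, `P = X / Q` and `Δ j = ∑ i, (x i ^ j - y i ^ j)`. For a solution `(x, y)` of
the system defining `Icount`, `Δ j = 0` for `j < n`, and the equation of degree `k` together with
the coprimality of `q` to `b` and `k` gives `Δ n = q * h` and `Δ k = -k * b * h` for an integer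
`h` of size `O (P ^ n / Q)`. Translating `x` and `y` by `t - u`, where `0 ≤ t, u < T` and `T` is
of order `P`, leaves `Δ j` unchanged for `j ≤ n` and adds `k * q * h * (t - u)` to `Δ k`. Pairing
`x` with `t` and `y` with `u`, all translates of the solutions belonging to fixed `q` and `h`
satisfy one and the same inhomogeneous system, whose solutions, by Cauchy's inequality, are at
most as many as those of the homogeneous system `Δ j = 0` for `j ≤ n`,
`Δ k = k * q * h * (t - u)`. Here the dependence on `b` has disappeared, and it remains to sum
over `q` and `h`. If `Δ k = 0`, then `h = 0` or `t = u`, which produces the term with `η(s, k)`.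
Otherwise `q` and `h` divide `Δ k`, so the divisor bound leaves `O (P ^ ε)` choices for them; this
produces the term with `η(s, k - 1)`.
-/

section DivisorBound

open Finset

theorem add_one_le_mul_pow_rpow {p δ : ℝ} (hp : 2 ≤ p) (hδ : 0 < δ) (a : ℕ) :
    (a : ℝ) + 1 ≤ (1 + 1 / (δ * Real.log 2)) * (p ^ a) ^ δ := by
  have : 0 < δ * Real.log 2 := mul_pos hδ (Real.log_pos one_lt_two)
  have hexp : 1 + a * (δ * Real.log 2) ≤ (p ^ a) ^ δ :=
    calc 1 + a * (δ * Real.log 2) ≤ Real.exp (a * (δ * Real.log 2)) := by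
          linarith [Real.add_one_le_exp (a * (δ * Real.log 2))]
      _ = ((2 : ℝ) ^ a) ^ δ := by
          rw [Real.rpow_def_of_pos (by positivity), Real.log_pow]
          ring_nf
      _ ≤ (p ^ a) ^ δ := by gcongr
  calc (a : ℝ) + 1 ≤ a + 1 + (1 / (δ * Real.log 2) + a * (δ * Real.log 2)) :=
        le_add_of_nonneg_right (by positivity)
    _ = (1 + 1 / (δ * Real.log 2)) * (1 + a * (δ * Real.log 2)) := by field_simp; ring
    _ ≤ (1 + 1 / (δ * Real.log 2)) * (p ^ a) ^ δ := by gcongr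

theorem add_one_le_pow_rpow {p δ : ℝ} (hδ : 0 < δ) (hp : 2 ^ (1 / δ) ≤ p) (a : ℕ) :
    (a : ℝ) + 1 ≤ (p ^ a) ^ δ :=
  calc (a : ℝ) + 1 ≤ 2 ^ a := by exact_mod_cast a.lt_two_pow_self
    _ = (((2 : ℝ) ^ (1 / δ)) ^ a) ^ δ := by
        rw [← Real.rpow_pow_comm (by positivity), ← Real.rpow_mul two_pos.le,
          one_div_mul_cancel hδ.ne', Real.rpow_one]
    _ ≤ (p ^ a) ^ δ := by gcongr

theorem exists_card_divisors_le_rpow {δ : ℝ} (hδ : 0 < δ) :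
    ∃ C : ℝ, 0 < C ∧ ∀ n : ℕ, (#n.divisors : ℝ) ≤ C * (n : ℝ) ^ δ := by
  -- Only the primes below `2 ^ (1 / δ)`, of which there are at most `N`, cost a factor `K > 1`.
  obtain ⟨N, hN⟩ := exists_nat_ge ((2 : ℝ) ^ (1 / δ))
  set K : ℝ := 1 + 1 / (δ * Real.log 2)
  have hK1 : 1 ≤ K := le_add_of_nonneg_right (by positivity)
  refine ⟨K ^ N, by positivity, fun n => ?_⟩
  rcases eq_or_ne n 0 with rfl | hn
  · simp [Real.zero_rpow hδ.ne']
  have hlocal : ∀ p ∈ n.primeFactors, (n.factorization p : ℝ) + 1 ≤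
      (if p < N then K else 1) * ((p : ℝ) ^ n.factorization p) ^ δ := by
    intro p hp
    split_ifs with hpN
    · exact add_one_le_mul_pow_rpow
        (by exact_mod_cast (Nat.prime_of_mem_primeFactors hp).two_le) hδ _
    · rw [one_mul]
      exact add_one_le_pow_rpow hδ (hN.trans (by exact_mod_cast not_lt.1 hpN)) _
  have hconst : (∏ p ∈ n.primeFactors, if p < N then K else 1) ≤ K ^ N := by
    rw [prod_ite, prod_const_one, mul_one, prod_const]
    refine pow_le_pow_right₀ hK1 ((card_le_card fun p hp => ?_).trans (card_range N).le)
    exact mem_range.2 (mem_filter.1 hp).2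
  calc (#n.divisors : ℝ) = ∏ p ∈ n.primeFactors, ((n.factorization p : ℝ) + 1) := by
        rw [Nat.card_divisors hn, Nat.cast_prod]
        simp only [Nat.cast_add, Nat.cast_one]
    _ ≤ ∏ p ∈ n.primeFactors, (if p < N then K else 1) * ((p : ℝ) ^ n.factorization p) ^ δ :=
        prod_le_prod (fun _ _ => by positivity) hlocal
    _ = (∏ p ∈ n.primeFactors, if p < N then K else 1) * (n : ℝ) ^ δ := by
        rw [prod_mul_distrib, Real.finsetProd_rpow _ _ (fun _ _ => by positivity)]
        congr 2
        exact_mod_cast Nat.prod_factorization_pow_eq_self hn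
    _ ≤ K ^ N * (n : ℝ) ^ δ := by gcongr

theorem exists_sq_card_divisors_le_rpow (N : ℕ) {A δ : ℝ} (hA : 0 ≤ A) (hδ : 0 < δ) :
    ∃ C : ℝ, 0 < C ∧ ∀ P : ℝ, 1 ≤ P → ∀ m : ℕ, (m : ℝ) ≤ A * P ^ N →
      (#m.divisors : ℝ) ^ 2 ≤ C * P ^ δ := by
  set γ : ℝ := δ / (2 * (N + 1)) with hγ
  have hγ0 : 0 < γ := by positivity
  have hexp : N * γ * 2 ≤ δ := by
    rw [hγ]
    field_simp
    linarith
  obtain ⟨C, hC, hdiv⟩ := exists_card_divisors_le_rpow hγ0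
  refine ⟨(C * A ^ γ) ^ 2 + 1, by positivity, fun P hP m hm => ?_⟩
  calc (#m.divisors : ℝ) ^ 2 ≤ (C * (A * P ^ N) ^ γ) ^ 2 := by
        gcongr
        exact (hdiv m).trans (by gcongr)
    _ = (C * A ^ γ) ^ 2 * P ^ (N * γ * 2) := by
        rw [Real.mul_rpow hA (by positivity), ← mul_assoc, mul_pow, Real.rpow_mul (by positivity),
          Real.rpow_mul (by positivity), Real.rpow_natCast, Real.rpow_two]
    _ ≤ ((C * A ^ γ) ^ 2 + 1) * P ^ δ := by
        gcongr
        exact le_add_of_nonneg_right zero_le_one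

end DivisorBound

section Cauchy

open Finset

variable {α G : Type*} [AddRightCancelMonoid G] [DecidableEq G]

theorem card_filter_eq_add (A : Finset α) (Φ : α → G) (v : G) :
    #{z ∈ A ×ˢ A | Φ z.1 = Φ z.2 + v} =
      ∑ g ∈ A.image Φ, #{a ∈ A | Φ a = g + v} * #{a ∈ A | Φ a = g} := by
  have hmaps : ∀ z ∈ {z ∈ A ×ˢ A | Φ z.1 = Φ z.2 + v}, Φ z.2 ∈ A.image Φ := fun z hz =>
    mem_image_of_mem Φ (mem_product.1 (mem_filter.1 hz).1).2
  rw [card_eq_sum_card_fiberwise hmaps]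
  refine sum_congr rfl fun g _ => ?_
  rw [← card_product, ← filter_product, filter_filter]
  congr 1
  refine filter_congr fun z _ => ?_
  constructor
  · rintro ⟨h, rfl⟩
    exact ⟨h, rfl⟩
  · rintro ⟨h, rfl⟩
    exact ⟨h, rfl⟩

theorem card_filter_eq_add_le (A : Finset α) (Φ : α → G) (v : G) :
    #{z ∈ A ×ˢ A | Φ z.1 = Φ z.2 + v} ≤ #{z ∈ A ×ˢ A | Φ z.1 = Φ z.2} := by
  set r : G → ℕ := fun g => #{a ∈ A | Φ a = g}
  have hcount : ∀ u, #{z ∈ A ×ˢ A | Φ z.1 = Φ z.2 + u} = ∑ g ∈ A.image Φ, r (g + u) * r g :=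
    card_filter_eq_add A Φ
  have hshift : ∑ g ∈ A.image Φ, r (g + v) ^ 2 ≤ ∑ g ∈ A.image Φ, r g ^ 2 := by
    refine (sum_map (A.image Φ) (addRightEmbedding v) fun g => r g ^ 2).symm.le.trans ?_
    refine sum_le_sum_of_ne_zero fun g _ hg => ?_
    obtain ⟨a, ha⟩ : (A.filter fun a => Φ a = g).Nonempty :=
      card_ne_zero.1 (ne_zero_pow two_ne_zero hg)
    exact mem_image.2 ⟨a, (mem_filter.1 ha).1, (mem_filter.1 ha).2⟩
  have hamgm : 2 * ∑ g ∈ A.image Φ, r (g + v) * r g ≤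
      ∑ g ∈ A.image Φ, r (g + v) ^ 2 + ∑ g ∈ A.image Φ, r g ^ 2 := by
    rw [mul_sum, ← sum_add_distrib]
    exact sum_le_sum fun g _ => by simpa only [mul_assoc] using two_mul_le_add_sq (r (g + v)) (r g)
  have hzero : #{z ∈ A ×ˢ A | Φ z.1 = Φ z.2} = ∑ g ∈ A.image Φ, r g ^ 2 := by
    simpa only [add_zero, sq] using hcount 0
  rw [hcount, hzero]
  linarith

end Cauchy

section PowerSums

open Finset

/-- The difference `∑ i, (x i ^ j - y i ^ j)` of the power sums of degree `j` of `x` and `y`; every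
equation in the systems counted by `Jcount` and `Icount` is the vanishing of one of these. -/
def powerSumDiff {ι R : Type*} [Fintype ι] [CommRing R] (x y : ι → R) (j : ℕ) : R :=
  ∑ i, (x i ^ j - y i ^ j)

variable {ι R : Type*} [Fintype ι] [CommRing R] {x y : ι → R} {n : ℕ}

theorem powerSumDiff_zero (x y : ι → R) : powerSumDiff x y 0 = 0 := by
  simp [powerSumDiff]

theorem powerSumDiff_affine (x y : ι → R) (a c : R) (n : ℕ) :
    powerSumDiff (fun i => a * x i + c) (fun i => a * y i + c) n =
      ∑ j ∈ range (n + 1), a ^ j * c ^ (n - j) * n.choose j * powerSumDiff x y j := by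
  simp_rw [powerSumDiff, mul_sum]
  rw [sum_comm]
  refine sum_congr rfl fun i _ => ?_
  rw [add_pow, add_pow, ← sum_sub_distrib]
  refine sum_congr rfl fun j _ => ?_
  rw [mul_pow, mul_pow]
  ring

theorem powerSumDiff_affine_of_forall_lt (h : ∀ j < n, powerSumDiff x y j = 0) (a c : R) :
    powerSumDiff (fun i => a * x i + c) (fun i => a * y i + c) n = a ^ n * powerSumDiff x y n := by
  rw [powerSumDiff_affine, sum_range_succ, sum_eq_zero fun j hj => ?_]
  · simp
  · rw [h j (mem_range.1 hj), mul_zero]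

theorem powerSumDiff_affine_succ_of_forall_lt (h : ∀ j < n, powerSumDiff x y j = 0) (a c : R) :
    powerSumDiff (fun i => a * x i + c) (fun i => a * y i + c) (n + 1) =
      a ^ n * (c * (n + 1) * powerSumDiff x y n + a * powerSumDiff x y (n + 1)) := by
  rw [powerSumDiff_affine, sum_range_succ, sum_range_succ, sum_eq_zero fun j hj => ?_]
  · simp only [Nat.add_sub_cancel_left, Nat.sub_self, Nat.choose_succ_self_right, Nat.choose_self]
    push_cast
    ring
  · rw [h j (mem_range.1 hj), mul_zero]

theorem powerSumDiff_add_of_forall_lt (h : ∀ j < n, powerSumDiff x y j = 0) (c : R) :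
    powerSumDiff (fun i => x i + c) (fun i => y i + c) n = powerSumDiff x y n := by
  simpa only [one_mul, one_pow] using powerSumDiff_affine_of_forall_lt h 1 c

theorem powerSumDiff_add_succ_of_forall_lt (h : ∀ j < n, powerSumDiff x y j = 0) (c : R) :
    powerSumDiff (fun i => x i + c) (fun i => y i + c) (n + 1) =
      c * (n + 1) * powerSumDiff x y n + powerSumDiff x y (n + 1) := by
  simpa only [one_mul, one_pow] using powerSumDiff_affine_succ_of_forall_lt h 1 c

theorem exists_powerSumDiff_eq_mul_of_affine_eq_zero [IsDomain R] {q b : R} (hq : q ≠ 0)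
    (hcop : IsCoprime q (b * (n + 1))) (h : ∀ j < n, powerSumDiff x y j = 0)
    (htop : powerSumDiff (fun i => q * x i + b) (fun i => q * y i + b) (n + 1) = 0) :
    ∃ d, powerSumDiff x y n = q * d ∧ powerSumDiff x y (n + 1) = -(b * (n + 1) * d) := by
  have hrel : b * (n + 1) * powerSumDiff x y n + q * powerSumDiff x y (n + 1) = 0 := by
    rw [powerSumDiff_affine_succ_of_forall_lt h] at htop
    exact (mul_eq_zero.1 htop).resolve_left (pow_ne_zero _ hq)
  obtain ⟨d, hd⟩ : q ∣ powerSumDiff x y n :=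
    hcop.dvd_of_dvd_mul_left ⟨-powerSumDiff x y (n + 1), by linear_combination hrel⟩
  refine ⟨d, hd, mul_left_cancel₀ hq ?_⟩
  linear_combination hrel - b * (n + 1) * hd

theorem abs_powerSumDiff_le [LinearOrder R] [IsStrictOrderedRing R] {r : R}
    (hx : ∀ i, 0 ≤ x i ∧ x i ≤ r) (hy : ∀ i, 0 ≤ y i ∧ y i ≤ r) (j : ℕ) :
    |powerSumDiff x y j| ≤ Fintype.card ι * r ^ j := by
  refine (abs_sum_le_sum_abs _ _).trans ?_
  rw [← nsmul_eq_mul]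
  refine sum_le_card_nsmul _ _ _ fun i _ => ?_
  exact abs_sub_le_of_nonneg_of_le (pow_nonneg (hx i).1 j) (pow_le_pow_left₀ (hx i).1 (hx i).2 j)
    (pow_nonneg (hy i).1 j) (pow_le_pow_left₀ (hy i).1 (hy i).2 j)

end PowerSums

section VinogradovSystem

open Finset

/-- The integer points of the cube `[a, b] ^ s`. -/
noncomputable def integerBox (s : ℕ) (a b : ℤ) : Finset (Fin s → ℤ) :=
  Fintype.piFinset fun _ => Icc a b

theorem mem_integerBox {s : ℕ} {a b : ℤ} {x : Fin s → ℤ} :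
    x ∈ integerBox s a b ↔ ∀ i, a ≤ x i ∧ x i ≤ b := by
  simp only [integerBox, Fintype.mem_piFinset, mem_Icc]

/-- The solutions of the Vinogradov system of degree `k` with variables in `[1, R]`. The equation of
degree `0`, which holds trivially, is included for convenience. -/
noncomputable def vinogradovSolutions (s k : ℕ) (R : ℤ) : Finset ((Fin s → ℤ) × (Fin s → ℤ)) :=
  {xy ∈ integerBox s 1 R ×ˢ integerBox s 1 R | ∀ j ≤ k, powerSumDiff xy.1 xy.2 j = 0}

theorem Jcount_eq_card_vinogradovSolutions (s k : ℕ) (X : ℝ) :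
    Jcount s k X = #(vinogradovSolutions s k ⌊X⌋) := by
  rw [Jcount, ← Set.ncard_coe_finset]
  congr 1
  ext ⟨x, y⟩
  have hdeg : (∀ j ∈ Icc 1 k, powerSumDiff x y j = 0) ↔ ∀ j ≤ k, powerSumDiff x y j = 0 := by
    refine ⟨fun h j hj => ?_, fun h j hj => h j (mem_Icc.1 hj).2⟩
    rcases j.eq_zero_or_pos with rfl | hj0
    · exact powerSumDiff_zero x y
    · exact h j (mem_Icc.2 ⟨hj0, hj⟩)
  simp only [vinogradovSolutions, mem_coe, mem_filter, mem_product, mem_integerBox, Int.le_floor,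
    ← hdeg, and_assoc]
  rfl

theorem Jcount_mono (s k : ℕ) : Monotone (Jcount s k) := by
  intro X Y hXY
  simp only [Jcount_eq_card_vinogradovSolutions]
  refine card_le_card (filter_subset_filter _ ?_)
  have hbox : integerBox s 1 ⌊X⌋ ⊆ integerBox s 1 ⌊Y⌋ :=
    Fintype.piFinset_subset _ _ fun _ => Icc_subset_Icc_right (Int.floor_mono hXY)
  exact product_subset_product hbox hbox

theorem Jcount_le_pow (s k : ℕ) {X : ℝ} (hX : 0 ≤ X) : (Jcount s k X : ℝ) ≤ X ^ (2 * s) := by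
  have hcard : #(vinogradovSolutions s k ⌊X⌋) ≤ ⌊X⌋₊ ^ (2 * s) := by
    refine (card_filter_le _ _).trans_eq ?_
    simp [integerBox, two_mul, pow_add, Int.floor_toNat]
  rw [Jcount_eq_card_vinogradovSolutions]
  calc (#(vinogradovSolutions s k ⌊X⌋) : ℝ) ≤ (⌊X⌋₊ : ℝ) ^ (2 * s) := by exact_mod_cast hcard
    _ ≤ X ^ (2 * s) := by
        gcongr
        exact Nat.floor_le hX

theorem exists_Jcount_le_rpow_etaExp (s k : ℕ) {δ : ℝ} (hδ : 0 < δ) :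
    ∃ C X₀ : ℝ, 0 < C ∧ ∀ X : ℝ, X₀ ≤ X →
      (Jcount s k X : ℝ) ≤
        C * X ^ (2 * (s : ℝ) - (k : ℝ) * ((k : ℝ) + 1) / 2 + etaExp s k + δ) := by
  set A : Set ℝ := {η : ℝ | 0 < η ∧ ∀ ε : ℝ, 0 < ε → ∃ C X₀ : ℝ, 0 < C ∧ ∀ X : ℝ, X₀ ≤ X →
    (Jcount s k X : ℝ) ≤ C * X ^ (2 * (s : ℝ) - (k : ℝ) * ((k : ℝ) + 1) / 2 + η + ε)}
  have hne : A.Nonempty := by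
    refine ⟨(k : ℝ) * ((k : ℝ) + 1) / 2 + 1, by positivity, fun ε hε => ⟨1, 1, one_pos, ?_⟩⟩
    intro X hX
    rw [one_mul]
    refine (Jcount_le_pow s k (by linarith)).trans ?_
    rw [← Real.rpow_natCast]
    refine Real.rpow_le_rpow_of_exponent_le hX ?_
    push_cast
    linarith
  obtain ⟨η, hη, hlt⟩ := Real.lt_sInf_add_pos hne (half_pos hδ)
  obtain ⟨C, X₀, hC, hbound⟩ := hη.2 (δ / 2) (half_pos hδ)
  refine ⟨C, max X₀ 1, hC, fun X hX => (hbound X ((le_max_left _ _).trans hX)).trans ?_⟩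
  gcongr C * ?_
  refine Real.rpow_le_rpow_of_exponent_le ((le_max_right _ _).trans hX) ?_
  change η < etaExp s k + δ / 2 at hlt
  linarith

theorem exists_eventually_Jcount_mul_le_rpow_etaExp (s k : ℕ) {M δ : ℝ} (hM : 0 < M) (hδ : 0 < δ) :
    ∃ C : ℝ, 0 < C ∧ ∀ᶠ P : ℝ in Filter.atTop, (Jcount s k (M * P) : ℝ) ≤
      C * P ^ (2 * (s : ℝ) - (k : ℝ) * ((k : ℝ) + 1) / 2 + etaExp s k + δ) := by
  obtain ⟨C, X₀, hC, hJ⟩ := exists_Jcount_le_rpow_etaExp s k hδ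
  refine ⟨C * M ^ (2 * (s : ℝ) - (k : ℝ) * ((k : ℝ) + 1) / 2 + etaExp s k + δ), by positivity, ?_⟩
  filter_upwards [Filter.eventually_ge_atTop (X₀ / M), Filter.eventually_ge_atTop 0] with P hP hP0
  rw [mul_assoc, ← Real.mul_rpow hM.le hP0]
  exact hJ _ ((div_le_iff₀' hM).1 hP)

end VinogradovSystem

section ShiftPairs

open Finset

/-- The pairs `(t, u)` of shifts `0 ≤ t, u < T` with `c * (t - u) = m`. -/
def shiftPairs (T : ℕ) (c m : ℤ) : Finset (ℕ × ℕ) :=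
  {t ∈ range T ×ˢ range T | c * ((t.1 : ℤ) - t.2) = m}

theorem card_shiftPairs_le_sq (T : ℕ) (c m : ℤ) : #(shiftPairs T c m) ≤ T ^ 2 :=
  (card_filter_le _ _).trans_eq (by rw [card_product, card_range, sq])

theorem card_shiftPairs_le {c : ℤ} (hc : c ≠ 0) (T : ℕ) (m : ℤ) : #(shiftPairs T c m) ≤ T := by
  refine (card_le_card_of_injOn (t := range T) Prod.fst
    (fun t ht => (mem_product.1 (mem_filter.1 ht).1).1) ?_).trans (card_range T).le
  rintro ⟨t, u⟩ h ⟨t', u'⟩ h' rfl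
  have heq := mul_left_cancel₀ hc ((mem_filter.1 h).2.trans (mem_filter.1 h').2.symm)
  simpa using heq

theorem dvd_of_mem_shiftPairs {T : ℕ} {c m : ℤ} {t : ℕ × ℕ} (ht : t ∈ shiftPairs T c m) : c ∣ m :=
  ⟨_, (mem_filter.1 ht).2.symm⟩

theorem sum_card_shiftPairs_mul_le {c : ℤ} (hc : c ≠ 0) (T H : ℕ) (m : ℤ) :
    ∑ h ∈ Icc (-(H : ℤ)) H, #(shiftPairs T (c * h) m) ≤ T ^ 2 + 2 * H * T := by
  have h0 : (0 : ℤ) ∈ Icc (-(H : ℤ)) H := by simp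
  have hcard : #((Icc (-(H : ℤ)) H).erase 0) = 2 * H := by
    rw [card_erase_of_mem h0, Int.card_Icc]
    lia
  rw [← add_sum_erase _ _ h0]
  refine add_le_add (card_shiftPairs_le_sq T _ m) ?_
  rw [← hcard, ← smul_eq_mul]
  exact sum_le_card_nsmul _ _ _ fun h hh =>
    card_shiftPairs_le (mul_ne_zero hc (ne_of_mem_erase hh)) T m

theorem card_intDivisors (m : ℤ) : #m.divisors = 2 * #m.natAbs.divisors := by
  rw [Int.divisors, card_disjUnion, card_map, card_map, two_mul]

theorem sum_sum_card_shiftPairs_le {m : ℤ} (hm : m ≠ 0) (T : ℕ) (a : ℤ) (𝒬 : Finset ℕ)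
    (ℋ : Finset ℤ) :
    ∑ q ∈ 𝒬, ∑ h ∈ ℋ, #(shiftPairs T (a * q * h) m) ≤ 2 * #m.natAbs.divisors ^ 2 * T := by
  have hterm : ∀ z : ℕ × ℤ, #(shiftPairs T (a * z.1 * z.2) m) ≤
      if z ∈ m.natAbs.divisors ×ˢ m.divisors then T else 0 := by
    rintro ⟨q, h⟩
    rcases (shiftPairs T (a * q * h) m).eq_empty_or_nonempty with hempty | ⟨t, ht⟩
    · simp only [hempty, card_empty, Nat.zero_le]
    · have hdvd := dvd_of_mem_shiftPairs ht
      have hq : q ∈ m.natAbs.divisors := Nat.mem_divisors.2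
        ⟨Int.natCast_dvd.1 ((Dvd.intro_left a rfl).trans (dvd_of_mul_right_dvd hdvd)),
          Int.natAbs_ne_zero.2 hm⟩
      have hh : h ∈ m.divisors := Int.mem_divisors.2 ⟨dvd_of_mul_left_dvd hdvd, hm⟩
      rw [if_pos (mem_product.2 ⟨hq, hh⟩)]
      exact card_shiftPairs_le (ne_zero_of_dvd_ne_zero hm hdvd) T m
  calc ∑ q ∈ 𝒬, ∑ h ∈ ℋ, #(shiftPairs T (a * q * h) m)
      = ∑ z ∈ 𝒬 ×ˢ ℋ, #(shiftPairs T (a * z.1 * z.2) m) := (sum_product' _ _ _).symm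
    _ ≤ ∑ z ∈ 𝒬 ×ˢ ℋ, if z ∈ m.natAbs.divisors ×ˢ m.divisors then T else 0 :=
        sum_le_sum fun z _ => hterm z
    _ = #{z ∈ 𝒬 ×ˢ ℋ | z ∈ m.natAbs.divisors ×ˢ m.divisors} * T := by
        rw [← sum_filter, sum_const, smul_eq_mul]
    _ ≤ #(m.natAbs.divisors ×ˢ m.divisors) * T := by
        gcongr
        exact fun z hz => (mem_filter.1 hz).2
    _ = 2 * #m.natAbs.divisors ^ 2 * T := by
        rw [card_product, card_intDivisors]
        ring

end ShiftPairs

section Differencing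

open Finset

/-- For `z = (x, t)`, the power sums of `x` of degrees `0, …, n`, together with the power sum of
degree `n + 1` minus `c * t`. If the power sums of `x` and `y` agree in degrees below `n` and differ
by `d` in degree `n`, then with `c = (n + 1) * d` the difference of the values at `(x + (t - u), t)`
and `(y + (t - u), u)` does not depend on the shifts `t` and `u`. -/
def shiftedPowerSums {s : ℕ} (n : ℕ) (c : ℤ) (z : (Fin s → ℤ) × ℕ) : (Fin (n + 1) → ℤ) × ℤ :=
  (fun j => ∑ i, z.1 i ^ (j : ℕ), ∑ i, z.1 i ^ (n + 1) - c * z.2)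

theorem shiftedPowerSums_eq_add_iff {s n : ℕ} {c e : ℤ} {z w : (Fin s → ℤ) × ℕ}
    {v : Fin (n + 1) → ℤ} :
    shiftedPowerSums n c z = shiftedPowerSums n c w + (v, e) ↔
      (∀ j : Fin (n + 1), powerSumDiff z.1 w.1 j = v j) ∧
        powerSumDiff z.1 w.1 (n + 1) = c * ((z.2 : ℤ) - w.2) + e := by
  simp only [shiftedPowerSums, Prod.mk_add_mk, Prod.mk.injEq, funext_iff, Pi.add_apply,
    powerSumDiff, sum_sub_distrib, sub_eq_iff_eq_add']
  refine and_congr_right fun _ => ⟨fun h => ?_, fun h => ?_⟩ <;> linear_combination h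

theorem shiftedPowerSums_add_eq {s n : ℕ} {x y : Fin s → ℤ}
    (hlow : ∀ j < n, powerSumDiff x y j = 0) (T t u : ℕ) :
    shiftedPowerSums n ((n + 1) * powerSumDiff x y n) (fun i => x i + (T + t - u), t) =
      shiftedPowerSums n ((n + 1) * powerSumDiff x y n) (fun i => y i + (T + t - u), u) +
        (Pi.single (Fin.last n) (powerSumDiff x y n),
          T * ((n + 1) * powerSumDiff x y n) + powerSumDiff x y (n + 1)) := by
  refine shiftedPowerSums_eq_add_iff.2 ⟨fun j => ?_, ?_⟩
  · rw [powerSumDiff_add_of_forall_lt fun i hi => hlow i (hi.trans_le (Fin.is_le j))]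
    rcases eq_or_ne j (Fin.last n) with rfl | hj
    · rw [Pi.single_eq_same, Fin.val_last]
    · rw [Pi.single_eq_of_ne hj, hlow j (Fin.val_lt_last hj)]
  · rw [powerSumDiff_add_succ_of_forall_lt hlow]
    ring

theorem sq_mul_card_le_card_shiftedPowerSums_eq_add {s n T : ℕ} {d e : ℤ}
    {S : Finset ((Fin s → ℤ) × (Fin s → ℤ))} (hS : S ⊆ integerBox s 0 T ×ˢ integerBox s 0 T)
    (hlow : ∀ z ∈ S, ∀ j < n, powerSumDiff z.1 z.2 j = 0)
    (hmid : ∀ z ∈ S, powerSumDiff z.1 z.2 n = d)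
    (htop : ∀ z ∈ S, powerSumDiff z.1 z.2 (n + 1) = e) :
    T ^ 2 * #S ≤ #{z ∈ (integerBox s 1 (3 * T) ×ˢ range T) ×ˢ (integerBox s 1 (3 * T) ×ˢ range T) |
      shiftedPowerSums n ((n + 1) * d) z.1 = shiftedPowerSums n ((n + 1) * d) z.2 +
        (Pi.single (Fin.last n) d, T * ((n + 1) * d) + e)} := by
  have hcard : T ^ 2 * #S = #(S ×ˢ (range T ×ˢ range T)) := by
    rw [card_product, card_product, card_range, mul_comm, sq]
  rw [hcard]
  -- The extra shift by `T` makes the translated variables positive.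
  refine card_le_card_of_injOn
    (fun w => ((fun i => w.1.1 i + (T + w.2.1 - w.2.2), w.2.1),
      (fun i => w.1.2 i + (T + w.2.1 - w.2.2), w.2.2))) ?_ ?_
  · rintro ⟨⟨x, y⟩, t, u⟩ hw
    obtain ⟨hxy, ht⟩ := mem_product.1 (mem_coe.1 hw)
    have hshift := shiftedPowerSums_add_eq (hlow _ hxy) T t u
    simp only [hmid _ hxy, htop _ hxy] at hshift
    have hbox := hS hxy
    simp only [mem_product, mem_integerBox, mem_range] at hbox ht
    simp only [coe_filter, Set.mem_ofPred_eq, mem_product, mem_integerBox, mem_range]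
    refine ⟨⟨⟨fun i => ?_, ht.1⟩, fun i => ?_, ht.2⟩, hshift⟩
    · have := hbox.1 i
      lia
    · have := hbox.2 i
      lia
  · rintro ⟨⟨x, y⟩, t, u⟩ _ ⟨⟨x', y'⟩, t', u'⟩ _ heq
    simp only [Prod.mk.injEq] at heq
    obtain ⟨⟨hx, rfl⟩, hy, rfl⟩ := heq
    simp only [funext_iff, add_left_inj] at hx hy
    rw [funext hx, funext hy]

theorem card_shiftedPowerSums_eq (s n T : ℕ) (R c : ℤ) :
    #{z ∈ (integerBox s 1 R ×ˢ range T) ×ˢ (integerBox s 1 R ×ˢ range T) |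
      shiftedPowerSums n c z.1 = shiftedPowerSums n c z.2} =
        ∑ xy ∈ vinogradovSolutions s n R, #(shiftPairs T c (powerSumDiff xy.1 xy.2 (n + 1))) := by
  have heq : ∀ z w : (Fin s → ℤ) × ℕ, shiftedPowerSums n c z = shiftedPowerSums n c w ↔
      (∀ j ≤ n, powerSumDiff z.1 w.1 j = 0) ∧
        c * ((z.2 : ℤ) - w.2) = powerSumDiff z.1 w.1 (n + 1) := by
    intro z w
    have h := shiftedPowerSums_eq_add_iff (n := n) (c := c) (z := z) (w := w) (v := 0) (e := 0)
    rw [Prod.mk_zero_zero, add_zero, add_zero] at h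
    rw [h, eq_comm (a := c * _)]
    simp only [Pi.zero_apply, Fin.forall_iff, Nat.lt_succ_iff]
  rw [← card_sigma]
  refine card_nbij' (fun z => ⟨(z.1.1, z.2.1), (z.1.2, z.2.2)⟩)
    (fun w => ((w.1.1, w.2.1), (w.1.2, w.2.2))) ?_ ?_ (fun _ _ => rfl) (fun _ _ => rfl)
  · rintro ⟨⟨x, t⟩, y, u⟩ hz
    simp only [coe_filter, Set.mem_ofPred_eq, mem_product, heq] at hz
    simp only [coe_sigma, Set.mem_sigma_iff, mem_coe, vinogradovSolutions, shiftPairs, mem_filter,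
      mem_product]
    tauto
  · rintro ⟨⟨x, y⟩, t, u⟩ hz
    simp only [coe_sigma, Set.mem_sigma_iff, mem_coe, vinogradovSolutions, shiftPairs, mem_filter,
      mem_product] at hz
    simp only [coe_filter, Set.mem_ofPred_eq, mem_product, heq]
    tauto

theorem sq_mul_card_le_sum_card_shiftPairs {s n T : ℕ} {d e : ℤ}
    {S : Finset ((Fin s → ℤ) × (Fin s → ℤ))} (hS : S ⊆ integerBox s 0 T ×ˢ integerBox s 0 T)
    (hlow : ∀ z ∈ S, ∀ j < n, powerSumDiff z.1 z.2 j = 0)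
    (hmid : ∀ z ∈ S, powerSumDiff z.1 z.2 n = d)
    (htop : ∀ z ∈ S, powerSumDiff z.1 z.2 (n + 1) = e) :
    T ^ 2 * #S ≤ ∑ xy ∈ vinogradovSolutions s n (3 * T),
      #(shiftPairs T ((n + 1) * d) (powerSumDiff xy.1 xy.2 (n + 1))) := by
  refine (sq_mul_card_le_card_shiftedPowerSums_eq_add hS hlow hmid htop).trans ?_
  refine (card_filter_eq_add_le _ _ _).trans_eq ?_
  exact card_shiftedPowerSums_eq s n T (3 * T) ((n + 1) * d)

end Differencing

section Theta

open Finset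

/-- The solutions of the system counted by `Icount s (n + 1) n X q b`, with variables in `[0, T]`
instead of `[0, X / q]`. The trivial equation of degree `0` is included. -/
noncomputable def affineSolutions (s n : ℕ) (T q b : ℤ) : Finset ((Fin s → ℤ) × (Fin s → ℤ)) :=
  {xy ∈ integerBox s 0 T ×ˢ integerBox s 0 T | (∀ j < n, powerSumDiff xy.1 xy.2 j = 0) ∧
    powerSumDiff (fun i => q * xy.1 i + b) (fun i => q * xy.2 i + b) (n + 1) = 0}

theorem Icount_le_card_affineSolutions (s n : ℕ) {X : ℝ} {q T : ℕ} (b : ℤ) (hXT : X / q ≤ T) :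
    Icount s (n + 1) n X q b ≤ #(affineSolutions s n T q b) := by
  rw [Icount, ← Set.ncard_coe_finset]
  refine Set.ncard_le_ncard ?_ (finite_toSet _)
  rintro ⟨x, y⟩ ⟨hx, hy, htop, hlow⟩
  have hT : ∀ a : ℤ, (a : ℝ) ≤ X / q → a ≤ T := fun a ha => by exact_mod_cast ha.trans hXT
  refine mem_coe.2 (mem_filter.2 ⟨mem_product.2 ⟨mem_integerBox.2 fun i => ?_,
    mem_integerBox.2 fun i => ?_⟩, fun j hj => ?_, htop⟩)
  · exact ⟨(hx i).1, hT _ (hx i).2⟩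
  · exact ⟨(hy i).1, hT _ (hy i).2⟩
  · rcases j.eq_zero_or_pos with rfl | hj0
    · exact powerSumDiff_zero x y
    · exact hlow j (mem_Icc.2 ⟨hj0, Nat.le_sub_one_of_lt hj⟩)

theorem exists_of_mem_affineSolutions {s n T H q : ℕ} {b : ℤ} (hq : 0 < q)
    (hb : IsCoprime b (q : ℤ)) (hqn : q.Coprime (n + 1)) (hH : s * T ^ n < q * (H + 1))
    {xy : (Fin s → ℤ) × (Fin s → ℤ)} (hxy : xy ∈ affineSolutions s n T q b) :
    ∃ h ∈ Icc (-(H : ℤ)) H, powerSumDiff xy.1 xy.2 n = q * h ∧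
      powerSumDiff xy.1 xy.2 (n + 1) = -(b * (n + 1) * h) := by
  obtain ⟨hbox, hlow, htop⟩ := mem_filter.1 hxy
  have hq' : (0 : ℤ) < q := by exact_mod_cast hq
  have hcop : IsCoprime (q : ℤ) (b * (n + 1)) :=
    hb.symm.mul_right (by exact_mod_cast hqn.isCoprime)
  obtain ⟨h, hmid, htop⟩ := exists_powerSumDiff_eq_mul_of_affine_eq_zero hq'.ne' hcop hlow htop
  refine ⟨h, ?_, hmid, htop⟩
  have hle : (q : ℤ) * |h| ≤ s * (T : ℤ) ^ n :=
    calc (q : ℤ) * |h| = |powerSumDiff xy.1 xy.2 n| := by rw [hmid, abs_mul, abs_of_pos hq']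
      _ ≤ s * (T : ℤ) ^ n := by
        simpa only [Fintype.card_fin] using abs_powerSumDiff_le
          (mem_integerBox.1 (mem_product.1 hbox).1) (mem_integerBox.1 (mem_product.1 hbox).2) n
  have hlt : (q : ℤ) * |h| < q * (H + 1) := hle.trans_lt (by exact_mod_cast hH)
  exact mem_Icc.2 (abs_le.1 (Int.lt_add_one_iff.1 (lt_of_mul_lt_mul_left hlt hq'.le)))

theorem sq_mul_Icount_le {s n T H q : ℕ} {X : ℝ} {b : ℤ} (hq : 0 < q) (hb : IsCoprime b (q : ℤ))
    (hqn : q.Coprime (n + 1)) (hXT : X / q ≤ T) (hH : s * T ^ n < q * (H + 1)) :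
    T ^ 2 * Icount s (n + 1) n X q b ≤
      ∑ xy ∈ vinogradovSolutions s n (3 * T), ∑ h ∈ Icc (-(H : ℤ)) H,
        #(shiftPairs T ((n + 1) * q * h) (powerSumDiff xy.1 xy.2 (n + 1))) := by
  set S : ℤ → Finset ((Fin s → ℤ) × (Fin s → ℤ)) := fun h =>
    {xy ∈ affineSolutions s n T q b | powerSumDiff xy.1 xy.2 n = q * h ∧
      powerSumDiff xy.1 xy.2 (n + 1) = -(b * (n + 1) * h)}
  have hcover : affineSolutions s n T q b ⊆ (Icc (-(H : ℤ)) H).biUnion S := by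
    intro xy hxy
    obtain ⟨h, hh, heq⟩ := exists_of_mem_affineSolutions hq hb hqn hH hxy
    exact mem_biUnion.2 ⟨h, hh, mem_filter.2 ⟨hxy, heq⟩⟩
  have hfiber : ∀ h, T ^ 2 * #(S h) ≤ ∑ xy ∈ vinogradovSolutions s n (3 * T),
      #(shiftPairs T ((n + 1) * q * h) (powerSumDiff xy.1 xy.2 (n + 1))) := by
    intro h
    simp only [mul_assoc _ (q : ℤ) h]
    exact sq_mul_card_le_sum_card_shiftPairs
      (fun z hz => (mem_filter.1 (mem_filter.1 hz).1).1)
      (fun z hz => (mem_filter.1 (mem_filter.1 hz).1).2.1)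
      (fun z hz => (mem_filter.1 hz).2.1) (fun z hz => (mem_filter.1 hz).2.2)
  calc T ^ 2 * Icount s (n + 1) n X q b
      ≤ T ^ 2 * ∑ h ∈ Icc (-(H : ℤ)) H, #(S h) := by
        gcongr
        exact (Icount_le_card_affineSolutions s n b hXT).trans
          ((card_le_card hcover).trans card_biUnion_le)
    _ ≤ ∑ h ∈ Icc (-(H : ℤ)) H, ∑ xy ∈ vinogradovSolutions s n (3 * T),
          #(shiftPairs T ((n + 1) * q * h) (powerSumDiff xy.1 xy.2 (n + 1))) := by
        rw [mul_sum]
        exact sum_le_sum fun h _ => hfiber h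
    _ = _ := sum_comm

theorem sq_mul_ThetaSum_le_sum {s n T H : ℕ} {X : ℝ} {𝒬 : Finset ℕ} (hT : 0 < T)
    (h𝒬 : ∀ q ∈ 𝒬, 0 < q ∧ q.Coprime (n + 1) ∧ X / q ≤ T ∧ s * T ^ n < q * (H + 1)) :
    T ^ 2 * ThetaSum s (n + 1) X 𝒬 ≤
      ∑ xy ∈ vinogradovSolutions s n (3 * T), ∑ q ∈ 𝒬, ∑ h ∈ Icc (-(H : ℤ)) H,
        #(shiftPairs T ((n + 1) * q * h) (powerSumDiff xy.1 xy.2 (n + 1))) := by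
  rw [ThetaSum, mul_sum, sum_comm]
  refine sum_le_sum fun q hq => ?_
  obtain ⟨hq0, hqn, hXT, hH⟩ := h𝒬 q hq
  rw [mul_comm, ← Nat.le_div_iff_mul_le (pow_pos hT 2)]
  refine csSup_le' ?_
  rintro _ ⟨b, hb, rfl⟩
  rw [Nat.le_div_iff_mul_le (pow_pos hT 2), mul_comm]
  exact sq_mul_Icount_le hq0 hb hqn hXT hH

theorem sum_sum_card_shiftPairs_le_ite {n T H : ℕ} {𝒬 : Finset ℕ} (h𝒬 : ∀ q ∈ 𝒬, 0 < q) (m : ℤ) :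
    ∑ q ∈ 𝒬, ∑ h ∈ Icc (-(H : ℤ)) H, #(shiftPairs T ((n + 1) * q * h) m) ≤
      (if m = 0 then #𝒬 * (T ^ 2 + 2 * H * T) else 0) + 2 * #m.natAbs.divisors ^ 2 * T := by
  split_ifs with hm
  · refine le_add_right ?_
    rw [← smul_eq_mul]
    refine sum_le_card_nsmul _ _ _ fun q hq => sum_card_shiftPairs_mul_le ?_ T H m
    have := h𝒬 q hq
    positivity
  · rw [zero_add]
    exact sum_sum_card_shiftPairs_le hm T (n + 1) 𝒬 _

theorem vinogradovSolutions_succ (s n : ℕ) (R : ℤ) :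
    vinogradovSolutions s (n + 1) R =
      {xy ∈ vinogradovSolutions s n R | powerSumDiff xy.1 xy.2 (n + 1) = 0} := by
  simp only [vinogradovSolutions, filter_filter, Nat.le_succ_iff, or_imp, forall_and,
    forall_eq]

theorem sq_mul_ThetaSum_le {s n T H : ℕ} {X : ℝ} {𝒬 : Finset ℕ} (hT : 0 < T)
    (h𝒬 : ∀ q ∈ 𝒬, 0 < q ∧ q.Coprime (n + 1) ∧ X / q ≤ T ∧ s * T ^ n < q * (H + 1)) :
    T ^ 2 * ThetaSum s (n + 1) X 𝒬 ≤
      #𝒬 * (T ^ 2 + 2 * H * T) * #(vinogradovSolutions s (n + 1) (3 * T)) +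
        2 * T * ∑ xy ∈ vinogradovSolutions s n (3 * T),
          #(powerSumDiff xy.1 xy.2 (n + 1)).natAbs.divisors ^ 2 := by
  refine (sq_mul_ThetaSum_le_sum hT h𝒬).trans ?_
  refine (sum_le_sum fun xy _ =>
    sum_sum_card_shiftPairs_le_ite (fun q hq => (h𝒬 q hq).1) _).trans_eq ?_
  rw [sum_add_distrib, ← sum_filter, ← vinogradovSolutions_succ, sum_const, smul_eq_mul, mul_sum]
  congr 1
  · exact mul_comm _ _
  · exact sum_congr rfl fun _ _ => by ring

theorem exists_sq_card_divisors_powerSumDiff_le (s n : ℕ) {B δ : ℝ} (hB : 0 ≤ B) (hδ : 0 < δ) :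
    ∃ C : ℝ, 0 < C ∧ ∀ P : ℝ, 1 ≤ P → ∀ R : ℕ, (R : ℝ) ≤ B * P →
      ∀ x ∈ integerBox s 1 R, ∀ y ∈ integerBox s 1 R,
        (#(powerSumDiff x y n).natAbs.divisors : ℝ) ^ 2 ≤ C * P ^ δ := by
  obtain ⟨C, hC, hdiv⟩ := exists_sq_card_divisors_le_rpow n
    (A := s * B ^ n) (by positivity) hδ
  refine ⟨C, hC, fun P hP R hR x hx y hy => hdiv P hP _ ?_⟩
  have habs : |powerSumDiff x y n| ≤ s * (R : ℤ) ^ n := by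
    simpa only [Fintype.card_fin] using abs_powerSumDiff_le
      (fun i => (mem_integerBox.1 hx i).imp_left zero_le_one.trans)
      (fun i => (mem_integerBox.1 hy i).imp_left zero_le_one.trans) n
  calc ((powerSumDiff x y n).natAbs : ℝ) ≤ s * (R : ℝ) ^ n := by
        rw [Nat.cast_natAbs]
        exact_mod_cast habs
    _ ≤ s * (B * P) ^ n := by gcongr
    _ = s * B ^ n * P ^ n := by rw [mul_pow, mul_assoc]

end Theta

section Estimates

open Finset

theorem card_le_of_forall_pos_le {Q : ℝ} (hQ : 0 ≤ Q) {𝒬 : Finset ℕ}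
    (h𝒬 : ∀ q ∈ 𝒬, 0 < q ∧ (q : ℝ) ≤ Q) : (#𝒬 : ℝ) ≤ Q := by
  have hsub : 𝒬 ⊆ Icc 1 ⌊Q⌋₊ := fun q hq =>
    mem_Icc.2 ⟨(h𝒬 q hq).1, Nat.le_floor (h𝒬 q hq).2⟩
  calc (#𝒬 : ℝ) ≤ ⌊Q⌋₊ := by
        rw [← Nat.add_sub_cancel ⌊Q⌋₊ 1, ← Nat.card_Icc]
        exact_mod_cast card_le_card hsub
    _ ≤ Q := Nat.floor_le hQ

theorem exists_nat_mul_le_and_forall_lt_mul {a κ Q : ℝ} (ha : 0 ≤ a) (hκ : 0 < κ) (hQ : 0 < Q) :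
    ∃ H : ℕ, Q * H ≤ a / κ ∧ ∀ q : ℝ, κ * Q ≤ q → a < q * (H + 1) := by
  refine ⟨⌊a / (κ * Q)⌋₊, ?_, fun q hq => ?_⟩
  · calc Q * ⌊a / (κ * Q)⌋₊ ≤ Q * (a / (κ * Q)) := by
          gcongr
          exact Nat.floor_le (by positivity)
      _ = a / κ := by field_simp
  · calc a < κ * Q * (⌊a / (κ * Q)⌋₊ + 1) :=
          (div_lt_iff₀' (mul_pos hκ hQ)).1 (Nat.lt_floor_add_one _)
      _ ≤ q * (⌊a / (κ * Q)⌋₊ + 1) := by gcongr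

theorem mul_ThetaSum_le {s n T : ℕ} {X Q κ D : ℝ} {𝒬 : Finset ℕ} (hκ : 0 < κ) (hX : 0 ≤ X)
    (hQ : 0 < Q) (hT : 0 < T) (hXT : X / Q ≤ κ * T)
    (h𝒬 : ∀ q ∈ 𝒬, κ * Q < q ∧ (q : ℝ) ≤ Q ∧ q.Coprime (n + 1))
    (hD : ∀ xy ∈ vinogradovSolutions s n (3 * T),
      (#(powerSumDiff xy.1 xy.2 (n + 1)).natAbs.divisors : ℝ) ^ 2 ≤ D) :
    (T : ℝ) * ThetaSum s (n + 1) X 𝒬 ≤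
      (Q * T + 2 * (s * (T : ℝ) ^ n / κ)) * Jcount s (n + 1) (3 * T) +
        2 * D * Jcount s n (3 * T) := by
  have hT' : (0 : ℝ) < T := by exact_mod_cast hT
  have hpos : ∀ q ∈ 𝒬, 0 < q := fun q hq => by
    exact_mod_cast (mul_pos hκ hQ).trans (h𝒬 q hq).1
  obtain ⟨H, hH, hlt⟩ :=
    exists_nat_mul_le_and_forall_lt_mul (a := s * (T : ℝ) ^ n) (by positivity) hκ hQ
  have hcond : ∀ q ∈ 𝒬, 0 < q ∧ q.Coprime (n + 1) ∧ X / q ≤ T ∧ s * T ^ n < q * (H + 1) := by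
    intro q hq
    obtain ⟨hκq, -, hcop⟩ := h𝒬 q hq
    refine ⟨hpos q hq, hcop, ?_, by exact_mod_cast hlt q hκq.le⟩
    calc X / q ≤ X / (κ * Q) := by gcongr
      _ = X / Q / κ := by rw [div_div, mul_comm]
      _ ≤ T := (div_le_iff₀' hκ).2 hXT
  have hJ : ∀ m, (#(vinogradovSolutions s m (3 * T)) : ℝ) = Jcount s m (3 * T) := fun m => by
    have hfloor : ⌊3 * (T : ℝ)⌋ = 3 * T := by exact_mod_cast Int.floor_intCast (R := ℝ) (3 * T)
    rw [Jcount_eq_card_vinogradovSolutions, hfloor]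
  have hcard : (#𝒬 : ℝ) ≤ Q :=
    card_le_of_forall_pos_le hQ.le fun q hq => ⟨hpos q hq, (h𝒬 q hq).2.1⟩
  have hdiv := sum_le_card_nsmul _ _ _ hD
  rw [nsmul_eq_mul, hJ] at hdiv
  refine le_of_mul_le_mul_left ?_ hT'
  calc (T : ℝ) * (T * ThetaSum s (n + 1) X 𝒬) = (T : ℝ) ^ 2 * ThetaSum s (n + 1) X 𝒬 := by ring
    _ ≤ #𝒬 * (T ^ 2 + 2 * H * T) * #(vinogradovSolutions s (n + 1) (3 * T)) +
          2 * T * ∑ xy ∈ vinogradovSolutions s n (3 * T),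
            (#(powerSumDiff xy.1 xy.2 (n + 1)).natAbs.divisors : ℝ) ^ 2 := by
        exact_mod_cast sq_mul_ThetaSum_le hT hcond
    _ ≤ Q * (T ^ 2 + 2 * H * T) * Jcount s (n + 1) (3 * T) +
          2 * T * (Jcount s n (3 * T) * D) := by
        rw [hJ]
        gcongr
    _ = T * ((Q * T + 2 * (Q * H)) * Jcount s (n + 1) (3 * T) + 2 * D * Jcount s n (3 * T)) := by
        ring
    _ ≤ _ := by gcongr

theorem exists_nat_le_mul_and_le_mul {κ P : ℝ} (hκ : 0 < κ) (hP : 1 ≤ P) :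
    ∃ T : ℕ, 0 < T ∧ P ≤ κ * T ∧ (T : ℝ) ≤ (1 / κ + 1) * P := by
  refine ⟨⌈P / κ⌉₊, Nat.ceil_pos.2 (by positivity), (div_le_iff₀' hκ).1 (Nat.le_ceil _), ?_⟩
  calc (⌈P / κ⌉₊ : ℝ) ≤ P / κ + 1 := (Nat.ceil_lt_add_one (by positivity)).le
    _ ≤ P / κ + P := by gcongr
    _ = (1 / κ + 1) * P := by ring

theorem exists_mul_ThetaSum_le (s n : ℕ) {κ δ : ℝ} (hκ : 0 < κ) (hδ : 0 < δ) :
    ∃ A B M : ℝ, 0 < A ∧ 0 < B ∧ 0 < M ∧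
      ∀ X Q : ℝ, 0 < Q → 1 ≤ X / Q → X ≤ (X / Q) ^ n →
      ∀ 𝒬 : Finset ℕ, (∀ q ∈ 𝒬, κ * Q < q ∧ (q : ℝ) ≤ Q ∧ q.Coprime (n + 1)) →
        X / Q * ThetaSum s (n + 1) X 𝒬 ≤ A * (X / Q) ^ n * Jcount s (n + 1) (M * (X / Q)) +
          B * (X / Q) ^ δ * Jcount s n (M * (X / Q)) := by
  set L : ℝ := 1 / κ + 1
  have : 0 < L := by positivity
  obtain ⟨C, hC, hdiv⟩ :=
    exists_sq_card_divisors_powerSumDiff_le s (n + 1) (B := 3 * L) (by positivity) hδ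
  refine ⟨κ * (L + 2 * (s * L ^ n / κ)), κ * (2 * C), 3 * L, by positivity, by positivity,
    by positivity, fun X Q hQ hP1 hXP 𝒬 h𝒬 => ?_⟩
  have hX : Q * (X / Q) = X := mul_div_cancel₀ X hQ.ne'
  set P : ℝ := X / Q
  have : 0 < P := zero_lt_one.trans_le hP1
  obtain ⟨T, hT, hPT, hTP⟩ := exists_nat_le_mul_and_le_mul hκ hP1
  have hRP : 3 * (T : ℝ) ≤ 3 * L * P := by linarith
  have hdiag : Q * T + 2 * (s * (T : ℝ) ^ n / κ) ≤ (L + 2 * (s * L ^ n / κ)) * P ^ n :=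
    calc Q * T + 2 * (s * (T : ℝ) ^ n / κ) ≤ Q * (L * P) + 2 * (s * (L * P) ^ n / κ) := by gcongr
      _ = L * X + 2 * (s * L ^ n / κ) * P ^ n := by
        rw [← hX, mul_pow]
        ring
      _ ≤ L * P ^ n + 2 * (s * L ^ n / κ) * P ^ n := by gcongr
      _ = (L + 2 * (s * L ^ n / κ)) * P ^ n := (add_mul _ _ _).symm
  have hD : ∀ xy ∈ vinogradovSolutions s n (3 * T),
      (#(powerSumDiff xy.1 xy.2 (n + 1)).natAbs.divisors : ℝ) ^ 2 ≤ C * P ^ δ := fun xy hxy =>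
    have hbox := mem_product.1 (mem_filter.1 hxy).1
    hdiv P hP1 (3 * T) (by exact_mod_cast hRP) _ (by exact_mod_cast hbox.1)
      _ (by exact_mod_cast hbox.2)
  calc P * ThetaSum s (n + 1) X 𝒬 ≤ κ * T * ThetaSum s (n + 1) X 𝒬 := by gcongr
    _ = κ * (T * ThetaSum s (n + 1) X 𝒬) := mul_assoc _ _ _
    _ ≤ κ * ((Q * T + 2 * (s * (T : ℝ) ^ n / κ)) * Jcount s (n + 1) (3 * T) +
          2 * (C * P ^ δ) * Jcount s n (3 * T)) := by
        gcongr
        exact mul_ThetaSum_le hκ (hX ▸ by positivity) hQ hT hPT h𝒬 hD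
    _ ≤ κ * ((L + 2 * (s * L ^ n / κ)) * P ^ n * Jcount s (n + 1) (3 * L * P) +
          2 * (C * P ^ δ) * Jcount s n (3 * L * P)) := by
        gcongr
        · exact Jcount_mono _ _ hRP
        · exact Jcount_mono _ _ hRP
    _ = _ := by ring

theorem le_div_pow_of_le_rpow {n : ℕ} (hn : n ≠ 0) {X Q : ℝ} (hX : 0 < X) (hQ : 0 < Q)
    (h : Q ≤ X ^ (((n : ℝ) - 1) / n)) : X ≤ (X / Q) ^ n := by
  have hroot : X ^ (1 / n : ℝ) ≤ X / Q :=
    calc X ^ (1 / n : ℝ) = X ^ (1 - ((n : ℝ) - 1) / n) := by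
          rw [sub_div, div_self (Nat.cast_ne_zero.2 hn), sub_sub_cancel]
      _ = X / X ^ (((n : ℝ) - 1) / n) := by rw [Real.rpow_sub hX, Real.rpow_one]
      _ ≤ X / Q := by gcongr
  calc X = (X ^ (1 / n : ℝ)) ^ n := by rw [one_div, Real.rpow_inv_natCast_pow hX.le hn]
    _ ≤ (X / Q) ^ n := by gcongr

theorem exists_forall_of_eventually_of_le_pow {p : ℝ → Prop} (hp : ∀ᶠ P in Filter.atTop, p P)
    {n : ℕ} (hn : n ≠ 0) : ∃ X₀ : ℝ, ∀ X P : ℝ, X₀ ≤ X → 0 ≤ P → X ≤ P ^ n → p P := by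
  obtain ⟨P₀, hP₀⟩ := Filter.eventually_atTop.1 hp
  refine ⟨max P₀ 0 ^ n, fun X P hX hP hXP => hP₀ P ?_⟩
  exact (le_max_left _ _).trans (le_of_pow_le_pow_left₀ hn hP (hX.trans hXP))

theorem exists_eventually_Jcount_add_Jcount_le (s n : ℕ) {A B M ε : ℝ} (hA : 0 < A) (hB : 0 < B)
    (hM : 0 < M) (hε : 0 < ε) :
    ∃ C : ℝ, 0 < C ∧ ∀ᶠ P : ℝ in Filter.atTop,
      A * P ^ n * Jcount s (n + 1) (M * P) + B * P ^ (ε / 2) * Jcount s n (M * P) ≤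
        P * (C * P ^ (2 * (s : ℝ) - ((n : ℝ) ^ 2 + n + 2) / 2 + ε) *
          (P ^ (etaExp s (n + 1) - 1) + P ^ etaExp s n)) := by
  obtain ⟨C₁, hC₁, hJ₁⟩ := exists_eventually_Jcount_mul_le_rpow_etaExp s (n + 1) hM hε
  obtain ⟨C₂, hC₂, hJ₂⟩ := exists_eventually_Jcount_mul_le_rpow_etaExp s n hM (half_pos hε)
  refine ⟨A * C₁ + B * C₂, by positivity, ?_⟩
  filter_upwards [hJ₁, hJ₂, Filter.eventually_gt_atTop 0] with P hJ₁ hJ₂ hP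
  set E : ℝ := 2 * (s : ℝ) - ((n : ℝ) ^ 2 + n + 2) / 2 + ε
  have hsplit : ∀ u v : ℝ, P * P ^ u * P ^ v = P ^ (1 + u + v) := fun u v => by
    rw [Real.rpow_add hP, Real.rpow_add hP, Real.rpow_one]
  have hdiag : P ^ n * (Jcount s (n + 1) (M * P) : ℝ) ≤
      C₁ * (P * P ^ E * P ^ (etaExp s (n + 1) - 1)) := by
    refine (mul_le_mul_of_nonneg_left hJ₁ (by positivity)).trans_eq ?_
    rw [hsplit, mul_left_comm, ← Real.rpow_natCast, ← Real.rpow_add hP]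
    congr 2
    simp only [E]
    push_cast
    ring
  have hoff : P ^ (ε / 2) * (Jcount s n (M * P) : ℝ) ≤ C₂ * (P * P ^ E * P ^ etaExp s n) := by
    refine (mul_le_mul_of_nonneg_left hJ₂ (by positivity)).trans_eq ?_
    rw [hsplit, mul_left_comm, ← Real.rpow_add hP]
    congr 2
    simp only [E]
    ring
  calc A * P ^ n * Jcount s (n + 1) (M * P) + B * P ^ (ε / 2) * Jcount s n (M * P)
      = A * (P ^ n * Jcount s (n + 1) (M * P)) + B * (P ^ (ε / 2) * Jcount s n (M * P)) := by ring
    _ ≤ A * (C₁ * (P * P ^ E * P ^ (etaExp s (n + 1) - 1))) +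
          B * (C₂ * (P * P ^ E * P ^ etaExp s n)) := by gcongr
    _ = A * C₁ * (P * P ^ E * P ^ (etaExp s (n + 1) - 1)) +
          B * C₂ * (P * P ^ E * P ^ etaExp s n) := by ring
    _ ≤ (A * C₁ + B * C₂) * (P * P ^ E * P ^ (etaExp s (n + 1) - 1)) +
          (A * C₁ + B * C₂) * (P * P ^ E * P ^ etaExp s n) := by
      gcongr
      · exact le_add_of_nonneg_right (by positivity)
      · exact le_add_of_nonneg_left (by positivity)
    _ = _ := by ring

end Estimates

theorem lemma8_2_general (k s : ℕ) (hk : 2 ≤ k) {κ ε : ℝ} (hκ : 0 < κ) (hε : 0 < ε) :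
    ∃ C : ℝ, 0 < C ∧ ∃ X₀ : ℝ, ∀ X : ℝ, X₀ ≤ X →
    ∀ Q : ℝ, 0 < Q → Q ≤ X ^ (((k : ℝ) - 2) / ((k : ℝ) - 1)) →
    ∀ 𝒬 : Finset ℕ,
      (∀ q ∈ 𝒬, κ * Q < (q : ℝ) ∧ (q : ℝ) ≤ Q ∧ Nat.Coprime q k) →
      (ThetaSum s k X 𝒬 : ℝ) ≤
        C * (X / Q) ^ (2 * (s : ℝ) - ((k : ℝ) ^ 2 - (k : ℝ) + 2) / 2 + ε) *
          ((X / Q) ^ (etaExp s k - 1) + (X / Q) ^ (etaExp s (k - 1))) := by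
  obtain ⟨n, rfl, hn⟩ : ∃ n, k = n + 1 ∧ n ≠ 0 := ⟨k - 1, by lia, by lia⟩
  obtain ⟨A, B, M, hA, hB, hM, hΘ⟩ := exists_mul_ThetaSum_le s n hκ (half_pos hε)
  obtain ⟨C, hC, hJ⟩ := exists_eventually_Jcount_add_Jcount_le s n hA hB hM hε
  obtain ⟨X₀, hX₀⟩ :=
    exists_forall_of_eventually_of_le_pow (hJ.and (Filter.eventually_ge_atTop 1)) hn
  refine ⟨C, hC, max X₀ 1, fun X hX Q hQ hQX 𝒬 h𝒬 => ?_⟩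
  have hX1 : 0 < X := zero_lt_one.trans_le ((le_max_right _ _).trans hX)
  have hexp : (((n + 1 : ℕ) : ℝ) - 2) / (((n + 1 : ℕ) : ℝ) - 1) = ((n : ℝ) - 1) / n := by
    push_cast
    ring_nf
  have hXP : X ≤ (X / Q) ^ n := le_div_pow_of_le_rpow hn hX1 hQ (hexp ▸ hQX)
  obtain ⟨hJ, hP⟩ := hX₀ X (X / Q) ((le_max_left _ _).trans hX) (by positivity) hXP
  have hE : ((n + 1 : ℕ) : ℝ) ^ 2 - ((n + 1 : ℕ) : ℝ) + 2 = (n : ℝ) ^ 2 + n + 2 := by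
    push_cast
    ring
  rw [Nat.add_sub_cancel, hE]
  exact le_of_mul_le_mul_left ((hΘ X Q hQ hP hXP 𝒬 h𝒬).trans hJ) (by positivity)

/-- Lemma 8.2: for 1 < Q ≤ X^{(k-2)/(k-1)} and a set 𝒬 ⊆ (2^{-k}Q, Q] of naturals
coprime to k with card(𝒬) ≫ Q (log Q)^{-k}, one has
Θ_{s,k}(𝒬) ≤ C (X/Q)^{2s-(k²-k+2)/2+ε} ((X/Q)^{η(s,k)-1} + (X/Q)^{η(s,k-1)}). -/
theorem lemma8_2 (k s : ℕ) (hk : 3 ≤ k) (c₀ ε : ℝ) (hc₀ : 0 < c₀) (hε : 0 < ε) :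
    ∃ C : ℝ, 0 < C ∧ ∃ X₀ : ℝ, ∀ X : ℝ, X₀ ≤ X →
    ∀ Q : ℝ, 1 < Q → Q ≤ X ^ (((k:ℝ) - 2)/((k:ℝ) - 1)) →
    ∀ 𝒬 : Finset ℕ,
      (∀ q ∈ 𝒬, (2:ℝ) ^ (-(k:ℝ)) * Q < (q:ℝ) ∧ (q:ℝ) ≤ Q ∧ Nat.Coprime q k) →
      c₀ * Q * (Real.log Q) ^ (-(k:ℝ)) ≤ (𝒬.card : ℝ) →
      (ThetaSum s k X 𝒬 : ℝ) ≤
        C * (X/Q) ^ (2*(s:ℝ) - ((k:ℝ)^2 - (k:ℝ) + 2)/2 + ε) *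
          ((X/Q) ^ (etaExp s k - 1) + (X/Q) ^ (etaExp s (k-1))) := by
  obtain ⟨C, hC, X₀, h⟩ :=
    lemma8_2_general k s (le_of_lt hk) (κ := 2 ^ (-(k : ℝ))) (by positivity) hε
  exact ⟨C, hC, X₀, fun X hX Q hQ hQX 𝒬 h𝒬 _ => h X hX Q (one_pos.trans hQ) hQX 𝒬 h𝒬⟩
end
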